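/- Let b,η > 0, x⁰ ∈ ℝ^d, and let u be κ-harmonic on the G-invariant open set ∪_{σ∈G} Γ_b^η(σ(x⁰)). If |u| ≤ 1 on ∪_{σ∈G} Γ_b^η(σ(x⁰)), then for any fixed a ∈ (0,b) and h ∈ (0,η) there exists a constant c > 0, depending only on a, b, h, η, d, R and κ (in particular independent of u and of x⁰), such that y |∇u(x,y)| ≤ c for all (x,y) ∈ Γ_a^h(x⁰), where ∇ is the full (d+1)-dimensional gradient. -/

import Mathlib

/-!
The estimate is first proved at unit scale; since `Δ_κ` commutes with dilations, and since a ball of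
radius proportional to `y` around `(x, y) ∈ Γ_a^h(x⁰)` lies in `Γ_b^η(x⁰)`, scaling gives the factor
`y`. Points on mirrors follow from regular points by density and continuity of `∇u`.

At unit scale there are two steps, with `T_ξ u = ∂_ξ u + ∑_α k(α)⟨α,ξ⟩ (u - u ∘ σ_α)/⟨α,·⟩` the Dunkl
operators (the sum over all roots, `k = κ/2`).

*Bernstein's method* bounds `T_ξ u` (`KH.bernstein`). The operators `T_ξ` commute with `Δ_κ`
(`RS.commutator`), so for `χ = 1 - |q - Q|²` and large `A` the function `(χ T_ξ u)² + A u²` satisfies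
a maximum principle. Because `Δ_κ` is nonlocal, the function is maximised over all reflected balls at
once, which makes the difference terms harmless and, since the maximising ball is then the one whose
centre is closest to the maximum point, gives the singular drift terms of `χ` a sign. Two technical points: `T_ξ u` is only once
differentiable when `u` is `C²`, so the second derivative test is applied to `C²` approximations that
replace `∂_ξ u` by difference quotients (`weak_max`, `KH.approx`); and adding a small multiple of the
convex function `∑_β |⟨β,·⟩|` keeps the maximum away from the mirrors.

*Difference quotients* `(u - u ∘ σ_α)/⟨α,·⟩` are then bounded (`quotBound_zero`), so that `∂_ξ u` is
bounded as well. Near a point `x₀` lying on the mirrors of the roots in `Z`, the bound for `T_w u` on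
the ray `x₀ + t w` says that `d/dt u(x₀ + t w)` is bounded up to
`-∑_{β ∈ Z} k(β)/t (u(x₀ + t w) - u(x₀ + t σ_β w))` and quotients of roots outside `Z`. The displayed
sum has a favourable sign for the largest of the values on the finitely many reflected rays
(`ray_max`), so `u(x₀ + w) - u(x₀) = O(|w|)`. The quotients of roots outside `Z` are known by downward
induction on the number of small roots, and `exists_gap` provides for each root and each point a
suitable `x₀`.
-/


open MeasureTheory Filter Metric
open scoped RealInnerProductSpace Topology

noncomputable section

/-- Euclidean space `ℝ^d`. -/
abbrev Ed (d : ℕ) : Type := EuclideanSpace ℝ (Fin d)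

/-- The reflection `σ_α(x) = x - ⟨α,x⟩α` (for roots normalized by `⟨α,α⟩ = 2`). -/
def reflAt {d : ℕ} (α x : Ed d) : Ed d := x - ⟪α, x⟫ • α

/-- The reflection group `G` generated by the reflections `σ_α`, `α ∈ R`, realized as the
submonoid of self-maps of `ℝ^d` generated by the reflections (each reflection is an
involution, so this is in fact a group of transformations). -/
def dunklGroup {d : ℕ} (R : Finset (Ed d)) : Submonoid (Function.End (Ed d)) :=
  Submonoid.closure {f : Function.End (Ed d) | ∃ α ∈ R, f = reflAt α}

/-- A (normalized) root system `R` with positive subsystem `Rp` and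
`G`-invariant nonnegative multiplicity function `κ`. -/
structure IsRootSystem {d : ℕ} (R Rp : Finset (Ed d)) (κ : Ed d → ℝ) : Prop where
  nonzero : ∀ α ∈ R, α ≠ (0 : Ed d)
  norm_two : ∀ α ∈ R, ⟪α, α⟫ = (2 : ℝ)
  refl_mem : ∀ α ∈ R, ∀ β ∈ R, reflAt α β ∈ R
  pos_sub : Rp ⊆ R
  pos_split : ∀ α ∈ R, (α ∈ Rp ∧ ¬(-α ∈ Rp)) ∨ (¬(α ∈ Rp) ∧ -α ∈ Rp)
  kappa_nonneg : ∀ α ∈ R, 0 ≤ κ α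
  kappa_inv : ∀ σ ∈ dunklGroup R, ∀ α ∈ R, κ (σ α) = κ α

/-- `x ∈ ℝ^d` is regular if `⟨α,x⟩ ≠ 0` for all roots `α ∈ R`. -/
def isRegular {d : ℕ} (R : Finset (Ed d)) (x : Ed d) : Prop :=
  ∀ α ∈ R, ⟪α, x⟫ ≠ (0 : ℝ)

/-- Second directional derivative of `u` at `p` in direction `v`. -/
def pd2 {d : ℕ} (u : Ed d × ℝ → ℝ) (p v : Ed d × ℝ) : ℝ :=
  fderiv ℝ (fun q => fderiv ℝ u q v) p v

/-- The Euclidean Laplacian on `ℝ^{d+1} = ℝ^d × ℝ`. -/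
def lapE {d : ℕ} (u : Ed d × ℝ → ℝ) (p : Ed d × ℝ) : ℝ :=
  (∑ i : Fin d, pd2 u p (EuclideanSpace.single i 1, 0)) + pd2 u p (0, 1)

/-- The Dunkl Laplacian `Δ_κ` on `ℝ^{d+1}` (the Dunkl operators act in the `x`-variables). -/
def dunklLap {d : ℕ} (Rp : Finset (Ed d)) (κ : Ed d → ℝ) (u : Ed d × ℝ → ℝ)
    (p : Ed d × ℝ) : ℝ :=
  lapE u p + 2 * ∑ α ∈ Rp, κ α *
    (fderiv ℝ u p (α, 0) / ⟪α, p.1⟫ - (u p - u (reflAt α p.1, p.2)) / ⟪α, p.1⟫ ^ 2)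

/-- The open upper half-space `ℝ^{d+1}₊`. -/
def upperHS (d : ℕ) : Set (Ed d × ℝ) := {p | 0 < p.2}

/-- `u` is `κ`-harmonic on `Ω`: `u` is `C²` on `Ω` and `Δ_κ u = 0` at every point of `Ω`
whose `x`-coordinate is regular. -/
def KHarmonicOn {d : ℕ} (R Rp : Finset (Ed d)) (κ : Ed d → ℝ) (u : Ed d × ℝ → ℝ)
    (Ω : Set (Ed d × ℝ)) : Prop :=
  ContDiffOn ℝ 2 u Ω ∧ ∀ p ∈ Ω, isRegular R p.1 → dunklLap Rp κ u p = 0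

/-- The cone `Γ_a(x)` of aperture `a` with vertex `(x,0)`. -/
def cone {d : ℕ} (a : ℝ) (x : Ed d) : Set (Ed d × ℝ) :=
  {p | 0 < p.2 ∧ dist p.1 x < a * p.2}

/-- The truncated cone `Γ_a^h(x)`. -/
def coneT {d : ℕ} (a h : ℝ) (x : Ed d) : Set (Ed d × ℝ) :=
  {p | 0 < p.2 ∧ p.2 < h ∧ dist p.1 x < a * p.2}

/-- `u` has a finite non-tangential limit at `(x,0)`. -/
def HasNTLimit {d : ℕ} (u : Ed d × ℝ → ℝ) (x : Ed d) : Prop :=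
  ∀ a > (0 : ℝ), ∃ L : ℝ, Tendsto u (𝓝[cone a x] (x, (0 : ℝ))) (𝓝 L)

/-- `u` is non-tangentially bounded at `(x,0)`. -/
def NTBounded {d : ℕ} (u : Ed d × ℝ → ℝ) (x : Ed d) : Prop :=
  ∃ a > (0 : ℝ), ∃ h > (0 : ℝ), ∃ M : ℝ, ∀ p ∈ coneT a h x, |u p| ≤ M

/-- A subset of `ℝ^d` is `G`-invariant. -/
def GInvSet {d : ℕ} (R : Finset (Ed d)) (E : Set (Ed d)) : Prop :=
  ∀ σ ∈ dunklGroup R, σ '' E = E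

/-! ### The Euclidean Laplacian on `ℝ^d × ℝ` and reflections -/

/-- The linear functional `(x, y) ↦ ⟨α, x⟩` on `ℝ^d × ℝ`. -/
def sF {d : ℕ} (α : Ed d) : (Ed d × ℝ) →L[ℝ] ℝ :=
  (innerSL ℝ α).comp (ContinuousLinearMap.fst ℝ (Ed d) ℝ)

/-- The reflection `σ_α` acting on `ℝ^d × ℝ` through the first factor. -/
def rE {d : ℕ} (α : Ed d) : (Ed d × ℝ) →L[ℝ] (Ed d × ℝ) :=
  ContinuousLinearMap.id ℝ _ - (sF α).smulRight ((α, 0) : Ed d × ℝ)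

/-- The standard basis of `ℝ^d × ℝ`; `none` is the `y`-direction. -/
def bv {d : ℕ} : Option (Fin d) → Ed d × ℝ
  | none => (0, 1)
  | some i => (EuclideanSpace.single i 1, 0)

section basics
variable {d : ℕ}

lemma sF_apply (α : Ed d) (p : Ed d × ℝ) : sF α p = ⟪α, p.1⟫ := rfl

lemma rE_apply (α : Ed d) (p : Ed d × ℝ) : rE α p = p - sF α p • ((α, 0) : Ed d × ℝ) := rfl

lemma rE_eq (α : Ed d) (p : Ed d × ℝ) : rE α p = (reflAt α p.1, p.2) := by
  ext <;> simp [rE_apply, reflAt, sF_apply]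

lemma sF_rE (α β : Ed d) (p : Ed d × ℝ) : sF β (rE α p) = sF β p - ⟪α, β⟫ * sF α p := by
  rw [rE_apply, map_sub, map_smul, sF_apply β (α, 0)]
  simp [real_inner_comm, mul_comm]

lemma rE_rE (α : Ed d) (hα : ⟪α, α⟫ = (2 : ℝ)) (p : Ed d × ℝ) : rE α (rE α p) = p := by
  rw [rE_apply α (rE α p), sF_rE, hα, rE_apply]
  module

lemma lapE_eq_sum (u : Ed d × ℝ → ℝ) (p : Ed d × ℝ) :
    lapE u p = ∑ j, pd2 u p (bv j) := by
  rw [Fintype.sum_option, lapE, add_comm]; rfl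

lemma pd2_eq {u : Ed d × ℝ → ℝ} {p : Ed d × ℝ} (hu : ContDiffAt ℝ 2 u p) (w : Ed d × ℝ) :
    pd2 u p w = fderiv ℝ (fderiv ℝ u) p w w := by
  have h1 : DifferentiableAt ℝ (fderiv ℝ u) p :=
    (hu.fderiv_right (m := 1) (by norm_num)).differentiableAt (by norm_num)
  unfold pd2
  rw [fderiv_clm_apply h1 (differentiableAt_const w)]
  simp

lemma ContDiffAt.diff_fderiv_apply {u : Ed d × ℝ → ℝ} {p : Ed d × ℝ} (hu : ContDiffAt ℝ 2 u p)
    (w : Ed d × ℝ) : DifferentiableAt ℝ (fun q => fderiv ℝ u q w) p :=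
  ((hu.fderiv_right (m := 1) (by norm_num)).differentiableAt (by norm_num)).clm_apply
    (differentiableAt_const w)

lemma ContDiffAt.ev_diff {u : Ed d × ℝ → ℝ} {p : Ed d × ℝ} (hu : ContDiffAt ℝ 2 u p) :
    ∀ᶠ q in 𝓝 p, DifferentiableAt ℝ u q := by
  have h2 : ∀ᶠ q in 𝓝 p, ContDiffAt ℝ 2 u q := hu.eventually (by simp)
  filter_upwards [h2] with q hq using hq.differentiableAt (by norm_num)

lemma pd2_congr {f g : Ed d × ℝ → ℝ} {p : Ed d × ℝ} (h : f =ᶠ[𝓝 p] g) (w : Ed d × ℝ) :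
    pd2 f p w = pd2 g p w := by
  unfold pd2
  have : (fun q => fderiv ℝ f q w) =ᶠ[𝓝 p] fun q => fderiv ℝ g q w := by
    filter_upwards [h.fderiv (𝕜 := ℝ)] with q hq
    rw [hq]
  rw [this.fderiv_eq]

lemma pd2_add {f g : Ed d × ℝ → ℝ} {p : Ed d × ℝ} (hf : ContDiffAt ℝ 2 f p)
    (hg : ContDiffAt ℝ 2 g p) (w : Ed d × ℝ) :
    pd2 (fun q => f q + g q) p w = pd2 f p w + pd2 g p w := by
  unfold pd2
  have : (fun q => fderiv ℝ (fun q => f q + g q) q w) =ᶠ[𝓝 p]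
      fun q => fderiv ℝ f q w + fderiv ℝ g q w := by
    filter_upwards [hf.ev_diff, hg.ev_diff] with q h1 h2
    rw [fderiv_fun_add h1 h2]; rfl
  rw [this.fderiv_eq, fderiv_fun_add (hf.diff_fderiv_apply w) (hg.diff_fderiv_apply w)]; rfl

lemma pd2_mul {f g : Ed d × ℝ → ℝ} {p : Ed d × ℝ} (hf : ContDiffAt ℝ 2 f p)
    (hg : ContDiffAt ℝ 2 g p) (w : Ed d × ℝ) :
    pd2 (fun q => f q * g q) p w =
      f p * pd2 g p w + 2 * (fderiv ℝ f p w * fderiv ℝ g p w) + g p * pd2 f p w := by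
  unfold pd2
  have : (fun q => fderiv ℝ (fun q => f q * g q) q w) =ᶠ[𝓝 p]
      fun q => f q * fderiv ℝ g q w + g q * fderiv ℝ f q w := by
    filter_upwards [hf.ev_diff, hg.ev_diff] with q h1 h2
    rw [fderiv_fun_mul h1 h2]; simp
  have hf' := hf.differentiableAt (by norm_num)
  have hg' := hg.differentiableAt (by norm_num)
  rw [this.fderiv_eq, fderiv_fun_add (hf'.fun_mul (hg.diff_fderiv_apply w))
    (hg'.fun_mul (hf.diff_fderiv_apply w)), fderiv_fun_mul hf' (hg.diff_fderiv_apply w),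
    fderiv_fun_mul hg' (hf.diff_fderiv_apply w)]
  simp only [add_apply, smul_apply, smul_eq_mul]
  ring

lemma lapE_congr {f g : Ed d × ℝ → ℝ} {p : Ed d × ℝ} (h : f =ᶠ[𝓝 p] g) :
    lapE f p = lapE g p := by
  simp only [lapE_eq_sum, pd2_congr h]

lemma lapE_add {f g : Ed d × ℝ → ℝ} {p : Ed d × ℝ} (hf : ContDiffAt ℝ 2 f p)
    (hg : ContDiffAt ℝ 2 g p) : lapE (fun q => f q + g q) p = lapE f p + lapE g p := by
  simp only [lapE_eq_sum, pd2_add hf hg, Finset.sum_add_distrib]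

lemma lapE_mul {f g : Ed d × ℝ → ℝ} {p : Ed d × ℝ} (hf : ContDiffAt ℝ 2 f p)
    (hg : ContDiffAt ℝ 2 g p) : lapE (fun q => f q * g q) p =
      f p * lapE g p + 2 * (∑ j, fderiv ℝ f p (bv j) * fderiv ℝ g p (bv j)) + g p * lapE f p := by
  simp only [lapE_eq_sum, pd2_mul hf hg, Finset.sum_add_distrib, Finset.mul_sum]

lemma lapE_const (c : ℝ) (p : Ed d × ℝ) : lapE (fun _ => c) p = 0 := by
  simp [lapE_eq_sum, pd2]

lemma lapE_const_mul {f : Ed d × ℝ → ℝ} {p : Ed d × ℝ} (c : ℝ) (hf : ContDiffAt ℝ 2 f p) :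
    lapE (fun q => c * f q) p = c * lapE f p := by
  rw [lapE_mul contDiffAt_const hf]; simp [lapE_const]

lemma lapE_sum {ι : Type*} (s : Finset ι) {f : ι → Ed d × ℝ → ℝ} {p : Ed d × ℝ}
    (hf : ∀ i ∈ s, ContDiffAt ℝ 2 (f i) p) :
    lapE (fun q => ∑ i ∈ s, f i q) p = ∑ i ∈ s, lapE (f i) p := by
  classical
  induction s using Finset.induction_on with
  | empty => simp [lapE_const]
  | insert a s ha ih =>
    simp only [Finset.sum_insert ha]
    rw [lapE_add (hf a (by simp)) (ContDiffAt.sum fun i hi => hf i (by simp [hi])),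
      ih fun i hi => hf i (by simp [hi])]

lemma lapE_translate (u : Ed d × ℝ → ℝ) (c p : Ed d × ℝ) :
    lapE (fun q => u (q + c)) p = lapE u (p + c) := by
  simp only [lapE_eq_sum, pd2]
  refine Finset.sum_congr rfl fun j _ => ?_
  have : (fun q => fderiv ℝ (fun q => u (q + c)) q (bv j)) =
      fun q => (fun q => fderiv ℝ u q (bv j)) (q + c) := by
    funext q; rw [fderiv_comp_add_right]
  rw [this, fderiv_comp_add_right (f := fun q => fderiv ℝ u q (bv j)) c]

lemma lapE_clm (A : (Ed d × ℝ) →L[ℝ] ℝ) (p : Ed d × ℝ) : lapE (fun q => A q) p = 0 := by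
  have : ∀ q, fderiv ℝ (fun q => A q) q = A := fun q => A.fderiv
  simp [lapE_eq_sum, pd2, this]

lemma pd2_comp_clm (A : (Ed d × ℝ) →L[ℝ] (Ed d × ℝ)) {u : Ed d × ℝ → ℝ} {p : Ed d × ℝ}
    (hu : ContDiffAt ℝ 2 u (A p)) (w : Ed d × ℝ) :
    pd2 (fun q => u (A q)) p w = pd2 u (A p) (A w) := by
  unfold pd2
  have h1 : (fun q => fderiv ℝ (fun q => u (A q)) q w) =ᶠ[𝓝 p]
      fun q => (fun z => fderiv ℝ u z (A w)) (A q) := by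
    filter_upwards [A.continuous.continuousAt.eventually hu.ev_diff] with q hq
    have := fderiv_comp q hq A.differentiableAt
    rw [Function.comp_def] at this
    rw [this, A.fderiv]; rfl
  rw [h1.fderiv_eq]
  have := fderiv_comp p (hu.diff_fderiv_apply (A w)) A.differentiableAt
  rw [Function.comp_def] at this
  rw [this, A.fderiv]; rfl

/-- Every vector of `ℝ^d` is the sum of its coordinates times the basis vectors. -/
lemma sum_coord (α : Ed d) : ∑ i, α i • (EuclideanSpace.single i (1 : ℝ) : Ed d) = α := by
  ext j
  simp [Finset.sum_apply, Pi.single_apply]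

lemma pair_eq_sum (w : Ed d × ℝ) : w = ∑ j, (match j with
    | none => w.2
    | some i => w.1 i) • bv j := by
  rw [Fintype.sum_option]
  simp only [bv]
  ext1
  · simp only [Prod.fst_add, Prod.smul_fst, Prod.fst_sum, smul_zero, zero_add]
    rw [sum_coord]
  · simp [Prod.snd_sum]

lemma inner_single_one (α : Ed d) (i : Fin d) :
    ⟪α, (EuclideanSpace.single i (1 : ℝ) : Ed d)⟫ = α i := by
  rw [EuclideanSpace.inner_single_right]; simp

lemma sum_bv_some (α : Ed d) : ∑ i, α i • bv (some i) = ((α, 0) : Ed d × ℝ) := by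
  conv_rhs => rw [← sum_coord α]
  ext1
  · simp [Prod.fst_sum, bv]
  · simp [Prod.snd_sum, bv]

lemma sum_sq_coord (α : Ed d) : ∑ i, α i * α i = ⟪α, α⟫ := by
  rw [PiLp.inner_apply]; rfl

lemma lapE_comp_rE (α : Ed d) (hα : ⟪α, α⟫ = (2 : ℝ)) {u : Ed d × ℝ → ℝ} {p : Ed d × ℝ}
    (hu : ContDiffAt ℝ 2 u (rE α p)) : lapE (fun q => u (rE α q)) p = lapE u (rE α p) := by
  simp only [lapE_eq_sum, pd2_comp_clm _ hu, pd2_eq hu]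
  set B := fderiv ℝ (fderiv ℝ u) (rE α p)
  rw [Fintype.sum_option, Fintype.sum_option]
  have h0 : rE α (bv none) = bv none := by simp [rE_apply, sF_apply, bv]
  have h1 : ∀ i, rE α (bv (some i)) = bv (some i) - α i • ((α, 0) : Ed d × ℝ) := by
    intro i; rw [rE_apply, sF_apply]; simp only [bv, inner_single_one]
  have hn : ∑ i, α i * α i = 2 := by rw [sum_sq_coord, hα]
  have hs := sum_bv_some α
  generalize ((α, 0) : Ed d × ℝ) = a at hs h1
  have e1 : ∑ i, B (bv (some i)) (α i • a) = B a a := by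
    have : B a a = B (∑ i, α i • bv (some i)) a := by rw [hs]
    rw [this, map_sum, sum_apply]
    refine Finset.sum_congr rfl fun i _ => ?_
    rw [map_smul, map_smul]; rfl
  have e2 : ∑ i, B (α i • a) (bv (some i)) = B a a := by
    have : B a a = B a (∑ i, α i • bv (some i)) := by rw [hs]
    rw [this, map_sum]
    refine Finset.sum_congr rfl fun i _ => ?_
    rw [map_smul, map_smul]; rfl
  have e3 : ∑ i, B (α i • a) (α i • a) = 2 * B a a := by
    rw [← hn, Finset.sum_mul]
    refine Finset.sum_congr rfl fun i _ => ?_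
    rw [map_smul, map_smul, smul_apply, smul_eq_mul, smul_eq_mul]; ring
  rw [h0]
  simp only [h1, map_sub, sub_apply, Finset.sum_sub_distrib, e1, e2, e3]
  ring

lemma fderiv_comp_rE (α : Ed d) {u : Ed d × ℝ → ℝ} {p : Ed d × ℝ}
    (hu : DifferentiableAt ℝ u (rE α p)) (w : Ed d × ℝ) :
    fderiv ℝ (fun q => u (rE α q)) p w = fderiv ℝ u (rE α p) (rE α w) := by
  have := fderiv_comp p hu (rE α).differentiableAt
  rw [Function.comp_def] at this
  rw [this, (rE α).fderiv]; rfl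

lemma sum_sF_bv (α : Ed d) (L : (Ed d × ℝ) →L[ℝ] ℝ) :
    ∑ j, sF α (bv j) * L (bv j) = L (α, 0) := by
  rw [Fintype.sum_option, ← sum_bv_some, map_sum]
  have h0 : sF α (bv none) = 0 := by simp [sF_apply, bv]
  have h1 : ∀ i, sF α (bv (some i)) = α i := fun i => inner_single_one α i
  simp only [h0, h1, map_smul, smul_eq_mul, zero_mul, zero_add]

lemma sF_inv_contDiffAt (α : Ed d) {p : Ed d × ℝ} (h : sF α p ≠ 0) {n : WithTop ℕ∞} :
    ContDiffAt ℝ n (fun q => (sF α q)⁻¹) p :=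
  (sF α).contDiff.contDiffAt.inv h

lemma fderiv_sF_inv (α : Ed d) {p : Ed d × ℝ} (h : sF α p ≠ 0) (w : Ed d × ℝ) :
    fderiv ℝ (fun q => (sF α q)⁻¹) p w = - sF α w / sF α p ^ 2 := by
  have := (hasDerivAt_inv h).comp_hasFDerivAt p ((sF α).hasFDerivAt (x := p))
  rw [show (fun q => (sF α q)⁻¹) = Inv.inv ∘ (sF α) from rfl, HasFDerivAt.fderiv this]
  simp; field_simp

lemma lapE_sF_inv (α : Ed d) (hα : ⟪α, α⟫ = (2 : ℝ)) {p : Ed d × ℝ} (h : sF α p ≠ 0) :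
    lapE (fun q => (sF α q)⁻¹) p = 4 / sF α p ^ 3 := by
  -- apply the product rule to `1 = s * s⁻¹`
  have h1 := lapE_mul ((sF α).contDiff.contDiffAt (x := p) (n := 2)) (sF_inv_contDiffAt α h)
  have h2 : (fun q => sF α q * (sF α q)⁻¹) =ᶠ[𝓝 p] fun _ => (1 : ℝ) := by
    filter_upwards [(sF α).continuous.continuousAt.eventually_ne h] with q hq
    exact mul_inv_cancel₀ hq
  rw [lapE_congr h2, lapE_const, lapE_clm] at h1
  simp only [fderiv_sF_inv α h] at h1
  have hf : fderiv ℝ (fun q => sF α q) p = sF α := (sF α).fderiv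
  have h3 : ∑ j, fderiv ℝ (⇑(sF α)) p (bv j) * (-sF α (bv j) / sF α p ^ 2) =
      - 2 / sF α p ^ 2 := by
    have := sum_sF_bv α (sF α)
    rw [show sF α (α, 0) = 2 from hα] at this
    rw [(sF α).fderiv, ← this, neg_div, Finset.sum_div, ← Finset.sum_neg_distrib]
    refine Finset.sum_congr rfl fun j _ => by ring
  rw [h3] at h1
  field_simp at h1 ⊢
  linarith

end basics

/-! ### A second derivative test for limits of `C²` functions -/

/-- The squared Euclidean distance on `ℝ^d × ℝ` (whose own norm is the maximum of the two
component norms). -/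
def nE {d : ℕ} (P q : Ed d × ℝ) : ℝ := ‖q.1 - P.1‖ ^ 2 + (q.2 - P.2) ^ 2

section maxprinciple
variable {d : ℕ}

lemma nE_contDiff (P : Ed d × ℝ) {n : WithTop ℕ∞} : ContDiff ℝ n (nE P) := by
  unfold nE
  exact ((contDiff_fst.sub contDiff_const).norm_sq ℝ).add ((contDiff_snd.sub contDiff_const).pow 2)

lemma fderiv_nE (P q w : Ed d × ℝ) :
    fderiv ℝ (nE P) q w = 2 * ⟪q.1 - P.1, w.1⟫ + 2 * (q.2 - P.2) * w.2 := by
  have h1 : HasFDerivAt (fun q : Ed d × ℝ => q.1 - P.1) (ContinuousLinearMap.fst ℝ (Ed d) ℝ) q :=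
    hasFDerivAt_fst.sub_const _
  have h2 : HasFDerivAt (fun q : Ed d × ℝ => q.2 - P.2) (ContinuousLinearMap.snd ℝ (Ed d) ℝ) q :=
    hasFDerivAt_snd.sub_const _
  have h3 := h1.norm_sq.add (h2.pow 2)
  have h4 : fderiv ℝ (nE P) q = _ := h3.fderiv
  rw [h4]
  simp [inner_sub_left]

lemma lapE_nE (P q : Ed d × ℝ) : lapE (nE P) q = 2 * (d + 1) := by
  have h : ∀ w : Ed d × ℝ, pd2 (nE P) q w = 2 * (‖w.1‖ ^ 2 + w.2 ^ 2) := by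
    intro w
    unfold pd2
    simp only [fderiv_nE]
    have h1 : HasFDerivAt (fun q : Ed d × ℝ => ⟪q.1 - P.1, w.1⟫) (sF w.1) q := by
      have : (fun q : Ed d × ℝ => ⟪q.1 - P.1, w.1⟫) = fun q => sF w.1 q - ⟪w.1, P.1⟫ := by
        funext q; rw [real_inner_comm, inner_sub_right]; rfl
      rw [this]; exact (sF w.1).hasFDerivAt.sub_const _
    have h2 : HasFDerivAt (fun q : Ed d × ℝ => q.2 - P.2) (ContinuousLinearMap.snd ℝ (Ed d) ℝ) q :=
      hasFDerivAt_snd.sub_const _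
    have h3 := (h1.const_mul 2).fun_add ((h2.const_mul 2).mul_const w.2)
    rw [HasFDerivAt.fderiv h3]
    simp [sF_apply]; ring
  simp only [lapE_eq_sum, h, Fintype.sum_option, bv]
  simp; ring

lemma pd2_nonpos_of_isLocalMax {f : Ed d × ℝ → ℝ} {p : Ed d × ℝ} (hf : ContDiffAt ℝ 2 f p)
    (hmax : IsLocalMax f p) (w : Ed d × ℝ) : pd2 f p w ≤ 0 := by
  by_contra! hpos
  set g : ℝ → ℝ := fun t => f (p + t • w) with hg
  have hline : ∀ t : ℝ, HasDerivAt (fun t : ℝ => p + t • w) w t := fun t => by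
    simpa using ((hasDerivAt_id t).smul_const w).const_add p
  have hcont : ContinuousAt (fun t : ℝ => p + t • w) 0 := (hline 0).continuousAt
  have h0 : p + (0 : ℝ) • w = p := by simp
  have hd : deriv g =ᶠ[𝓝 (0 : ℝ)] fun t => fderiv ℝ f (p + t • w) w := by
    have := hcont.tendsto
    rw [h0] at this
    filter_upwards [this.eventually hf.ev_diff] with t ht
    exact (ht.hasFDerivAt.comp_hasDerivAt t (hline t)).deriv
  have hdd : deriv (deriv g) 0 = pd2 f p w := by
    rw [hd.deriv_eq]
    have h1 : HasFDerivAt (fun q => fderiv ℝ f q w) (fderiv ℝ (fun q => fderiv ℝ f q w) p)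
      (p + (0 : ℝ) • w) := by rw [h0]; exact (hf.diff_fderiv_apply w).hasFDerivAt
    exact (h1.comp_hasDerivAt 0 (hline 0)).deriv
  have hmaxg : IsLocalMax g 0 := by
    have := hcont.tendsto
    rw [h0] at this
    have := this.eventually hmax
    filter_upwards [this] with t ht
    simpa [hg] using ht
  have hming : IsLocalMin g 0 := by
    refine isLocalMin_of_deriv_deriv_pos (by rw [hdd]; exact hpos) hmaxg.deriv_eq_zero ?_
    have : ContinuousAt f (p + (0 : ℝ) • w) := by rw [h0]; exact hf.continuousAt
    exact ContinuousAt.comp (f := fun t : ℝ => p + t • w) this hcont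
  have hconst : g =ᶠ[𝓝 0] fun _ => g 0 := by
    filter_upwards [hmaxg, hming] with t h1 h2 using le_antisymm h1 h2
  have h5 : deriv g =ᶠ[𝓝 0] deriv fun _ : ℝ => g 0 := hconst.deriv
  rw [h5.deriv_eq] at hdd
  simp at hdd
  linarith

lemma lapE_nonpos_of_isLocalMax {f : Ed d × ℝ → ℝ} {p : Ed d × ℝ} (hf : ContDiffAt ℝ 2 f p)
    (hmax : IsLocalMax f p) : lapE f p ≤ 0 := by
  rw [lapE_eq_sum]
  exact Finset.sum_nonpos fun j _ => pd2_nonpos_of_isLocalMax hf hmax _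

/-- A second-derivative test for a function `F` that need not be `C²` itself, but is the locally
uniform limit of `C²` functions `Fτ τ` whose Laplacians converge to `h`: at a local maximum of `F`
one has `h ≤ 0`. -/
lemma weak_max {F : Ed d × ℝ → ℝ} {Fτ : ℝ → Ed d × ℝ → ℝ} {p : Ed d × ℝ} {h : ℝ}
    (h1 : ∀ᶠ q in 𝓝 p, F q ≤ F p)
    (h2 : ∀ᶠ z : ℝ × (Ed d × ℝ) in 𝓝[>] 0 ×ˢ 𝓝 p, ContDiffAt ℝ 2 (Fτ z.1) z.2)
    (h3 : ∀ᶠ q in 𝓝 p, Tendsto (fun z : ℝ × (Ed d × ℝ) => Fτ z.1 z.2) (𝓝[>] 0 ×ˢ 𝓝 q) (𝓝 (F q)))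
    (h4 : Tendsto (fun z : ℝ × (Ed d × ℝ) => lapE (Fτ z.1) z.2) (𝓝[>] 0 ×ˢ 𝓝 p) (𝓝 h)) :
    h ≤ 0 := by
  by_contra! hpos
  have hd0 : (0 : ℝ) < d + 1 := by positivity
  set δ : ℝ := h / (8 * (d + 1)) with hδ
  have hδpos : 0 < δ := by positivity
  have hδ2 : δ * (2 * (d + 1)) = h / 4 := by rw [hδ]; field_simp; norm_num
  have h5 := h2.and (h4.eventually (lt_mem_nhds (half_lt_self hpos)))
  obtain ⟨⟨τ₀, r₁⟩, ⟨hτ₀, hr₁⟩, h6⟩ :=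
    ((nhdsGT_basis (0 : ℝ)).prod (Metric.nhds_basis_closedBall (x := p))).eventually_iff.1 h5
  obtain ⟨r₂, hr₂, h7⟩ := (Metric.nhds_basis_closedBall (x := p)).eventually_iff.1 (h1.and h3)
  simp only at hτ₀ hr₁
  set r := min r₁ r₂
  have hr : 0 < r := lt_min hr₁ hr₂
  have hsph : ∀ᶠ τ in 𝓝[>] (0 : ℝ), ∀ q ∈ sphere p r, Fτ τ q < F p + δ * r ^ 2 / 3 := by
    have hc : IsCompact (sphere p r) := isCompact_sphere p r
    have : ∀ᶠ z : ℝ × (Ed d × ℝ) in 𝓝[>] (0 : ℝ) ×ˢ 𝓝ˢ (sphere p r),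
        Fτ z.1 z.2 < F p + δ * r ^ 2 / 3 := by
      rw [hc.prod_nhdsSet_eq_biSup]
      simp only [eventually_iSup]
      intro q hq
      have hq' : q ∈ closedBall p r₂ :=
        closedBall_subset_closedBall (min_le_right _ _) (sphere_subset_closedBall hq)
      refine (h7 hq').2.eventually (gt_mem_nhds ?_)
      have := (h7 hq').1
      have : 0 < δ * r ^ 2 := by positivity
      linarith
    obtain ⟨pa, hpa, pb, hpb, hab⟩ := eventually_prod_iff.1 this
    filter_upwards [hpa] with τ hτ q hq
    exact hab hτ ((eventually_nhdsSet_iff_forall.1 hpb q hq).self_of_nhds)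
  have hctr : ∀ᶠ τ in 𝓝[>] (0 : ℝ), F p - δ * r ^ 2 / 3 < Fτ τ p := by
    have hp' : p ∈ closedBall p r₂ := mem_closedBall_self hr₂.le
    have : ∀ᶠ z : ℝ × (Ed d × ℝ) in 𝓝[>] (0 : ℝ) ×ˢ 𝓝 p, F p - δ * r ^ 2 / 3 < Fτ z.1 z.2 := by
      refine (h7 hp').2.eventually (lt_mem_nhds ?_)
      have : 0 < δ * r ^ 2 := by positivity
      linarith
    obtain ⟨pa, hpa, pb, hpb, hab⟩ := eventually_prod_iff.1 this
    filter_upwards [hpa] with τ hτ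
    exact hab hτ hpb.self_of_nhds
  have hτs : ∀ᶠ τ in 𝓝[>] (0 : ℝ), τ ∈ Set.Ioo 0 τ₀ := Ioo_mem_nhdsGT hτ₀
  obtain ⟨τ, hτ1, hτ2, hτ3⟩ := (hsph.and (hctr.and hτs)).exists
  have hsm : ∀ q ∈ closedBall p r, ContDiffAt ℝ 2 (Fτ τ) q ∧ h / 2 < lapE (Fτ τ) q := by
    intro q hq
    exact h6 (x := (τ, q)) ⟨hτ3, closedBall_subset_closedBall (min_le_left _ _) hq⟩
  set g : Ed d × ℝ → ℝ := fun q => Fτ τ q + (-δ) * nE p q with hg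
  have hgC : ∀ q ∈ closedBall p r, ContDiffAt ℝ 2 g q := fun q hq =>
    (hsm q hq).1.add (contDiffAt_const.mul (nE_contDiff p).contDiffAt)
  obtain ⟨q, hq, hqmax⟩ := (isCompact_closedBall p r).exists_isMaxOn
    ⟨p, mem_closedBall_self hr.le⟩
    (fun q hq => (hgC q hq).continuousAt.continuousWithinAt : ContinuousOn g (closedBall p r))
  have hgp : g p = Fτ τ p := by simp [hg, nE]
  have hqb : q ∈ ball p r := by
    by_contra hnb
    have hqs : q ∈ sphere p r := by
      rw [mem_closedBall] at hq; rw [mem_ball, not_lt] at hnb; exact le_antisymm hq hnb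
    have h8 := hτ1 q hqs
    have h9 : g p ≤ g q := hqmax (mem_closedBall_self hr.le)
    have h10 : r ^ 2 ≤ nE p q := by
      have : max (dist q.1 p.1) (dist q.2 p.2) = r := hqs
      unfold nE
      rw [dist_eq_norm, Real.dist_eq] at this
      rcases max_choice ‖q.1 - p.1‖ |q.2 - p.2| with h' | h' <;> rw [h'] at this
      · rw [← this]; nlinarith [sq_nonneg (q.2 - p.2)]
      · rw [← this, sq_abs]; nlinarith [sq_nonneg ‖q.1 - p.1‖]
    rw [hgp] at h9
    simp only [hg] at h9
    nlinarith [sq_nonneg r]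
  have hloc : IsLocalMax g q := hqmax.isLocalMax (mem_of_superset (isOpen_ball.mem_nhds hqb)
    ball_subset_closedBall)
  have h11 := lapE_nonpos_of_isLocalMax (hgC q hq) hloc
  rw [hg, lapE_add (hsm q hq).1 (contDiffAt_const.mul (nE_contDiff p).contDiffAt),
    lapE_const_mul _ (nE_contDiff p).contDiffAt, lapE_nE] at h11
  have := (hsm q hq).2
  nlinarith

end maxprinciple

/-! ### Dunkl operators -/

/-- The difference quotient `(u - u ∘ σ_α) / ⟨α, ·⟩`, extended to the mirror `⟨α, x⟩ = 0` by its
limit, the derivative of `u` along `α`. -/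
def qA {d : ℕ} (u : Ed d × ℝ → ℝ) (α : Ed d) (p : Ed d × ℝ) : ℝ :=
  open Classical in
  if sF α p = 0 then fderiv ℝ u p (α, 0) else (u p - u (rE α p)) / sF α p

/-- The Dunkl operator `T_ξ u = ∂_ξ u + ∑_α k(α) ⟨α, ξ⟩ (u - u ∘ σ_α) / ⟨α, ·⟩`. The sum runs over
all of `R`, so `k` stands for half of the multiplicity function. -/
def TX {d : ℕ} (R : Finset (Ed d)) (k : Ed d → ℝ) (u : Ed d × ℝ → ℝ) (ξ p : Ed d × ℝ) : ℝ :=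
  fderiv ℝ u p ξ + ∑ α ∈ R, k α * sF α ξ * qA u α p

section quotient
variable {d : ℕ} {u : Ed d × ℝ → ℝ} {α : Ed d} {p : Ed d × ℝ}

lemma qA_of_ne (h : sF α p ≠ 0) : qA u α p = (u p - u (rE α p)) / sF α p := by
  simp [qA, h]

lemma qA_of_eq (h : sF α p = 0) : qA u α p = fderiv ℝ u p (α, 0) := by
  simp [qA, h]

lemma rE_of_eq (h : sF α p = 0) : rE α p = p := by simp [rE_apply, h]

lemma qA_eventuallyEq (h : sF α p ≠ 0) :
    qA u α =ᶠ[𝓝 p] fun q => (u q + (-1) * u (rE α q)) * (sF α q)⁻¹ := by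
  filter_upwards [(sF α).continuous.continuousAt.eventually_ne h] with q hq
  rw [qA_of_ne hq]; ring

lemma contDiffAt_comp_rE (h2 : ContDiffAt ℝ 2 u (rE α p)) :
    ContDiffAt ℝ 2 (fun q => u (rE α q)) p :=
  h2.comp p (rE α).contDiff.contDiffAt

lemma qA_contDiffAt (h : sF α p ≠ 0) (h1 : ContDiffAt ℝ 2 u p)
    (h2 : ContDiffAt ℝ 2 u (rE α p)) : ContDiffAt ℝ 2 (qA u α) p :=
  ((h1.add (contDiffAt_const.mul (contDiffAt_comp_rE h2))).mul
    (sF_inv_contDiffAt α h)).congr_of_eventuallyEq (qA_eventuallyEq h)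

/-- Across a mirror the quotient `qA u α` is still differentiable: subtracting from `u` its second
order Taylor polynomial at `p` leaves a function with gradient `o(|z - p|)`, to which the mean
value inequality on the segment from `z` to `σ_α z` applies. -/
lemma qA_differentiableAt_of_eq (h : sF α p = 0) (hu : ContDiffAt ℝ 2 u p) :
    DifferentiableAt ℝ (qA u α) p := by
  set B := fderiv ℝ (fderiv ℝ u) p with hB
  set D := fderiv ℝ u p with hD
  set a : Ed d × ℝ := (α, 0) with ha
  have hsym : ∀ v w, B v w = B w v := fun v w => (hu.isSymmSndFDerivAt (by simp)).eq v w
  have hBd : HasFDerivAt (fderiv ℝ u) B p :=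
    ((hu.fderiv_right (m := 1) (by norm_num)).differentiableAt (by norm_num)).hasFDerivAt
  -- the second order remainder
  set e : Ed d × ℝ → ℝ := fun z => u z - D (z - p) - 1 / 2 * B (z - p) (z - p) with he
  have hed : ∀ z, DifferentiableAt ℝ u z →
      HasFDerivAt e (fderiv ℝ u z - D - B (z - p)) z := by
    intro z hz
    have hs : HasFDerivAt (fun z : Ed d × ℝ => z - p) (ContinuousLinearMap.id ℝ _) z :=
      (hasFDerivAt_id z).sub_const p
    have h1 : HasFDerivAt (fun z => D (z - p)) D z := D.hasFDerivAt.comp z hs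
    have h2 : HasFDerivAt (fun z => B (z - p)) B z := B.hasFDerivAt.comp z hs
    have h3 := ((hz.hasFDerivAt.fun_sub h1).fun_sub ((h2.clm_apply hs).const_mul (1 / 2)))
    refine h3.congr_fderiv ?_
    refine ContinuousLinearMap.ext fun w => ?_
    have : (B.flip (z - p)) w = B (z - p) w := hsym w (z - p)
    simp only [sub_apply, smul_apply, add_apply, this, smul_eq_mul,
      ContinuousLinearMap.comp_apply, ContinuousLinearMap.id_apply]
    ring
  have hL : HasFDerivAt (qA u α) (B.flip a - (1 / 2 * B a a) • sF α) p := by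
    refine HasFDerivAt.of_isLittleO ?_
    rw [Asymptotics.isLittleO_iff]
    intro c hc
    set C : ℝ := 1 + ‖rE α‖ with hC
    have hC1 : 1 ≤ C := by rw [hC]; linarith [norm_nonneg (rE α)]
    set ε : ℝ := c / (C * (1 + ‖a‖)) with hε
    have hεpos : 0 < ε := by positivity
    have hlo := hBd.isLittleO
    rw [Asymptotics.isLittleO_iff] at hlo
    obtain ⟨r, hr, hball⟩ := Metric.eventually_nhds_iff_ball.1 ((hlo hεpos).and hu.ev_diff)
    have hde : ∀ z ∈ ball p r, ‖fderiv ℝ u z - D - B (z - p)‖ ≤ ε * ‖z - p‖ :=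
      fun z hz => (hball z hz).1
    have hrC : 0 < r / (2 * C) := by positivity
    filter_upwards [Metric.ball_mem_nhds p hrC] with z hz
    have hzn : ‖z - p‖ < r / (2 * C) := by rwa [mem_ball, dist_eq_norm] at hz
    have hzn' : C * ‖z - p‖ < r := by
      rw [lt_div_iff₀ (by positivity)] at hzn
      nlinarith [norm_nonneg (z - p)]
    have hzr : z ∈ ball p r := by
      rw [mem_ball, dist_eq_norm]; nlinarith [norm_nonneg (z - p)]
    have hεc : ε * C * ‖a‖ ≤ c := by
      rw [hε, div_mul_eq_mul_div, div_mul_eq_mul_div, div_le_iff₀ (by positivity)]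
      have : 0 ≤ c * C := by positivity
      nlinarith
    have hz0 := norm_nonneg (z - p)
    have ha0 := norm_nonneg a
    rw [qA_of_eq h]
    by_cases hs : sF α z = 0
    · rw [qA_of_eq hs]
      have hs' : sF α (z - p) = 0 := by rw [map_sub, hs, h]; ring
      have e1 : fderiv ℝ u z a - D a - (B.flip a - (1 / 2 * B a a) • sF α) (z - p) =
          (fderiv ℝ u z - D - B (z - p)) a := by
        simp [hs']
      rw [e1]
      calc ‖(fderiv ℝ u z - D - B (z - p)) a‖ ≤ ‖fderiv ℝ u z - D - B (z - p)‖ * ‖a‖ :=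
            ContinuousLinearMap.le_opNorm _ _
        _ ≤ ε * ‖z - p‖ * ‖a‖ := by gcongr; exact hde z hzr
        _ ≤ c * ‖z - p‖ := by
            have : ε * ‖a‖ ≤ c := by
              have : 0 ≤ ε * ‖a‖ := by positivity
              nlinarith
            nlinarith
    · have hconv : Convex ℝ (closedBall p (C * ‖z - p‖)) := convex_closedBall _ _
      have hsub : closedBall p (C * ‖z - p‖) ⊆ ball p r := closedBall_subset_ball hzn'
      have hz1 : z ∈ closedBall p (C * ‖z - p‖) := by
        rw [mem_closedBall, dist_eq_norm]; nlinarith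
      have hz2 : rE α z ∈ closedBall p (C * ‖z - p‖) := by
        rw [mem_closedBall, dist_eq_norm]
        have : rE α z - p = rE α (z - p) := by rw [map_sub, rE_of_eq h]
        rw [this]
        refine ((rE α).le_opNorm _).trans ?_
        gcongr
        rw [hC]; linarith
      have hmv := hconv.norm_image_sub_le_of_norm_hasFDerivWithin_le (f := e)
        (f' := fun z => fderiv ℝ u z - D - B (z - p)) (C := ε * (C * ‖z - p‖))
        (fun w hw => (hed w (hball w (hsub hw)).2).hasFDerivWithinAt)
        (fun w hw => (hde w (hsub hw)).trans (by
          gcongr; rwa [mem_closedBall, dist_eq_norm] at hw)) hz2 hz1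
      have hzs : z - rE α z = sF α z • a := by rw [rE_apply]; module
      rw [hzs, norm_smul] at hmv
      have hrz : rE α z - p = (z - p) - sF α z • a := by rw [rE_apply]; module
      have hsz : sF α (z - p) = sF α z := by rw [map_sub, h]; ring
      have key : e z - e (rE α z) = sF α z *
          ((u z - u (rE α z)) / sF α z - D a - (B.flip a - (1 / 2 * B a a) • sF α) (z - p)) := by
        simp only [he, hrz]
        generalize z - p = m at hsz
        simp only [map_sub, sub_apply, smul_apply, map_smul, smul_eq_mul,
          ContinuousLinearMap.flip_apply]
        rw [hsym a m, hsz]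
        field_simp
        ring
      rw [key, norm_mul] at hmv
      rw [qA_of_ne hs]
      have hspos : 0 < ‖sF α z‖ := norm_pos_iff.2 hs
      refine le_of_mul_le_mul_left (hmv.trans ?_) hspos
      calc ε * (C * ‖z - p‖) * (‖sF α z‖ * ‖a‖) = (ε * C * ‖a‖) * (‖sF α z‖ * ‖z - p‖) := by ring
        _ ≤ c * (‖sF α z‖ * ‖z - p‖) := by gcongr
        _ = _ := by ring
  exact hL.differentiableAt

lemma qA_differentiableAt (h1 : ContDiffAt ℝ 2 u p) (h2 : ContDiffAt ℝ 2 u (rE α p)) :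
    DifferentiableAt ℝ (qA u α) p := by
  by_cases h : sF α p = 0
  · exact qA_differentiableAt_of_eq h h1
  · exact (qA_contDiffAt h h1 h2).differentiableAt (by norm_num)

lemma TX_differentiableAt (R : Finset (Ed d)) (k : Ed d → ℝ) (ξ : Ed d × ℝ)
    (h1 : ContDiffAt ℝ 2 u p) (h2 : ∀ α ∈ R, ContDiffAt ℝ 2 u (rE α p)) :
    DifferentiableAt ℝ (TX R k u ξ) p := by
  unfold TX
  exact (h1.diff_fderiv_apply ξ).fun_add
    (DifferentiableAt.fun_sum fun α hα => (qA_differentiableAt h1 (h2 α hα)).const_mul _)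

end quotient

/-! ### Root system identities -/

/-- A normalized root system with an invariant weight `k ≥ 0`, phrased without a choice of positive
roots. -/
structure RS {d : ℕ} (R : Finset (Ed d)) (k : Ed d → ℝ) : Prop where
  norm_two : ∀ α ∈ R, ⟪α, α⟫ = (2 : ℝ)
  refl_mem : ∀ α ∈ R, ∀ β ∈ R, reflAt α β ∈ R
  nonneg : ∀ α ∈ R, 0 ≤ k α
  inv : ∀ α ∈ R, ∀ β ∈ R, k (reflAt α β) = k β

section algebra
variable {d : ℕ} {R : Finset (Ed d)} {k : Ed d → ℝ}

lemma inner_reflAt (α β γ : Ed d) : ⟪reflAt α β, γ⟫ = ⟪β, γ⟫ - ⟪α, β⟫ * ⟪α, γ⟫ := by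
  simp [reflAt, inner_sub_left, inner_smul_left]

lemma sF_reflAt (α β : Ed d) (p : Ed d × ℝ) : sF (reflAt α β) p = sF β p - ⟪α, β⟫ * sF α p := by
  simp only [sF_apply, inner_reflAt]

lemma sF_rE' (α β : Ed d) (p : Ed d × ℝ) : sF β (rE α p) = sF (reflAt α β) p := by
  rw [sF_rE, sF_reflAt]

lemma reflAt_reflAt {α : Ed d} (hα : ⟪α, α⟫ = (2 : ℝ)) (β : Ed d) : reflAt α (reflAt α β) = β := by
  simp only [reflAt, inner_sub_right, inner_smul_right, hα]
  module

lemma reflAt_self {α : Ed d} (hα : ⟪α, α⟫ = (2 : ℝ)) : reflAt α α = -α := by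
  simp only [reflAt, hα]
  module

lemma RS.neg_mem (h : RS R k) {α : Ed d} (hα : α ∈ R) : -α ∈ R := by
  rw [← reflAt_self (h.norm_two α hα)]; exact h.refl_mem α hα α hα

lemma RS.k_neg (h : RS R k) {α : Ed d} (hα : α ∈ R) : k (-α) = k α := by
  rw [← reflAt_self (h.norm_two α hα)]; exact h.inv α hα α hα

lemma RS.sum_reflAt (h : RS R k) {α : Ed d} (hα : α ∈ R) (f : Ed d → ℝ) :
    ∑ β ∈ R, f (reflAt α β) = ∑ β ∈ R, f β := by
  have h2 := h.norm_two α hα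
  refine Finset.sum_nbij' (reflAt α) (reflAt α) (fun β hβ => h.refl_mem α hα β hβ)
    (fun β hβ => h.refl_mem α hα β hβ) (fun β _ => reflAt_reflAt h2 β)
    (fun β _ => reflAt_reflAt h2 β) (fun β _ => rfl)

lemma sF_neg (α : Ed d) (p : Ed d × ℝ) : sF (-α) p = - sF α p := by simp [sF_apply]

lemma rE_neg (α : Ed d) (p : Ed d × ℝ) : rE (-α) p = rE α p := by
  rw [rE_eq, rE_eq]; simp [reflAt]

/-- `σ_{σ_α β} = σ_α σ_β σ_α`. -/
lemma rE_reflAt {α : Ed d} (hα : ⟪α, α⟫ = (2 : ℝ)) (β : Ed d) (p : Ed d × ℝ) :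
    rE (reflAt α β) p = rE α (rE β (rE α p)) := by
  have h1 : ((reflAt α β, 0) : Ed d × ℝ) = rE α (β, 0) := by rw [rE_eq]
  rw [rE_apply (reflAt α β), rE_apply β, map_sub, map_smul, rE_rE α hα, sF_rE', h1]

/-- Coefficients of reflections in the commutator `[Δ_κ, T_ξ]` cancel. -/
lemma RS.refl_terms (h : RS R k) {p : Ed d × ℝ} (hp : ∀ α ∈ R, sF α p ≠ 0) (ξ : Ed d × ℝ)
    {δ : Ed d} (hδ : δ ∈ R) :
    ∑ α ∈ R, k α * (sF α ξ * ⟪α, δ⟫ / (sF α p * sF (reflAt δ α) p)) =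
      - (sF δ ξ / sF δ p) * ∑ α ∈ R, k α * (⟪α, δ⟫ / sF α p) := by
  have h2 := h.norm_two δ hδ
  set f : Ed d → ℝ := fun α => k α * (sF α ξ * ⟪α, δ⟫ / (sF α p * sF (reflAt δ α) p)) with hf
  set g : Ed d → ℝ := fun α => k α * (⟪α, δ⟫ / sF α p) with hg
  have h3 := h.sum_reflAt hδ f
  have h4 := h.sum_reflAt hδ g
  have h5 : ∑ α ∈ R, ((f α + f (reflAt δ α)) + sF δ ξ / sF δ p * (g α + g (reflAt δ α))) = 0 := by
    refine Finset.sum_eq_zero fun α hα => ?_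
    have e1 : ⟪reflAt δ α, δ⟫ = - ⟪α, δ⟫ := by
      rw [inner_reflAt, h2, real_inner_comm α δ]; ring
    have hs1 := hp α hα
    have hs2 := hp _ (h.refl_mem δ hδ α hα)
    have hs3 := hp δ hδ
    have e2 : sF (reflAt δ α) p = sF α p - ⟪α, δ⟫ * sF δ p := by
      rw [sF_reflAt, real_inner_comm]
    have e3 : sF (reflAt δ α) ξ = sF α ξ - ⟪α, δ⟫ * sF δ ξ := by
      rw [sF_reflAt, real_inner_comm]
    simp only [hf, hg, reflAt_reflAt h2, h.inv δ hδ α hα, e1, e3]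
    rw [e2] at hs2 ⊢
    field_simp
    ring
  rw [Finset.sum_add_distrib, ← Finset.mul_sum, Finset.sum_add_distrib, Finset.sum_add_distrib, h3,
    h4] at h5
  linarith

/-- Coefficients of rotations in the commutator `[Δ_κ, T_ξ]` cancel: along the orbits of
`(α, β) ↦ (β, -σ_β α)`, which preserves `σ_α σ_β`, the coefficients telescope. -/
lemma RS.rot_terms (h : RS R k) {p : Ed d × ℝ} (hp : ∀ α ∈ R, sF α p ≠ 0) (ξ : Ed d × ℝ)
    (φ : Ed d × ℝ → ℝ) (hφ : φ p = 0) :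
    ∑ α ∈ R, ∑ β ∈ R, k α * k β * (sF α ξ * ⟪α, β⟫ * φ (rE α (rE β p)) /
      (sF α p * sF β p * sF (reflAt β α) p)) = 0 := by
  rw [← Finset.sum_product']
  set w : Ed d × Ed d → ℝ := fun z => k z.1 * k z.2 * φ (rE z.1 (rE z.2 p)) with hw
  set Q : Ed d × Ed d → ℝ := fun z =>
    sF z.1 p ^ 2 + sF z.2 p ^ 2 - ⟪z.1, z.2⟫ * sF z.1 p * sF z.2 p with hQ
  set H : Ed d × Ed d → ℝ := fun z =>
    w z / Q z * ((⟪z.1, z.2⟫ * sF z.1 ξ - sF z.2 ξ) / sF z.2 p - sF z.1 ξ / sF z.1 p) with hH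
  set T : Ed d × Ed d → Ed d × Ed d := fun z => (z.2, -reflAt z.2 z.1) with hT
  have hreindex : ∑ z ∈ R ×ˢ R, H (T z) = ∑ z ∈ R ×ˢ R, H z := by
    refine Finset.sum_nbij' T (fun z => (-reflAt z.1 z.2, z.1)) ?_ ?_ ?_ ?_ ?_
    · intro z hz
      obtain ⟨h1, h2⟩ := Finset.mem_product.1 hz
      exact Finset.mem_product.2 ⟨h2, h.neg_mem (h.refl_mem _ h2 _ h1)⟩
    · intro z hz
      obtain ⟨h1, h2⟩ := Finset.mem_product.1 hz
      exact Finset.mem_product.2 ⟨h.neg_mem (h.refl_mem _ h1 _ h2), h1⟩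
    · intro z hz
      obtain ⟨h1, h2⟩ := Finset.mem_product.1 hz
      have : reflAt z.2 (-reflAt z.2 z.1) = - z.1 := by
        conv_rhs => rw [← reflAt_reflAt (h.norm_two _ h2) z.1]
        simp only [reflAt, inner_neg_right]; module
      simp [hT, this]
    · intro z hz
      obtain ⟨h1, h2⟩ := Finset.mem_product.1 hz
      have : reflAt z.1 (-reflAt z.1 z.2) = - z.2 := by
        conv_rhs => rw [← reflAt_reflAt (h.norm_two _ h1) z.2]
        simp only [reflAt, inner_neg_right]; module
      simp [hT, this]
    · intro z hz; rfl
  have hterm : ∀ z ∈ R ×ˢ R, k z.1 * k z.2 * (sF z.1 ξ * ⟪z.1, z.2⟫ * φ (rE z.1 (rE z.2 p)) /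
      (sF z.1 p * sF z.2 p * sF (reflAt z.2 z.1) p)) = H z - H (T z) := by
    rintro ⟨α, β⟩ hz
    obtain ⟨h1, h2⟩ := Finset.mem_product.1 hz
    simp only at h1 h2
    have n1 := h.norm_two α h1
    have n2 := h.norm_two β h2
    have hwT : w (T (α, β)) = w (α, β) := by
      simp only [hw, hT]
      rw [h.k_neg (h.refl_mem _ h2 _ h1), h.inv _ h2 _ h1, rE_neg, rE_reflAt n2, rE_rE β n2]
      ring
    have hc : ⟪β, -reflAt β α⟫ = ⟪α, β⟫ := by
      rw [inner_neg_right, real_inner_comm, inner_reflAt, n2, real_inner_comm α β]; ring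
    have hs2 : sF (-reflAt β α) p = ⟪α, β⟫ * sF β p - sF α p := by
      rw [sF_neg, sF_reflAt, real_inner_comm]; ring
    have hs3 : sF (reflAt β α) p = -(⟪α, β⟫ * sF β p - sF α p) := by
      rw [sF_reflAt, real_inner_comm]; ring
    have hx2 : sF (-reflAt β α) ξ = ⟪α, β⟫ * sF β ξ - sF α ξ := by
      rw [sF_neg, sF_reflAt, real_inner_comm]; ring
    have hQT : Q (T (α, β)) = Q (α, β) := by
      simp only [hQ, hT, hc, hs2]; ring
    have a1 := hp α h1
    have a2 := hp β h2
    have a3 : ⟪α, β⟫ * sF β p - sF α p ≠ 0 := by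
      rw [← hs2]; exact hp _ (h.neg_mem (h.refl_mem _ h2 _ h1))
    simp only [hH]
    rw [hwT, hQT]
    simp only [hT, hc, hs2, hx2, hs3]
    by_cases hab : rE α (rE β p) = p
    · simp [hw, hab, hφ]
    · have hQ0 : Q (α, β) ≠ 0 := by
        -- `Q = 0` would force `⟨α, β⟩ = ±2`, hence `α = ±β`
        intro hQ0
        simp only [hQ] at hQ0
        have hlt : ∀ ε : ℝ, ε = 1 ∨ ε = -1 → ε * ⟪α, β⟫ < 2 := by
          intro ε hε
          by_contra! hge
          have hnorm : ‖α - ε • β‖ ^ 2 ≤ 0 := by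
            rw [← real_inner_self_eq_norm_sq, inner_sub_sub_self, n1, inner_smul_left,
              inner_smul_right, inner_smul_left, inner_smul_right, n2, real_inner_comm α β]
            simp only [conj_trivial]
            rcases hε with rfl | rfl <;> nlinarith
          have h0 : α - ε • β = 0 := by
            rw [← norm_eq_zero]; nlinarith [norm_nonneg (α - ε • β)]
          apply hab
          rcases hε with rfl | rfl
          · have : α = β := by simpa [sub_eq_zero] using h0
            rw [this, rE_rE β n2]
          · have : α = -β := by
              rw [sub_eq_zero] at h0; simpa using h0
            rw [this, rE_neg, rE_rE β n2]
        have l1 := hlt 1 (Or.inl rfl)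
        have l2 := hlt (-1) (Or.inr rfl)
        have p1 : 0 < sF α p ^ 2 := by positivity
        have p2 : 0 < sF β p ^ 2 := by positivity
        nlinarith [mul_nonneg (by linarith : (0:ℝ) ≤ 2 + ⟪α, β⟫) (sq_nonneg (sF α p - sF β p)),
          mul_nonneg (by linarith : (0:ℝ) ≤ 2 - ⟪α, β⟫) (sq_nonneg (sF α p + sF β p)),
          mul_pos (by linarith : (0:ℝ) < 2 - ⟪α, β⟫) p1,
          mul_pos (by linarith : (0:ℝ) < 2 + ⟪α, β⟫) p1]
      have hQ1 : Q (α, β) = sF α p ^ 2 + sF β p ^ 2 - ⟪α, β⟫ * sF α p * sF β p := rfl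
      have hw1 : w (α, β) = k α * k β * φ (rE α (rE β p)) := rfl
      rw [hw1, hQ1]
      rw [hQ1] at hQ0
      generalize ⟪α, β⟫ = c at *
      generalize sF α p = s at *
      generalize sF β p = t at *
      field_simp
      ring
  rw [Finset.sum_congr rfl hterm, Finset.sum_sub_distrib, hreindex, sub_self]

/-- The order-zero part of `[Δ_κ, T_ξ]` vanishes. -/
lemma RS.value_terms (h : RS R k) {p : Ed d × ℝ} (hp : ∀ α ∈ R, sF α p ≠ 0) (ξ : Ed d × ℝ)
    (F : Ed d × ℝ → ℝ) :
    ∑ α ∈ R, ∑ β ∈ R, k α * k β * (sF α ξ * ⟪α, β⟫ / (sF α p * sF β p) *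
      ((F p - F (rE α p)) / sF α p - (F (rE β p) - F (rE α (rE β p))) / sF (reflAt β α) p)) = 0 := by
  have h3 := h.rot_terms hp ξ (fun q => F q - F p) (by simp)
  have h1 : ∑ α ∈ R, ∑ β ∈ R, k α * k β * (sF α ξ * ⟪α, β⟫ * (F (rE β p) - F p) /
      (sF α p * sF β p * sF (reflAt β α) p)) = - ∑ α ∈ R, ∑ β ∈ R, k α * k β *
        (sF α ξ * ⟪α, β⟫ * (F (rE α p) - F p) / (sF α p ^ 2 * sF β p)) := by
    rw [Finset.sum_comm, ← Finset.sum_neg_distrib]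
    refine Finset.sum_congr rfl fun δ hδ => ?_
    have e1 : ∑ α ∈ R, k α * k δ * (sF α ξ * ⟪α, δ⟫ * (F (rE δ p) - F p) /
        (sF α p * sF δ p * sF (reflAt δ α) p)) = k δ * (F (rE δ p) - F p) / sF δ p *
        ∑ α ∈ R, k α * (sF α ξ * ⟪α, δ⟫ / (sF α p * sF (reflAt δ α) p)) := by
      rw [Finset.mul_sum]
      refine Finset.sum_congr rfl fun α hα => ?_
      have := hp α hα; have := hp δ hδ; have := hp _ (h.refl_mem _ hδ _ hα)
      field_simp
    have e2 : ∑ β ∈ R, k δ * k β * (sF δ ξ * ⟪δ, β⟫ * (F (rE δ p) - F p) /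
        (sF δ p ^ 2 * sF β p)) = k δ * (F (rE δ p) - F p) / sF δ p *
        ((sF δ ξ / sF δ p) * ∑ α ∈ R, k α * (⟪α, δ⟫ / sF α p)) := by
      rw [Finset.mul_sum, Finset.mul_sum]
      refine Finset.sum_congr rfl fun α hα => ?_
      have := hp α hα; have := hp δ hδ
      rw [real_inner_comm α δ]
      field_simp
    rw [e1, e2, h.refl_terms hp ξ hδ]
    ring
  have h5 : ∀ α ∈ R, ∀ β ∈ R, k α * k β * (sF α ξ * ⟪α, β⟫ / (sF α p * sF β p) *
      ((F p - F (rE α p)) / sF α p - (F (rE β p) - F (rE α (rE β p))) / sF (reflAt β α) p)) =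
      k α * k β * (sF α ξ * ⟪α, β⟫ * (F (rE α (rE β p)) - F p) /
        (sF α p * sF β p * sF (reflAt β α) p)) -
      k α * k β * (sF α ξ * ⟪α, β⟫ * (F (rE β p) - F p) /
        (sF α p * sF β p * sF (reflAt β α) p)) -
      k α * k β * (sF α ξ * ⟪α, β⟫ * (F (rE α p) - F p) / (sF α p ^ 2 * sF β p)) := by
    intro α hα β hβ
    have := hp α hα; have := hp β hβ; have := hp _ (h.refl_mem _ hβ _ hα)
    field_simp
    ring
  rw [Finset.sum_congr rfl fun α hα => Finset.sum_congr rfl fun β hβ => h5 α hα β hβ]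
  simp only [Finset.sum_sub_distrib]
  rw [h3, h1]
  ring

end algebra

/-! ### Commutation of `T_ξ` with `Δ_κ` -/

section commutator
variable {d : ℕ} {R : Finset (Ed d)} {k : Ed d → ℝ}

/-- The part of `-Δ_κ` of order at most one, applied to a function with values `F` and
gradient `D`. -/
def lowOrder (R : Finset (Ed d)) (k : Ed d → ℝ) (F : Ed d × ℝ → ℝ)
    (D : Ed d × ℝ → (Ed d × ℝ) →L[ℝ] ℝ) (q : Ed d × ℝ) : ℝ :=
  -2 * ∑ β ∈ R, k β * (D q (β, 0) / sF β q - (F q - F (rE β q)) / sF β q ^ 2)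

/-- `Δ_κ T_ξ = T_ξ Δ_κ` at a regular point, with all derivatives of the function replaced by formal
symbols: `F` for values, `D` for gradients, `Hξ` for second derivatives in direction `ξ`, and
`lowOrder` in place of the Laplacian. -/
lemma RS.commutator (h : RS R k) {p : Ed d × ℝ} (hp : ∀ α ∈ R, sF α p ≠ 0) (ξ : Ed d × ℝ)
    (F : Ed d × ℝ → ℝ) (D : Ed d × ℝ → (Ed d × ℝ) →L[ℝ] ℝ) (Hξ : Ed d → ℝ) :
    (-2 * ∑ α ∈ R, k α * (Hξ α / sF α p - D p (α, 0) * sF α ξ / sF α p ^ 2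
        - (D p ξ - D (rE α p) (rE α ξ)) / sF α p ^ 2
        + 2 * (F p - F (rE α p)) * sF α ξ / sF α p ^ 3)) +
    (∑ α ∈ R, k α * sF α ξ * ((lowOrder R k F D p - lowOrder R k F D (rE α p)) / sF α p
        - 2 * (D p (α, 0) + D (rE α p) (α, 0)) / sF α p ^ 2
        + 4 * (F p - F (rE α p)) / sF α p ^ 3)) +
    2 * ∑ β ∈ R, k β * ((Hξ β + ∑ α ∈ R, k α * sF α ξ *
          ((D p (β, 0) - D (rE α p) (rE α (β, 0))) / sF α p
            - (F p - F (rE α p)) * ⟪α, β⟫ / sF α p ^ 2)) / sF β p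
        - ((D p ξ + ∑ α ∈ R, k α * sF α ξ * ((F p - F (rE α p)) / sF α p))
          - (D (rE β p) ξ + ∑ α ∈ R, k α * sF α ξ *
            ((F (rE β p) - F (rE α (rE β p))) / sF α (rE β p)))) / sF β p ^ 2) = 0 := by
  -- reindex `β ↦ σ_α β` in the lower order part at `σ_α p`
  have hG : ∀ α ∈ R, lowOrder R k F D (rE α p) = -2 * ∑ β ∈ R, k β *
      (D (rE α p) (rE α (β, 0)) / sF β p - (F (rE α p) - F (rE α (rE β p))) / sF β p ^ 2) := by
    intro α hα
    have n1 := h.norm_two α hα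
    unfold lowOrder
    congr 1
    rw [← h.sum_reflAt hα]
    refine Finset.sum_congr rfl fun β hβ => ?_
    rw [h.inv α hα β hβ, sF_rE', reflAt_reflAt n1, rE_reflAt n1, rE_rE α n1,
      show ((reflAt α β, 0) : Ed d × ℝ) = rE α (β, 0) by rw [rE_eq]]
  have hA : ∑ α ∈ R, k α * sF α ξ * ((lowOrder R k F D p - lowOrder R k F D (rE α p)) / sF α p
        - 2 * (D p (α, 0) + D (rE α p) (α, 0)) / sF α p ^ 2
        + 4 * (F p - F (rE α p)) / sF α p ^ 3) =
      (∑ α ∈ R, k α * sF α ξ * (- 2 * (D p (α, 0) + D (rE α p) (α, 0)) / sF α p ^ 2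
        + 4 * (F p - F (rE α p)) / sF α p ^ 3)) +
      ∑ α ∈ R, ∑ β ∈ R, k α * k β * (-2 * (sF α ξ / sF α p *
        (D p (β, 0) / sF β p - (F p - F (rE β p)) / sF β p ^ 2 -
        (D (rE α p) (rE α (β, 0)) / sF β p -
          (F (rE α p) - F (rE α (rE β p))) / sF β p ^ 2)))) := by
    rw [← Finset.sum_add_distrib]
    refine Finset.sum_congr rfl fun α hα => ?_
    have e : ∑ β ∈ R, k α * k β * (-2 * (sF α ξ / sF α p *
        (D p (β, 0) / sF β p - (F p - F (rE β p)) / sF β p ^ 2 -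
        (D (rE α p) (rE α (β, 0)) / sF β p -
          (F (rE α p) - F (rE α (rE β p))) / sF β p ^ 2)))) =
        k α * (sF α ξ / sF α p) * (lowOrder R k F D p - lowOrder R k F D (rE α p)) := by
      rw [hG α hα, lowOrder, ← mul_sub, ← Finset.sum_sub_distrib, Finset.mul_sum, Finset.mul_sum]
      refine Finset.sum_congr rfl fun β _ => ?_
      ring
    rw [e]
    ring
  have hB : 2 * ∑ β ∈ R, k β * ((Hξ β + ∑ α ∈ R, k α * sF α ξ *
          ((D p (β, 0) - D (rE α p) (rE α (β, 0))) / sF α p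
            - (F p - F (rE α p)) * ⟪α, β⟫ / sF α p ^ 2)) / sF β p
        - ((D p ξ + ∑ α ∈ R, k α * sF α ξ * ((F p - F (rE α p)) / sF α p))
          - (D (rE β p) ξ + ∑ α ∈ R, k α * sF α ξ *
            ((F (rE β p) - F (rE α (rE β p))) / sF α (rE β p)))) / sF β p ^ 2) =
      (∑ β ∈ R, k β * (2 * (Hξ β / sF β p - (D p ξ - D (rE β p) ξ) / sF β p ^ 2))) +
      ∑ α ∈ R, ∑ β ∈ R, k α * k β * (2 * sF α ξ *
        (((D p (β, 0) - D (rE α p) (rE α (β, 0))) / sF α p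
            - (F p - F (rE α p)) * ⟪α, β⟫ / sF α p ^ 2) / sF β p -
          ((F p - F (rE α p)) / sF α p - (F (rE β p) - F (rE α (rE β p))) / sF (reflAt β α) p) /
            sF β p ^ 2)) := by
    rw [Finset.sum_comm (s := R) (t := R), ← Finset.sum_add_distrib, Finset.mul_sum]
    refine Finset.sum_congr rfl fun β hβ => ?_
    have e : ∑ α ∈ R, k α * k β * (2 * sF α ξ *
        (((D p (β, 0) - D (rE α p) (rE α (β, 0))) / sF α p
            - (F p - F (rE α p)) * ⟪α, β⟫ / sF α p ^ 2) / sF β p -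
          ((F p - F (rE α p)) / sF α p - (F (rE β p) - F (rE α (rE β p))) / sF (reflAt β α) p) /
            sF β p ^ 2)) = 2 * k β * ((∑ α ∈ R, k α * sF α ξ *
          ((D p (β, 0) - D (rE α p) (rE α (β, 0))) / sF α p
            - (F p - F (rE α p)) * ⟪α, β⟫ / sF α p ^ 2)) / sF β p -
          ((∑ α ∈ R, k α * sF α ξ * ((F p - F (rE α p)) / sF α p)) -
          ∑ α ∈ R, k α * sF α ξ *
            ((F (rE β p) - F (rE α (rE β p))) / sF α (rE β p))) / sF β p ^ 2) := by
      rw [← Finset.sum_sub_distrib, Finset.sum_div, Finset.sum_div, ← Finset.sum_sub_distrib,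
        Finset.mul_sum]
      refine Finset.sum_congr rfl fun α _ => ?_
      rw [sF_rE']
      ring
    rw [e]
    ring
  rw [hA, hB, Finset.mul_sum]
  have hlin : (∑ α ∈ R, -2 * (k α * (Hξ α / sF α p - D p (α, 0) * sF α ξ / sF α p ^ 2
        - (D p ξ - D (rE α p) (rE α ξ)) / sF α p ^ 2
        + 2 * (F p - F (rE α p)) * sF α ξ / sF α p ^ 3))) +
      (∑ α ∈ R, k α * sF α ξ * (- 2 * (D p (α, 0) + D (rE α p) (α, 0)) / sF α p ^ 2
        + 4 * (F p - F (rE α p)) / sF α p ^ 3)) +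
      (∑ β ∈ R, k β * (2 * (Hξ β / sF β p - (D p ξ - D (rE β p) ξ) / sF β p ^ 2))) = 0 := by
    rw [← Finset.sum_add_distrib, ← Finset.sum_add_distrib]
    refine Finset.sum_eq_zero fun α hα => ?_
    rw [rE_apply α ξ, map_sub, map_smul, smul_eq_mul]
    ring
  have hquad : (∑ α ∈ R, ∑ β ∈ R, k α * k β * (-2 * (sF α ξ / sF α p *
        (D p (β, 0) / sF β p - (F p - F (rE β p)) / sF β p ^ 2 -
        (D (rE α p) (rE α (β, 0)) / sF β p -
          (F (rE α p) - F (rE α (rE β p))) / sF β p ^ 2))))) +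
      (∑ α ∈ R, ∑ β ∈ R, k α * k β * (2 * sF α ξ *
        (((D p (β, 0) - D (rE α p) (rE α (β, 0))) / sF α p
            - (F p - F (rE α p)) * ⟪α, β⟫ / sF α p ^ 2) / sF β p -
          ((F p - F (rE α p)) / sF α p - (F (rE β p) - F (rE α (rE β p))) / sF (reflAt β α) p) /
            sF β p ^ 2))) = 0 := by
    have hv := h.value_terms hp ξ F
    rw [← Finset.sum_add_distrib, ← mul_zero (-2 : ℝ), ← hv, Finset.mul_sum]
    refine Finset.sum_congr rfl fun α hα => ?_
    rw [← Finset.sum_add_distrib, Finset.mul_sum]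
    refine Finset.sum_congr rfl fun β hβ => ?_
    have a1 := hp α hα
    have a2 := hp β hβ
    have a3 := hp _ (h.refl_mem _ hβ _ hα)
    have e2 : sF (reflAt β α) p = sF α p - ⟪α, β⟫ * sF β p := by
      rw [sF_reflAt, real_inner_comm]
    rw [e2] at a3 ⊢
    generalize hm : sF α p - ⟪α, β⟫ * sF β p = m at a3 ⊢
    field_simp
    rw [show sF α p = m + ⟪α, β⟫ * sF β p by linarith]
    ring
  linarith

end commutator

/-! ### `T_ξ u` as a generalized solution -/

/-- `u` is a `C²` solution of `Δ_κ u = 0` (at regular points) on the open reflection invariant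
set `Ω`; here `κ = 2k` and the sum in `Δ_κ` is spread over all roots. -/
structure KH {d : ℕ} (R : Finset (Ed d)) (k : Ed d → ℝ) (u : Ed d × ℝ → ℝ)
    (Ω : Set (Ed d × ℝ)) : Prop where
  isOpen : IsOpen Ω
  inv : ∀ α ∈ R, ∀ q ∈ Ω, rE α q ∈ Ω
  smooth : ∀ q ∈ Ω, ContDiffAt ℝ 2 u q
  harm : ∀ q ∈ Ω, (∀ α ∈ R, sF α q ≠ 0) → lapE u q = lowOrder R k u (fderiv ℝ u) q

/-- A `C²` approximation of `T_ξ u` (which is only differentiable in general): the derivative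
`∂_ξ u` is replaced by a difference quotient of step `τ`. -/
def vT {d : ℕ} (R : Finset (Ed d)) (k : Ed d → ℝ) (u : Ed d × ℝ → ℝ) (ξ : Ed d × ℝ) (τ : ℝ)
    (q : Ed d × ℝ) : ℝ :=
  τ⁻¹ * (u (q + τ • ξ) + (-1) * u q) + ∑ α ∈ R, k α * sF α ξ * qA u α q

section approx
variable {d : ℕ} {R : Finset (Ed d)} {k : Ed d → ℝ} {u : Ed d × ℝ → ℝ} {Ω : Set (Ed d × ℝ)}
  {α : Ed d} {p : Ed d × ℝ}

lemma tendsto_shift (ξ q : Ed d × ℝ) :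
    Tendsto (fun z : ℝ × (Ed d × ℝ) => z.2 + z.1 • ξ) (𝓝[>] 0 ×ˢ 𝓝 q) (𝓝 q) := by
  have h1 : Tendsto (fun z : ℝ × (Ed d × ℝ) => z.2 + z.1 • ξ) (𝓝 ((0 : ℝ), q)) (𝓝 (q + (0 : ℝ) • ξ)) :=
    Continuous.tendsto (by fun_prop) _
  rw [zero_smul, add_zero, nhds_prod_eq] at h1
  exact h1.mono_left (Filter.prod_mono nhdsWithin_le_nhds le_rfl)

/-- Difference quotients with moving base point converge under strict differentiability. -/
lemma tendsto_diffQuot {V : Type*} [NormedAddCommGroup V] [NormedSpace ℝ V]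
    {f : Ed d × ℝ → V} {f' : (Ed d × ℝ) →L[ℝ] V} {q : Ed d × ℝ} (hf : HasStrictFDerivAt f f' q)
    (ξ : Ed d × ℝ) :
    Tendsto (fun z : ℝ × (Ed d × ℝ) => z.1⁻¹ • (f (z.2 + z.1 • ξ) - f z.2)) (𝓝[>] 0 ×ˢ 𝓝 q)
      (𝓝 (f' ξ)) := by
  have h1 : Tendsto (fun z : ℝ × (Ed d × ℝ) => (z.2 + z.1 • ξ, z.2)) (𝓝[>] 0 ×ˢ 𝓝 q)
      (𝓝 (q, q)) := by
    exact (tendsto_shift ξ q).prodMk_nhds tendsto_snd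
  have h2 := hf.isLittleO.comp_tendsto h1
  rw [tendsto_iff_norm_sub_tendsto_zero, Metric.tendsto_nhds]
  intro ε hε
  have hc : 0 < ε / (2 * (1 + ‖ξ‖)) := by positivity
  have hpos : ∀ᶠ z : ℝ × (Ed d × ℝ) in 𝓝[>] 0 ×ˢ 𝓝 q, 0 < z.1 :=
    (tendsto_fst (f := 𝓝[>] (0 : ℝ)) (g := 𝓝 q)).eventually self_mem_nhdsWithin
  filter_upwards [(Asymptotics.isLittleO_iff.1 h2) hc, hpos] with z hz hz0
  simp only [Function.comp, add_sub_cancel_left, map_smul] at hz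
  rw [Real.dist_eq, sub_zero, abs_of_nonneg (norm_nonneg _)]
  have e : z.1⁻¹ • (f (z.2 + z.1 • ξ) - f z.2) - f' ξ =
      z.1⁻¹ • (f (z.2 + z.1 • ξ) - f z.2 - z.1 • f' ξ) := by
    rw [smul_sub _ _ (z.1 • f' ξ), smul_smul, inv_mul_cancel₀ hz0.ne', one_smul]
  rw [e, norm_smul, norm_inv, Real.norm_of_nonneg hz0.le]
  rw [norm_smul, Real.norm_of_nonneg hz0.le] at hz
  calc z.1⁻¹ * ‖f (z.2 + z.1 • ξ) - f z.2 - z.1 • f' ξ‖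
      ≤ z.1⁻¹ * (ε / (2 * (1 + ‖ξ‖)) * (z.1 * ‖ξ‖)) := by gcongr
    _ = ε / 2 * (‖ξ‖ / (1 + ‖ξ‖)) := by field_simp
    _ ≤ ε / 2 * 1 := by
        gcongr
        rw [div_le_one (by positivity)]; linarith
    _ < ε := by linarith

lemma lapE_continuousAt (hu : ContDiffAt ℝ 2 u p) : ContinuousAt (lapE u) p := by
  have h2 : ∀ᶠ q in 𝓝 p, ContDiffAt ℝ 2 u q := hu.eventually (by simp)
  have h1 : lapE u =ᶠ[𝓝 p] fun q => ∑ j, fderiv ℝ (fderiv ℝ u) q (bv j) (bv j) := by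
    filter_upwards [h2] with q hq
    simp only [lapE_eq_sum, pd2_eq hq]
  have h3 : ContinuousAt (fderiv ℝ (fderiv ℝ u)) p :=
    ((hu.fderiv_right (m := 1) (by norm_num)).fderiv_right (m := 0) (by norm_num)).continuousAt
  refine ContinuousAt.congr ?_ h1.symm
  fun_prop

lemma fderiv_qA (h : sF α p ≠ 0) (h1 : ContDiffAt ℝ 2 u p) (h2 : ContDiffAt ℝ 2 u (rE α p))
    (w : Ed d × ℝ) : fderiv ℝ (qA u α) p w =
      (fderiv ℝ u p w - fderiv ℝ u (rE α p) (rE α w)) / sF α p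
        - (u p - u (rE α p)) * sF α w / sF α p ^ 2 := by
  have d1 := h1.differentiableAt (by norm_num)
  have d2 := h2.differentiableAt (by norm_num)
  have d3 := (contDiffAt_comp_rE h2).differentiableAt (by norm_num)
  have d4 := (sF_inv_contDiffAt α h (n := 2)).differentiableAt (by norm_num)
  rw [(qA_eventuallyEq h).fderiv_eq, fderiv_fun_mul (d1.fun_add (d3.const_mul _)) d4,
    fderiv_fun_add d1 (d3.const_mul _), fderiv_const_mul d3]
  simp only [add_apply, smul_apply, smul_eq_mul, fderiv_sF_inv α h, fderiv_comp_rE α d2]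
  field_simp
  ring

lemma lapE_qA (hα : ⟪α, α⟫ = (2 : ℝ)) (h : sF α p ≠ 0) (h1 : ContDiffAt ℝ 2 u p)
    (h2 : ContDiffAt ℝ 2 u (rE α p)) : lapE (qA u α) p =
      (lapE u p - lapE u (rE α p)) / sF α p
        - 2 * (fderiv ℝ u p (α, 0) + fderiv ℝ u (rE α p) (α, 0)) / sF α p ^ 2
        + 4 * (u p - u (rE α p)) / sF α p ^ 3 := by
  have d1 := h1.differentiableAt (by norm_num)
  have d2 := h2.differentiableAt (by norm_num)
  have c3 := contDiffAt_comp_rE h2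
  have d3 := c3.differentiableAt (by norm_num)
  have c4 := sF_inv_contDiffAt α h (n := 2)
  have e1 : ∑ j, fderiv ℝ (fun q => u q + (-1) * u (rE α q)) p (bv j) *
      fderiv ℝ (fun q => (sF α q)⁻¹) p (bv j) =
      - (fderiv ℝ u p (α, 0) + fderiv ℝ u (rE α p) (α, 0)) / sF α p ^ 2 := by
    have e2 := sum_sF_bv α (fderiv ℝ (fun q => u q + (-1) * u (rE α q)) p)
    have e3 : fderiv ℝ (fun q => u q + (-1) * u (rE α q)) p (α, 0) =
        fderiv ℝ u p (α, 0) + fderiv ℝ u (rE α p) (α, 0) := by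
      rw [fderiv_fun_add d1 (d3.const_mul _), fderiv_const_mul d3]
      simp only [add_apply, smul_apply, smul_eq_mul, fderiv_comp_rE α d2]
      have : rE α ((α, 0) : Ed d × ℝ) = - (α, 0) := by
        rw [rE_apply, sF_apply, hα]; module
      rw [this, map_neg]; ring
    rw [← e3, ← e2, neg_div, Finset.sum_div, ← Finset.sum_neg_distrib]
    refine Finset.sum_congr rfl fun j _ => ?_
    rw [fderiv_sF_inv α h]; ring
  rw [lapE_congr (qA_eventuallyEq h), lapE_mul (h1.add (contDiffAt_const.mul c3)) c4, e1,
    lapE_add h1 (contDiffAt_const.mul c3), lapE_const_mul _ c3, lapE_comp_rE α hα h2,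
    lapE_sF_inv α hα h]
  field_simp
  ring

lemma KH.regular_rE (hR : RS R k) (hp : ∀ β ∈ R, sF β p ≠ 0) (hα : α ∈ R) :
    ∀ β ∈ R, sF β (rE α p) ≠ 0 := fun β hβ => by
  rw [sF_rE']; exact hp _ (hR.refl_mem _ hα _ hβ)

lemma eventually_regular (R : Finset (Ed d)) (hp : ∀ β ∈ R, sF β p ≠ 0) :
    ∀ᶠ q in 𝓝 p, ∀ β ∈ R, sF β q ≠ 0 :=
  (Filter.eventually_all_finset R).2 fun β hβ =>
    (sF β).continuous.continuousAt.eventually_ne (hp β hβ)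

/-- The derivative of `lowOrder` along `ξ`. -/
lemma KH.lowOrder_deriv (hu : KH R k u Ω) (hpΩ : p ∈ Ω) (hp : ∀ β ∈ R, sF β p ≠ 0)
    (ξ : Ed d × ℝ) : ∃ G' : (Ed d × ℝ) →L[ℝ] ℝ,
      HasStrictFDerivAt (lowOrder R k u (fderiv ℝ u)) G' p ∧
      G' ξ = -2 * ∑ α ∈ R, k α * (fderiv ℝ (fderiv ℝ u) p ξ (α, 0) / sF α p
        - fderiv ℝ u p (α, 0) * sF α ξ / sF α p ^ 2
        - (fderiv ℝ u p ξ - fderiv ℝ u (rE α p) (rE α ξ)) / sF α p ^ 2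
        + 2 * (u p - u (rE α p)) * sF α ξ / sF α p ^ 3) := by
  have c1 := hu.smooth p hpΩ
  have c2 : ContDiffAt ℝ 1 (fderiv ℝ u) p := c1.fderiv_right (by norm_num)
  have hterm : ∀ α ∈ R, ContDiffAt ℝ 1 (fun q => k α * (fderiv ℝ u q (α, 0) / sF α q -
      (u q - u (rE α q)) / sF α q ^ 2)) p := by
    intro α hα
    have h0 := hp α hα
    have s1 : ContDiffAt ℝ 1 (fun q => sF α q) p := (sF α).contDiff.contDiffAt
    have c3 := (contDiffAt_comp_rE (hu.smooth _ (hu.inv α hα p hpΩ)))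
    exact contDiffAt_const.mul (((c2.clm_apply contDiffAt_const).div s1 h0).sub
      (((c1.sub c3).of_le (by norm_num)).div (s1.pow 2) (pow_ne_zero 2 h0)))
  have hG : ContDiffAt ℝ 1 (lowOrder R k u (fderiv ℝ u)) p := by
    unfold lowOrder
    exact contDiffAt_const.mul (ContDiffAt.sum hterm)
  refine ⟨_, hG.hasStrictFDerivAt (by norm_num), ?_⟩
  unfold lowOrder
  rw [fderiv_const_mul (DifferentiableAt.fun_sum fun α hα => (hterm α hα).differentiableAt
    (by norm_num)), fderiv_fun_sum fun α hα => (hterm α hα).differentiableAt (by norm_num)]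
  simp only [smul_apply, sum_apply, smul_eq_mul]
  congr 1
  refine Finset.sum_congr rfl fun α hα => ?_
  have h0 := hp α hα
  have d1 := c1.differentiableAt (by norm_num)
  have d2 := (hu.smooth _ (hu.inv α hα p hpΩ)).differentiableAt (by norm_num)
  have d3 := (contDiffAt_comp_rE (hu.smooth _ (hu.inv α hα p hpΩ))).differentiableAt (by norm_num)
  have d4 := (sF_inv_contDiffAt α h0 (n := 2)).differentiableAt (by norm_num)
  have d5 := c1.diff_fderiv_apply ((α, 0) : Ed d × ℝ)
  have e0 : (fun q => k α * (fderiv ℝ u q (α, 0) / sF α q - (u q - u (rE α q)) / sF α q ^ 2)) =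
      fun q => k α * (fderiv ℝ u q (α, 0) * (sF α q)⁻¹ +
        (-1) * ((u q + (-1) * u (rE α q)) * ((sF α q)⁻¹ * (sF α q)⁻¹))) := by
    funext q; ring
  have d6 := (d1.fun_add (d3.const_mul (-1))).fun_mul (d4.fun_mul d4)
  rw [e0, fderiv_const_mul ((d5.fun_mul d4).fun_add (d6.const_mul _)),
    fderiv_fun_add (d5.fun_mul d4) (d6.const_mul _), fderiv_const_mul d6, fderiv_fun_mul d5 d4,
    fderiv_fun_mul (d1.fun_add (d3.const_mul (-1))) (d4.fun_mul d4), fderiv_fun_mul d4 d4,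
    fderiv_fun_add d1 (d3.const_mul _), fderiv_const_mul d3]
  have e7 : fderiv ℝ (fun q => fderiv ℝ u q (α, 0)) p ξ = fderiv ℝ (fderiv ℝ u) p ξ (α, 0) := by
    rw [fderiv_clm_apply (c2.differentiableAt (by norm_num)) (differentiableAt_const _)]
    simp
  simp only [add_apply, smul_apply, smul_eq_mul, fderiv_sF_inv α h0, fderiv_comp_rE α d2, e7]
  field_simp
  ring

/-- `T_ξ u` satisfies `Δ_κ T_ξ u = 0` at regular points in the weak sense needed for the maximum
principle: the approximations `vT` converge to it together with gradients, their Laplacians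
converge to some `h`, and `h` plus the lower order part of `Δ_κ T_ξ u` vanishes. -/
lemma KH.approx (hR : RS R k) (hu : KH R k u Ω) (hpΩ : p ∈ Ω) (hp : ∀ β ∈ R, sF β p ≠ 0)
    (ξ : Ed d × ℝ) : ∃ h : ℝ,
      (∀ᶠ z : ℝ × (Ed d × ℝ) in 𝓝[>] 0 ×ˢ 𝓝 p, ContDiffAt ℝ 2 (vT R k u ξ z.1) z.2) ∧
      (∀ᶠ q in 𝓝 p, Tendsto (fun z : ℝ × (Ed d × ℝ) => vT R k u ξ z.1 z.2) (𝓝[>] 0 ×ˢ 𝓝 q)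
        (𝓝 (TX R k u ξ q))) ∧
      Tendsto (fun z : ℝ × (Ed d × ℝ) => fderiv ℝ (vT R k u ξ z.1) z.2) (𝓝[>] 0 ×ˢ 𝓝 p)
        (𝓝 (fderiv ℝ (TX R k u ξ) p)) ∧
      Tendsto (fun z : ℝ × (Ed d × ℝ) => lapE (vT R k u ξ z.1) z.2) (𝓝[>] 0 ×ˢ 𝓝 p) (𝓝 h) ∧
      h = lowOrder R k (TX R k u ξ) (fderiv ℝ (TX R k u ξ)) p := by
  have hgood : ∀ᶠ q in 𝓝 p, q ∈ Ω ∧ ∀ β ∈ R, sF β q ≠ 0 :=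
    (hu.isOpen.eventually_mem hpΩ).and (eventually_regular R hp)
  have hsnd : Tendsto (fun z : ℝ × (Ed d × ℝ) => z.2) (𝓝[>] 0 ×ˢ 𝓝 p) (𝓝 p) := tendsto_snd
  have hev := (hsnd.eventually hgood).and ((tendsto_shift ξ p).eventually hgood)
  have hq2 : ∀ q ∈ Ω, (∀ β ∈ R, sF β q ≠ 0) → ∀ α ∈ R, ContDiffAt ℝ 2 (qA u α) q :=
    fun q hq hr α hα => qA_contDiffAt (hr α hα) (hu.smooth q hq) (hu.smooth _ (hu.inv α hα q hq))
  have c1 := hu.smooth p hpΩ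
  have htr : ∀ (τ : ℝ) (q : Ed d × ℝ), q + τ • ξ ∈ Ω →
      ContDiffAt ℝ 2 (fun q => u (q + τ • ξ)) q := fun τ q hq =>
    (hu.smooth _ hq).comp q (contDiff_id.add contDiff_const).contDiffAt
  have hsum2 : ∀ q ∈ Ω, (∀ β ∈ R, sF β q ≠ 0) →
      ContDiffAt ℝ 2 (fun q => ∑ α ∈ R, k α * sF α ξ * qA u α q) q :=
    fun q hq hr => ContDiffAt.sum fun α hα => contDiffAt_const.mul (hq2 q hq hr α hα)
  obtain ⟨G', hG', hG'ξ⟩ := hu.lowOrder_deriv hpΩ hp ξ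
  refine ⟨G' ξ + ∑ α ∈ R, k α * sF α ξ * lapE (qA u α) p, ?_, ?_, ?_, ?_, ?_⟩
  · filter_upwards [hev] with z hz
    exact (contDiffAt_const.mul ((htr _ _ hz.2.1).add (contDiffAt_const.mul
      (hu.smooth _ hz.1.1)))).add (hsum2 _ hz.1.1 hz.1.2)
  · filter_upwards [hgood] with q hq
    have t1 := tendsto_diffQuot ((hu.smooth q hq.1).hasStrictFDerivAt (by norm_num)) ξ
    have t2 : Tendsto (fun z : ℝ × (Ed d × ℝ) => ∑ α ∈ R, k α * sF α ξ * qA u α z.2)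
        (𝓝[>] 0 ×ˢ 𝓝 q) (𝓝 (∑ α ∈ R, k α * sF α ξ * qA u α q)) :=
      (hsum2 q hq.1 hq.2).continuousAt.tendsto.comp tendsto_snd
    refine (t1.add t2).congr fun z => ?_
    simp only [vT, smul_eq_mul]; ring
  · have c2 : ContDiffAt ℝ 1 (fderiv ℝ u) p := c1.fderiv_right (by norm_num)
    have t1 := tendsto_diffQuot (c2.hasStrictFDerivAt (by norm_num)) ξ
    have t2 : Tendsto (fun z : ℝ × (Ed d × ℝ) =>
        fderiv ℝ (fun q => ∑ α ∈ R, k α * sF α ξ * qA u α q) z.2)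
        (𝓝[>] 0 ×ˢ 𝓝 p) (𝓝 (fderiv ℝ (fun q => ∑ α ∈ R, k α * sF α ξ * qA u α q) p)) :=
      ((hsum2 p hpΩ hp).fderiv_right (m := 1) (by norm_num)).continuousAt.tendsto.comp tendsto_snd
    have hlim : fderiv ℝ (TX R k u ξ) p = fderiv ℝ (fderiv ℝ u) p ξ +
        fderiv ℝ (fun q => ∑ α ∈ R, k α * sF α ξ * qA u α q) p := by
      unfold TX
      rw [fderiv_fun_add (c1.diff_fderiv_apply ξ) ((hsum2 p hpΩ hp).differentiableAt (by norm_num)),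
        fderiv_clm_apply (c2.differentiableAt (by norm_num)) (differentiableAt_const _)]
      congr 1
      refine ContinuousLinearMap.ext fun w => ?_
      simpa using (c1.isSymmSndFDerivAt (by simp)).eq w ξ
    rw [hlim]
    refine (t1.add t2).congr' ?_
    filter_upwards [hev] with z hz
    unfold vT
    have a1 := (htr _ _ hz.2.1).differentiableAt (by norm_num)
    have a2 := (hu.smooth _ hz.1.1).differentiableAt (by norm_num)
    rw [fderiv_fun_add ((a1.fun_add (a2.const_mul _)).const_mul _)
      ((hsum2 _ hz.1.1 hz.1.2).differentiableAt (by norm_num)),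
      fderiv_const_mul (a1.fun_add (a2.const_mul _)), fderiv_fun_add a1 (a2.const_mul _),
      fderiv_const_mul a2, fderiv_comp_add_right]
    congr 2
    module
  · have t1 := tendsto_diffQuot hG' ξ
    have t2 : Tendsto (fun z : ℝ × (Ed d × ℝ) => ∑ α ∈ R, k α * sF α ξ * lapE (qA u α) z.2)
        (𝓝[>] 0 ×ˢ 𝓝 p) (𝓝 (∑ α ∈ R, k α * sF α ξ * lapE (qA u α) p)) :=
      tendsto_finsetSum _ fun α hα => ((lapE_continuousAt (hq2 p hpΩ hp α hα)).tendsto.comp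
        hsnd).const_mul _
    refine (t1.add t2).congr' ?_
    filter_upwards [hev] with z hz
    unfold vT
    have a1 := htr _ _ hz.2.1
    have a2 := hu.smooth _ hz.1.1
    rw [lapE_add (contDiffAt_const.mul (a1.add (contDiffAt_const.mul a2)))
      (hsum2 _ hz.1.1 hz.1.2), lapE_const_mul _ (a1.add (contDiffAt_const.mul a2)),
      lapE_add a1 (contDiffAt_const.mul a2), lapE_const_mul _ a2, lapE_translate,
      lapE_sum R fun α hα => contDiffAt_const.mul (hq2 _ hz.1.1 hz.1.2 α hα),
      hu.harm _ hz.2.1 hz.2.2, hu.harm _ hz.1.1 hz.1.2]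
    rw [Finset.sum_congr rfl fun α hα => lapE_const_mul (k α * sF α ξ)
      (hq2 _ hz.1.1 hz.1.2 α hα)]
    simp only [smul_eq_mul]; ring
  · have hcomm := hR.commutator hp ξ u (fderiv ℝ u) (fun α => fderiv ℝ (fderiv ℝ u) p ξ (α, 0))
    rw [hG'ξ]
    have e1 : ∀ α ∈ R, lapE (qA u α) p = (lowOrder R k u (fderiv ℝ u) p -
        lowOrder R k u (fderiv ℝ u) (rE α p)) / sF α p
        - 2 * (fderiv ℝ u p (α, 0) + fderiv ℝ u (rE α p) (α, 0)) / sF α p ^ 2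
        + 4 * (u p - u (rE α p)) / sF α p ^ 3 := by
      intro α hα
      rw [lapE_qA (hR.norm_two α hα) (hp α hα) c1 (hu.smooth _ (hu.inv α hα p hpΩ)),
        hu.harm p hpΩ hp, hu.harm _ (hu.inv α hα p hpΩ) (KH.regular_rE hR hp hα)]
    have e2 : ∀ q, (∀ β ∈ R, sF β q ≠ 0) → TX R k u ξ q = fderiv ℝ u q ξ +
        ∑ α ∈ R, k α * sF α ξ * ((u q - u (rE α q)) / sF α q) := by
      intro q hq
      unfold TX
      congr 1
      exact Finset.sum_congr rfl fun α hα => by rw [qA_of_ne (hq α hα)]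
    have e3 : ∀ β : Ed d, fderiv ℝ (TX R k u ξ) p (β, 0) = fderiv ℝ (fderiv ℝ u) p ξ (β, 0) +
        ∑ α ∈ R, k α * sF α ξ *
          ((fderiv ℝ u p (β, 0) - fderiv ℝ u (rE α p) (rE α (β, 0))) / sF α p
            - (u p - u (rE α p)) * ⟪α, β⟫ / sF α p ^ 2) := by
      intro β
      have c2 : ContDiffAt ℝ 1 (fderiv ℝ u) p := c1.fderiv_right (by norm_num)
      unfold TX
      rw [fderiv_fun_add (c1.diff_fderiv_apply ξ) ((hsum2 p hpΩ hp).differentiableAt (by norm_num)),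
        fderiv_clm_apply (c2.differentiableAt (by norm_num)) (differentiableAt_const _),
        fderiv_fun_sum fun α hα => ((hq2 p hpΩ hp α hα).differentiableAt (by norm_num)).const_mul _]
      simp only [add_apply, sum_apply]
      congr 1
      · simpa using (c1.isSymmSndFDerivAt (by simp)).eq (β, 0) ξ
      · refine Finset.sum_congr rfl fun α hα => ?_
        rw [fderiv_const_mul ((hq2 p hpΩ hp α hα).differentiableAt (by norm_num)), smul_apply,
          smul_eq_mul, fderiv_qA (hp α hα) c1 (hu.smooth _ (hu.inv α hα p hpΩ))]
        rfl
    have e5 : ∑ α ∈ R, k α * sF α ξ * lapE (qA u α) p = ∑ α ∈ R, k α * sF α ξ *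
        ((lowOrder R k u (fderiv ℝ u) p - lowOrder R k u (fderiv ℝ u) (rE α p)) / sF α p
        - 2 * (fderiv ℝ u p (α, 0) + fderiv ℝ u (rE α p) (α, 0)) / sF α p ^ 2
        + 4 * (u p - u (rE α p)) / sF α p ^ 3) :=
      Finset.sum_congr rfl fun α hα => by rw [e1 α hα]
    rw [e5]
    have e4 : lowOrder R k (TX R k u ξ) (fderiv ℝ (TX R k u ξ)) p = -(2 * ∑ β ∈ R, k β *
        (fderiv ℝ (TX R k u ξ) p (β, 0) / sF β p -
          (TX R k u ξ p - TX R k u ξ (rE β p)) / sF β p ^ 2)) := by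
      unfold lowOrder; ring
    rw [e4]
    have e6 : ∀ β ∈ R, k β * (fderiv ℝ (TX R k u ξ) p (β, 0) / sF β p -
          (TX R k u ξ p - TX R k u ξ (rE β p)) / sF β p ^ 2) = _ := fun β hβ => by
      rw [e3 β, e2 p hp, e2 (rE β p) (KH.regular_rE hR hp hβ)]
    rw [Finset.sum_congr rfl e6]
    linarith

end approx

/-! ### The second derivative test for the Bernstein function -/

/-- The cut-off function `1 - |q - Q|²` of Bernstein's method. -/
def chi {d : ℕ} (Q q : Ed d × ℝ) : ℝ := 1 + (-1) * nE Q q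

section bernstein
variable {d : ℕ} {R : Finset (Ed d)} {k : Ed d → ℝ} {u : Ed d × ℝ → ℝ} {Ω : Set (Ed d × ℝ)}
  {p : Ed d × ℝ}

lemma chi_contDiff (Q : Ed d × ℝ) {n : WithTop ℕ∞} : ContDiff ℝ n (chi Q) :=
  contDiff_const.add (contDiff_const.mul (nE_contDiff Q))

lemma fderiv_chi (Q q w : Ed d × ℝ) :
    fderiv ℝ (chi Q) q w = -(2 * ⟪q.1 - Q.1, w.1⟫ + 2 * (q.2 - Q.2) * w.2) := by
  have h1 : DifferentiableAt ℝ (nE Q) q := (nE_contDiff Q (n := 1)).contDiffAt.differentiableAt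
    (by norm_num)
  unfold chi
  rw [fderiv_const_add, fderiv_const_mul h1, smul_apply, fderiv_nE, smul_eq_mul]
  ring

lemma lapE_chi (Q q : Ed d × ℝ) : lapE (chi Q) q = -(2 * (d + 1)) := by
  unfold chi
  rw [lapE_add contDiffAt_const (contDiffAt_const.mul (nE_contDiff Q).contDiffAt), lapE_const,
    lapE_const_mul _ (nE_contDiff Q).contDiffAt, lapE_nE]
  ring

lemma sum_fderiv_chi_sq (Q q : Ed d × ℝ) : ∑ j, fderiv ℝ (chi Q) q (bv j) ^ 2 = 4 * nE Q q := by
  rw [Fintype.sum_option]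
  have h1 : ∀ i, fderiv ℝ (chi Q) q (bv (some i)) ^ 2 = 4 * ((q.1 - Q.1) i * (q.1 - Q.1) i) := by
    intro i
    rw [fderiv_chi]
    simp only [bv, inner_single_one]; ring
  have h2 : fderiv ℝ (chi Q) q (bv none) ^ 2 = 4 * (q.2 - Q.2) ^ 2 := by
    rw [fderiv_chi]
    simp only [bv, inner_zero_right]; ring
  simp only [h1, h2]
  rw [← Finset.mul_sum, sum_sq_coord, real_inner_self_eq_norm_sq, nE]
  ring

/-- Second derivative test for `(χ T_ξ u)² + A u² + ℓ`, `ℓ` linear, at a regular local maximum. -/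
lemma KH.bern_lap (hR : RS R k) (hu : KH R k u Ω) (hpΩ : p ∈ Ω) (hp : ∀ β ∈ R, sF β p ≠ 0)
    (ξ Q : Ed d × ℝ) (A : ℝ) (ℓ : (Ed d × ℝ) →L[ℝ] ℝ)
    (hmax : ∀ᶠ q in 𝓝 p, (chi Q q * TX R k u ξ q) * (chi Q q * TX R k u ξ q) + A * (u q * u q) + ℓ q ≤
      (chi Q p * TX R k u ξ p) * (chi Q p * TX R k u ξ p) + A * (u p * u p) + ℓ p) :
    2 * (chi Q p * TX R k u ξ p) *
      (chi Q p * lowOrder R k (TX R k u ξ) (fderiv ℝ (TX R k u ξ)) p +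
        2 * (∑ j, fderiv ℝ (chi Q) p (bv j) * fderiv ℝ (TX R k u ξ) p (bv j)) +
        TX R k u ξ p * lapE (chi Q) p) +
      2 * ∑ j, (chi Q p * fderiv ℝ (TX R k u ξ) p (bv j) +
        TX R k u ξ p * fderiv ℝ (chi Q) p (bv j)) ^ 2 +
      A * (2 * u p * lowOrder R k u (fderiv ℝ u) p + 2 * ∑ j, fderiv ℝ u p (bv j) ^ 2) ≤ 0 := by
  obtain ⟨h, a1, a2, a3, a4, a5⟩ := hu.approx hR hpΩ hp ξ
  have c1 := hu.smooth p hpΩ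
  rw [← a5, ← hu.harm p hpΩ hp]
  have hcd : ∀ q, ContDiffAt ℝ 2 (chi Q) q := fun q => (chi_contDiff Q).contDiffAt
  have hld : ∀ q, ContDiffAt ℝ 2 (fun q => ℓ q) q := fun q => ℓ.contDiff.contDiffAt
  have hevu : ∀ᶠ q in 𝓝 p, ContDiffAt ℝ 2 u q := c1.eventually (by simp)
  have hsnd : Tendsto (fun z : ℝ × (Ed d × ℝ) => z.2) (𝓝[>] 0 ×ˢ 𝓝 p) (𝓝 p) := tendsto_snd
  refine weak_max (F := fun q => (chi Q q * TX R k u ξ q) * (chi Q q * TX R k u ξ q) +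
      A * (u q * u q) + ℓ q)
    (Fτ := fun τ q => (chi Q q * vT R k u ξ τ q) * (chi Q q * vT R k u ξ τ q) +
      A * (u q * u q) + ℓ q) hmax ?_ ?_ ?_
  · filter_upwards [a1, hsnd.eventually hevu] with z h1 h2
    exact ((((hcd _).mul h1).mul ((hcd _).mul h1)).add (contDiffAt_const.mul (h2.mul h2))).add
      (hld _)
  · filter_upwards [a2, hevu] with q h1 h2
    have t1 : Tendsto (fun z : ℝ × (Ed d × ℝ) => chi Q z.2) (𝓝[>] 0 ×ˢ 𝓝 q) (𝓝 (chi Q q)) :=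
      (hcd q).continuousAt.tendsto.comp tendsto_snd
    have t2 : Tendsto (fun z : ℝ × (Ed d × ℝ) => u z.2) (𝓝[>] 0 ×ˢ 𝓝 q) (𝓝 (u q)) :=
      h2.continuousAt.tendsto.comp tendsto_snd
    have t3 : Tendsto (fun z : ℝ × (Ed d × ℝ) => ℓ z.2) (𝓝[>] 0 ×ˢ 𝓝 q) (𝓝 (ℓ q)) :=
      ℓ.continuous.continuousAt.tendsto.comp tendsto_snd
    exact (((t1.mul h1).mul (t1.mul h1)).add ((t2.mul t2).const_mul A)).add t3
  · have t1 : Tendsto (fun z : ℝ × (Ed d × ℝ) => chi Q z.2) (𝓝[>] 0 ×ˢ 𝓝 p) (𝓝 (chi Q p)) :=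
      (hcd p).continuousAt.tendsto.comp tendsto_snd
    have t2 : Tendsto (fun z : ℝ × (Ed d × ℝ) => u z.2) (𝓝[>] 0 ×ˢ 𝓝 p) (𝓝 (u p)) :=
      c1.continuousAt.tendsto.comp tendsto_snd
    have t3 := a2.self_of_nhds
    have t4 : ∀ w, Tendsto (fun z : ℝ × (Ed d × ℝ) => fderiv ℝ (vT R k u ξ z.1) z.2 w)
        (𝓝[>] 0 ×ˢ 𝓝 p) (𝓝 (fderiv ℝ (TX R k u ξ) p w)) := fun w =>
      ((ContinuousLinearMap.apply ℝ ℝ w).continuous.continuousAt.tendsto).comp a3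
    have t5 : ∀ w, Tendsto (fun z : ℝ × (Ed d × ℝ) => fderiv ℝ (chi Q) z.2 w)
        (𝓝[>] 0 ×ˢ 𝓝 p) (𝓝 (fderiv ℝ (chi Q) p w)) := fun w =>
      ((ContinuousLinearMap.apply ℝ ℝ w).continuous.continuousAt.tendsto).comp
        ((((hcd p).fderiv_right (m := 1) (by norm_num)).continuousAt.tendsto).comp hsnd)
    have t6 : ∀ w, Tendsto (fun z : ℝ × (Ed d × ℝ) => fderiv ℝ u z.2 w)
        (𝓝[>] 0 ×ˢ 𝓝 p) (𝓝 (fderiv ℝ u p w)) := fun w =>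
      ((ContinuousLinearMap.apply ℝ ℝ w).continuous.continuousAt.tendsto).comp
        (((c1.fderiv_right (m := 1) (by norm_num)).continuousAt.tendsto).comp hsnd)
    have t7 : Tendsto (fun z : ℝ × (Ed d × ℝ) => lapE u z.2) (𝓝[>] 0 ×ˢ 𝓝 p) (𝓝 (lapE u p)) :=
      (lapE_continuousAt c1).tendsto.comp hsnd
    have t8 : Tendsto (fun z : ℝ × (Ed d × ℝ) => lapE (chi Q) z.2) (𝓝[>] 0 ×ˢ 𝓝 p)
        (𝓝 (lapE (chi Q) p)) := (lapE_continuousAt (hcd p)).tendsto.comp hsnd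
    have s1 := tendsto_finsetSum (s := Finset.univ) fun j (_ : j ∈ Finset.univ) =>
      (t5 (bv j)).mul (t4 (bv j))
    have s2 := tendsto_finsetSum (s := Finset.univ) fun j (_ : j ∈ Finset.univ) =>
      ((t1.mul (t4 (bv j))).add (t3.mul (t5 (bv j)))).pow 2
    have s3 := tendsto_finsetSum (s := Finset.univ) fun j (_ : j ∈ Finset.univ) =>
      (t6 (bv j)).pow 2
    have key := ((((t1.mul t3).const_mul 2).mul (((t1.mul a4).add (s1.const_mul 2)).add
      (t3.mul t8))).add (s2.const_mul 2)).add
      ((((t2.const_mul 2).mul t7).add (s3.const_mul 2)).const_mul A)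
    refine key.congr' ?_
    filter_upwards [a1, hsnd.eventually hevu] with z h1 h2
    have d1 := (hcd z.2).differentiableAt (by norm_num)
    have d2 := h1.differentiableAt (by norm_num)
    have cw := (hcd z.2).mul h1
    rw [lapE_add ((cw.mul cw).add (contDiffAt_const.mul (h2.mul h2))) (hld _),
      lapE_add (cw.mul cw) (contDiffAt_const.mul (h2.mul h2)), lapE_clm,
      lapE_const_mul _ (h2.mul h2), lapE_mul cw cw, lapE_mul h2 h2, lapE_mul (hcd z.2) h1]
    have e1 : ∀ j, fderiv ℝ (fun q => chi Q q * vT R k u ξ z.1 q) z.2 (bv j) =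
        chi Q z.2 * fderiv ℝ (vT R k u ξ z.1) z.2 (bv j) +
          vT R k u ξ z.1 z.2 * fderiv ℝ (chi Q) z.2 (bv j) := fun j => by
      rw [fderiv_fun_mul d1 d2]; simp
    simp only [e1, ← pow_two]
    ring

end bernstein

/-! ### The Bernstein function at a regular maximum -/

section bernstein
variable {d : ℕ} {R : Finset (Ed d)} {k : Ed d → ℝ} {u : Ed d × ℝ → ℝ} {Ω : Set (Ed d × ℝ)}
  {p : Ed d × ℝ}

lemma sF_bv_sq_le {α : Ed d} (hα : ⟪α, α⟫ = (2 : ℝ)) (j : Option (Fin d)) : sF α (bv j) ^ 2 ≤ 2 := by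
  have h : ∑ i, sF α (bv i) * sF α (bv i) = 2 := by
    rw [sum_sF_bv, sF_apply]; exact hα
  rw [← h, pow_two]
  exact Finset.single_le_sum (f := fun i => sF α (bv i) * sF α (bv i))
    (fun i _ => mul_self_nonneg _) (Finset.mem_univ j)

lemma TX_sq_le (hR : RS R k) (u : Ed d × ℝ → ℝ) (j : Option (Fin d)) (p : Ed d × ℝ) :
    TX R k u (bv j) p ^ 2 ≤ (2 + 4 * ∑ α ∈ R, k α) *
      (∑ i, fderiv ℝ u p (bv i) ^ 2 + ∑ α ∈ R, k α * qA u α p ^ 2) := by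
  have h1 : fderiv ℝ u p (bv j) ^ 2 ≤ ∑ i, fderiv ℝ u p (bv i) ^ 2 :=
    Finset.single_le_sum (f := fun i => fderiv ℝ u p (bv i) ^ 2)
      (fun i _ => sq_nonneg _) (Finset.mem_univ j)
  have hK : 0 ≤ ∑ α ∈ R, k α := Finset.sum_nonneg hR.nonneg
  have hq : 0 ≤ ∑ α ∈ R, k α * qA u α p ^ 2 :=
    Finset.sum_nonneg fun α hα => mul_nonneg (hR.nonneg α hα) (sq_nonneg _)
  have h2 : (∑ α ∈ R, k α * sF α (bv j) * qA u α p) ^ 2 ≤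
      (∑ α ∈ R, k α * sF α (bv j) ^ 2) * ∑ α ∈ R, k α * qA u α p ^ 2 := by
    refine Finset.sum_sq_le_sum_mul_sum_of_sq_le_mul R
      (fun α hα => mul_nonneg (hR.nonneg α hα) (sq_nonneg _))
      (fun α hα => mul_nonneg (hR.nonneg α hα) (sq_nonneg _)) fun α _ => le_of_eq (by ring)
  have h3 : ∑ α ∈ R, k α * sF α (bv j) ^ 2 ≤ 2 * ∑ α ∈ R, k α := by
    rw [Finset.mul_sum]
    refine Finset.sum_le_sum fun α hα => ?_
    nlinarith [sF_bv_sq_le (hR.norm_two α hα) j, hR.nonneg α hα]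
  have h4 := h2.trans (mul_le_mul_of_nonneg_right h3 hq)
  have h5 : 0 ≤ ∑ i, fderiv ℝ u p (bv i) ^ 2 := Finset.sum_nonneg fun i _ => sq_nonneg _
  unfold TX
  set X := fderiv ℝ u p (bv j)
  set Y := ∑ α ∈ R, k α * sF α (bv j) * qA u α p
  nlinarith [sq_nonneg (X - Y), mul_nonneg hK h5]

/-- The constant `A` of Bernstein's method. -/
def bernA {d : ℕ} (R : Finset (Ed d)) (k : Ed d → ℝ) : ℝ :=
  (2 + 4 * ∑ α ∈ R, k α) * (4 * ∑ α ∈ R, k α + 2 * (d + 1) + 12) + 1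

/-- At a regular local maximum of `(χ T_ξ u)² + A u² + ℓ` with the listed symmetry properties, the
function `T_ξ u` vanishes. -/
lemma KH.bern_regular (hR : RS R k) (hu : KH R k u Ω) (hpΩ : p ∈ Ω) (hp : ∀ β ∈ R, sF β p ≠ 0)
    (j : Option (Fin d)) (Q : Ed d × ℝ) (ℓ : (Ed d × ℝ) →L[ℝ] ℝ) (hχ : 0 < chi Q p)
    (hmax : ∀ᶠ q in 𝓝 p, (chi Q q * TX R k u (bv j) q) * (chi Q q * TX R k u (bv j) q) +
        bernA R k * (u q * u q) + ℓ q ≤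
      (chi Q p * TX R k u (bv j) p) * (chi Q p * TX R k u (bv j) p) + bernA R k * (u p * u p) + ℓ p)
    (hjump : ∀ α ∈ R, (chi Q p * TX R k u (bv j) (rE α p)) ^ 2 + bernA R k * u (rE α p) ^ 2 ≤
      (chi Q p * TX R k u (bv j) p) ^ 2 + bernA R k * u p ^ 2)
    (hsign : TX R k u (bv j) p ≠ 0 → ∀ α ∈ R, 0 ≤ sF α p * ⟪α, Q.1⟫)
    (hℓ : ∀ α ∈ R, 0 ≤ ℓ (α, 0) / sF α p) : TX R k u (bv j) p = 0 := by
  have H := hu.bern_lap hR hpΩ hp (bv j) Q (bernA R k) ℓ hmax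
  have c1 := hu.smooth p hpΩ
  have hK : 0 ≤ ∑ α ∈ R, k α := Finset.sum_nonneg hR.nonneg
  have hA1 : 0 ≤ bernA R k := by unfold bernA; positivity
  have hV := TX_sq_le hR u j p
  have dv := TX_differentiableAt R k (bv j) c1 fun α hα => hu.smooth _ (hu.inv α hα p hpΩ)
  have du := c1.differentiableAt (by norm_num)
  have dχ : DifferentiableAt ℝ (chi Q) p := (chi_contDiff Q (n := 1)).contDiffAt.differentiableAt
    (by norm_num)
  set v := TX R k u (bv j) with hv
  -- the critical point equation
  have hcrit : ∀ w, 2 * (chi Q p * v p) * (chi Q p * fderiv ℝ v p w + v p * fderiv ℝ (chi Q) p w) +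
      bernA R k * (2 * u p * fderiv ℝ u p w) + ℓ w = 0 := by
    intro w
    have hloc : IsLocalMax (fun q => (chi Q q * v q) * (chi Q q * v q) + bernA R k * (u q * u q) +
        ℓ q) p := hmax
    have h0 := hloc.fderiv_eq_zero
    have dw := dχ.fun_mul dv
    rw [fderiv_fun_add ((dw.fun_mul dw).fun_add ((du.fun_mul du).const_mul _)) ℓ.differentiableAt,
      fderiv_fun_add (dw.fun_mul dw) ((du.fun_mul du).const_mul _),
      fderiv_const_mul (du.fun_mul du), fderiv_fun_mul dw dw, fderiv_fun_mul du du,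
      fderiv_fun_mul dχ dv, ℓ.fderiv] at h0
    have h1 := congrArg (fun L => L w) h0
    simp only [add_apply, smul_apply, smul_eq_mul, zero_apply] at h1
    linarith
  have hN : chi Q p ≤ 1 := by unfold chi nE; nlinarith [sq_nonneg ‖p.1 - Q.1‖, sq_nonneg (p.2 - Q.2)]
  have hN4 : ∑ j, fderiv ℝ (chi Q) p (bv j) ^ 2 ≤ 4 := by
    rw [sum_fderiv_chi_sq]; unfold chi at hχ; linarith
  -- first and zeroth order terms, root by root
  have hroot : ∀ α ∈ R, -(8 * chi Q p * v p ^ 2) * k α + 2 * bernA R k * (k α * qA u α p ^ 2) ≤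
      2 * (chi Q p * v p) * (chi Q p * (-2 * (k α * (fderiv ℝ v p (α, 0) / sF α p -
        (v p - v (rE α p)) / sF α p ^ 2)))) +
      bernA R k * (2 * u p * (-2 * (k α * (fderiv ℝ u p (α, 0) / sF α p -
        (u p - u (rE α p)) / sF α p ^ 2)))) := by
    intro α hα
    have hs := hp α hα
    have hk := hR.nonneg α hα
    rw [qA_of_ne hs]
    have hc := hcrit (α, 0)
    have hl := hℓ α hα
    have hj := hjump α hα
    have hχα : - 2 * (chi Q p * v p ^ 2) ≤ (chi Q p * v p ^ 2) *
        (fderiv ℝ (chi Q) p (α, 0) / sF α p) := by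
      by_cases hv0 : v p = 0
      · simp [hv0]
      have h1 := hsign hv0 α hα
      have h2 : fderiv ℝ (chi Q) p (α, 0) / sF α p = -2 + 2 * (⟪α, Q.1⟫ / sF α p) := by
        rw [fderiv_chi]
        simp only [inner_sub_left, mul_zero, add_zero]
        rw [real_inner_comm α p.1, real_inner_comm α Q.1, ← sF_apply]
        field_simp
        ring
      have h3 : 0 ≤ ⟪α, Q.1⟫ / sF α p := by
        rw [← mul_div_mul_left _ _ hs]
        exact div_nonneg h1 (mul_self_nonneg _)
      rw [h2]
      have : 0 ≤ chi Q p * v p ^ 2 := by positivity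
      nlinarith
    have e1 : 2 * (chi Q p * v p) * (chi Q p * (-2 * (k α * (fderiv ℝ v p (α, 0) / sF α p -
        (v p - v (rE α p)) / sF α p ^ 2)))) +
      bernA R k * (2 * u p * (-2 * (k α * (fderiv ℝ u p (α, 0) / sF α p -
        (u p - u (rE α p)) / sF α p ^ 2)))) =
      k α * (4 * ((chi Q p * v p ^ 2) * (fderiv ℝ (chi Q) p (α, 0) / sF α p)) +
        2 * (ℓ (α, 0) / sF α p) +
        (4 * chi Q p ^ 2 * v p * (v p - v (rE α p)) + 4 * bernA R k * u p * (u p - u (rE α p)))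
          / sF α p ^ 2) := by
      have : ℓ (α, 0) = - (2 * (chi Q p * v p) * (chi Q p * fderiv ℝ v p (α, 0) +
        v p * fderiv ℝ (chi Q) p (α, 0)) + bernA R k * (2 * u p * fderiv ℝ u p (α, 0))) := by
        linarith
      rw [this]
      field_simp
      ring
    have e2 : 2 * bernA R k * ((u p - u (rE α p)) / sF α p) ^ 2 ≤
        (4 * chi Q p ^ 2 * v p * (v p - v (rE α p)) + 4 * bernA R k * u p * (u p - u (rE α p)))
          / sF α p ^ 2 := by
      rw [div_pow, ← mul_div_assoc]
      refine div_le_div_of_nonneg_right ?_ (sq_nonneg _)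
      nlinarith [sq_nonneg (chi Q p * (v p - v (rE α p)))]
    rw [e1]
    have := mul_le_mul_of_nonneg_left (add_le_add (add_le_add
      (mul_le_mul_of_nonneg_left hχα (by norm_num : (0:ℝ) ≤ 4))
      (mul_nonneg (by norm_num : (0:ℝ) ≤ 2) hl)) e2) hk
    linarith
  have hsum := Finset.sum_le_sum hroot
  simp only [Finset.sum_add_distrib, ← Finset.mul_sum] at hsum
  -- the terms of second order
  have hquad : -(6 * v p ^ 2) * ∑ j, fderiv ℝ (chi Q) p (bv j) ^ 2 ≤
      4 * (chi Q p * v p) * (∑ j, fderiv ℝ (chi Q) p (bv j) * fderiv ℝ v p (bv j)) +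
      2 * ∑ j, (chi Q p * fderiv ℝ v p (bv j) + v p * fderiv ℝ (chi Q) p (bv j)) ^ 2 := by
    rw [Finset.mul_sum, Finset.mul_sum, Finset.mul_sum, ← Finset.sum_add_distrib]
    refine Finset.sum_le_sum fun j _ => ?_
    nlinarith [sq_nonneg (chi Q p * fderiv ℝ v p (bv j) + 2 * (v p * fderiv ℝ (chi Q) p (bv j)))]
  rw [lapE_chi] at H
  unfold lowOrder at H
  set S1 := ∑ j, fderiv ℝ (chi Q) p (bv j) * fderiv ℝ v p (bv j)
  set S2 := ∑ j, (chi Q p * fderiv ℝ v p (bv j) + v p * fderiv ℝ (chi Q) p (bv j)) ^ 2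
  set S3 := ∑ j, fderiv ℝ (chi Q) p (bv j) ^ 2
  set K := ∑ α ∈ R, k α with hKdef
  set D := ∑ i, fderiv ℝ u p (bv i) ^ 2
  set q2 := ∑ α ∈ R, k α * qA u α p ^ 2
  set L1 := ∑ β ∈ R, k β * (fderiv ℝ v p (β, 0) / sF β p - (v p - v (rE β p)) / sF β p ^ 2)
  set L2 := ∑ β ∈ R, k β * (fderiv ℝ u p (β, 0) / sF β p - (u p - u (rE β p)) / sF β p ^ 2)
  have hv2 : 0 ≤ v p ^ 2 := sq_nonneg _
  have b1 : (chi Q p * v p ^ 2) * (8 * K + 4 * (d + 1)) ≤ v p ^ 2 * (8 * K + 4 * (d + 1)) := by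
    refine mul_le_mul_of_nonneg_right ?_ (by positivity)
    nlinarith
  have b2 : v p ^ 2 * S3 ≤ v p ^ 2 * 4 := mul_le_mul_of_nonneg_left hN4 hv2
  have b3 : 2 * bernA R k * (D + q2) ≤ v p ^ 2 * (8 * K + 4 * (d + 1) + 24) := by nlinarith
  have b4 := mul_le_mul_of_nonneg_right hV (by positivity : 0 ≤ 8 * K + 4 * ((d : ℝ) + 1) + 24)
  have b5 : D + q2 ≤ 0 := by
    unfold bernA at b3; rw [← hKdef] at b3; nlinarith
  have b6 : v p ^ 2 ≤ 0 := hV.trans (mul_nonpos_of_nonneg_of_nonpos (by positivity) b5)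
  exact pow_eq_zero_iff (two_ne_zero) |>.1 (le_antisymm b6 hv2)

end bernstein

/-! ### Orbits and the bound for `T_ξ u` -/

/-- The orbit of `z` under the group generated by the reflections `σ_α`, `α ∈ Z`. -/
def orb {d : ℕ} (Z : Finset (Ed d)) (z : Ed d) : Set (Ed d) :=
  {w | Relation.ReflTransGen (fun a b => ∃ α ∈ Z, b = reflAt α a) z w}

section orbit
variable {d : ℕ} {R Z : Finset (Ed d)} {k : Ed d → ℝ} {z w : Ed d}

lemma orb_self (Z : Finset (Ed d)) (z : Ed d) : z ∈ orb Z z := Relation.ReflTransGen.refl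

lemma orb_step (hw : w ∈ orb Z z) {α : Ed d} (hα : α ∈ Z) : reflAt α w ∈ orb Z z :=
  Relation.ReflTransGen.tail hw ⟨α, hα, rfl⟩

lemma orb_induct {C : Ed d → Prop} (h0 : C z) (h1 : ∀ w, C w → ∀ α ∈ Z, C (reflAt α w))
    (hw : w ∈ orb Z z) : C w := by
  induction hw with
  | refl => exact h0
  | tail _ hbc ih =>
    obtain ⟨α, hα, rfl⟩ := hbc
    exact h1 _ ih α hα

lemma norm_reflAt {α : Ed d} (hα : ⟪α, α⟫ = (2 : ℝ)) (x : Ed d) : ‖reflAt α x‖ = ‖x‖ := by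
  rw [← sq_eq_sq₀ (norm_nonneg _) (norm_nonneg _), ← real_inner_self_eq_norm_sq,
    ← real_inner_self_eq_norm_sq]
  simp only [reflAt, inner_sub_left, inner_sub_right, inner_smul_left, inner_smul_right, hα,
    real_inner_comm α x]
  simp
  ring

lemma inner_reflAt_comm (α β x : Ed d) : ⟪β, reflAt α x⟫ = ⟪reflAt α β, x⟫ := by
  rw [inner_reflAt, real_inner_comm, inner_reflAt, real_inner_comm x β]
  ring

lemma orb_norm (hZ : ∀ α ∈ Z, ⟪α, α⟫ = (2 : ℝ)) (hw : w ∈ orb Z z) : ‖w‖ = ‖z‖ :=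
  orb_induct (C := fun w => ‖w‖ = ‖z‖) rfl (fun w hw α hα => by rw [norm_reflAt (hZ α hα), hw]) hw

/-- Values of roots on an orbit are among the values at the base point; this can be arranged
simultaneously for a point `y` fixed by the reflections. -/
lemma orb_values (hR : RS R k) (hZ : Z ⊆ R) {y : Ed d} (hy : ∀ α ∈ Z, ⟪α, y⟫ = 0)
    (hw : w ∈ orb Z z) : ∀ β ∈ R, ∃ β' ∈ R, ⟪β, w⟫ = ⟪β', z⟫ ∧ ⟪β, y⟫ = ⟪β', y⟫ := by
  refine orb_induct (C := fun w => ∀ β ∈ R, ∃ β' ∈ R, ⟪β, w⟫ = ⟪β', z⟫ ∧ ⟪β, y⟫ = ⟪β', y⟫)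
    (fun β hβ => ⟨β, hβ, rfl, rfl⟩) (fun w hw α hα β hβ => ?_) hw
  obtain ⟨β', hβ', h1, h2⟩ := hw _ (hR.refl_mem α (hZ hα) β hβ)
  refine ⟨β', hβ', by rw [inner_reflAt_comm, h1], ?_⟩
  rw [← h2, inner_reflAt, hy α hα]; ring

lemma orb_finite (hR : RS R k) (hZ : Z ⊆ R) (z : Ed d) : (orb Z z).Finite := by
  classical
  have hspan : ∀ w ∈ orb Z z, w - z ∈ Submodule.span ℝ (R : Set (Ed d)) := by
    intro w hw
    refine orb_induct (C := fun w => w - z ∈ Submodule.span ℝ (R : Set (Ed d))) (by simp)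
      (fun w hw α hα => ?_) hw
    have : reflAt α w - z = (w - z) - ⟪α, w⟫ • α := by unfold reflAt; abel
    rw [this]
    exact Submodule.sub_mem _ hw (Submodule.smul_mem _ _ (Submodule.subset_span (hZ hα)))
  have hfin : (Set.pi Set.univ fun _ : R => ((R.image fun β => (⟪β, z⟫ : ℝ) : Finset ℝ) : Set ℝ)).Finite :=
    Set.Finite.pi fun _ => Finset.finite_toSet _
  refine Set.Finite.of_injOn (f := fun w (β : R) => (⟪(β : Ed d), w⟫ : ℝ)) ?_ ?_ hfin
  · intro w hw β _
    obtain ⟨β', h1, h2, -⟩ := orb_values hR hZ (y := 0) (by simp) hw β β.2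
    simp only [Finset.coe_image, Set.mem_image]
    exact ⟨β', h1, h2.symm⟩
  · intro w hw w' hw' h
    have h1 : w - w' ∈ Submodule.span ℝ (R : Set (Ed d)) := by
      have := Submodule.sub_mem _ (hspan w hw) (hspan w' hw')
      simpa using this
    have h2 : ∀ x ∈ Submodule.span ℝ (R : Set (Ed d)), ⟪x, w - w'⟫ = (0 : ℝ) := by
      intro x hx
      induction hx using Submodule.span_induction with
      | mem x hx =>
        have := congrFun h ⟨x, hx⟩
        simp only at this
        rw [inner_sub_right, this, sub_self]
      | zero => simp
      | add x y _ _ h1 h2 => rw [inner_add_left, h1, h2, add_zero]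
      | smul a x _ h => rw [inner_smul_left, h, mul_zero]
    exact sub_eq_zero.1 (inner_self_eq_zero.1 (h2 _ h1))

end orbit

section bernstein
variable {d : ℕ} {R : Finset (Ed d)} {k : Ed d → ℝ} {u : Ed d × ℝ → ℝ} {Ω : Set (Ed d × ℝ)}

lemma nE_reflAt {α : Ed d} (hα : ⟪α, α⟫ = (2 : ℝ)) (z : Ed d) (y : ℝ) (q : Ed d × ℝ) :
    nE (reflAt α z, y) q = nE (z, y) (rE α q) := by
  have h : reflAt α q.1 - z = reflAt α (q.1 - reflAt α z) := by
    conv_lhs => rw [← reflAt_reflAt hα z]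
    simp only [reflAt, inner_sub_right]; module
  rw [rE_eq, nE, nE]
  simp only
  rw [h, norm_reflAt hα]

lemma nE_reflAt_sub {α : Ed d} (hα : ⟪α, α⟫ = (2 : ℝ)) (z : Ed d) (y : ℝ) (q : Ed d × ℝ) :
    nE (reflAt α z, y) q = nE (z, y) q + 2 * (sF α q * ⟪α, z⟫) := by
  have h : q.1 - reflAt α z = (q.1 - z) + ⟪α, z⟫ • α := by unfold reflAt; module
  rw [nE, nE, sF_apply]
  simp only
  rw [h, ← real_inner_self_eq_norm_sq, ← real_inner_self_eq_norm_sq]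
  simp only [inner_add_left, inner_add_right, inner_smul_left, inner_smul_right, inner_sub_right,
    inner_sub_left, hα]
  rw [real_inner_comm α q.1, real_inner_comm α z]
  simp
  ring

lemma isCompact_nE (Q : Ed d × ℝ) : IsCompact {q | nE Q q ≤ 1} := by
  refine Metric.isCompact_of_isClosed_isBounded
    (isClosed_le (nE_contDiff Q (n := 1)).continuous continuous_const) ?_
  refine (Metric.isBounded_closedBall (x := Q) (r := 1)).subset fun q hq => ?_
  have hq' : ‖q.1 - Q.1‖ ^ 2 + (q.2 - Q.2) ^ 2 ≤ 1 := hq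
  rw [Metric.mem_closedBall, Prod.dist_eq, max_le_iff, dist_eq_norm, Real.dist_eq]
  constructor
  · nlinarith [norm_nonneg (q.1 - Q.1), sq_nonneg (q.2 - Q.2)]
  · rw [abs_le]; constructor <;> nlinarith [sq_nonneg ‖q.1 - Q.1‖]

/-- `∑_β sgn⟨β,p⟩⟨β,α⟩` has the sign of `⟨α,p⟩`. -/
lemma RS.sign_sum (hR : RS R k) (p : Ed d × ℝ) {α : Ed d} (hα : α ∈ R) :
    0 ≤ (∑ β ∈ R, (SignType.sign (sF β p) : ℝ) * ⟪β, α⟫) * sF α p := by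
  have h1 := hR.sum_reflAt hα fun β => (SignType.sign (sF β p) : ℝ) * ⟪β, α⟫
  have h2 : 2 * ((∑ β ∈ R, (SignType.sign (sF β p) : ℝ) * ⟪β, α⟫) * sF α p) =
      ∑ β ∈ R, ((SignType.sign (sF β p) : ℝ) - (SignType.sign (sF (reflAt α β) p) : ℝ)) *
        (sF β p - sF (reflAt α β) p) := by
    have h3 : ∀ β ∈ R, ((SignType.sign (sF β p) : ℝ) - (SignType.sign (sF (reflAt α β) p) : ℝ)) *
        (sF β p - sF (reflAt α β) p) = ((SignType.sign (sF β p) : ℝ) * ⟪β, α⟫) * sF α p +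
        ((SignType.sign (sF (reflAt α β) p) : ℝ) * ⟪reflAt α β, α⟫) * sF α p := by
      intro β _
      rw [inner_reflAt, hR.norm_two α hα, real_inner_comm β α, sF_reflAt, real_inner_comm β α]
      ring
    rw [Finset.sum_congr rfl h3, Finset.sum_add_distrib, ← Finset.sum_mul, ← Finset.sum_mul, h1]
    ring
  have h4 : 0 ≤ ∑ β ∈ R, ((SignType.sign (sF β p) : ℝ) - (SignType.sign (sF (reflAt α β) p) : ℝ)) *
        (sF β p - sF (reflAt α β) p) := by
    refine Finset.sum_nonneg fun β _ => ?_
    generalize sF β p = a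
    generalize sF (reflAt α β) p = b
    rcases lt_trichotomy a 0 with ha | ha | ha <;> rcases lt_trichotomy b 0 with hb | hb | hb <;>
      simp [ha, hb, sign_neg, sign_pos] <;> linarith
  linarith

/-- Bernstein's estimate: `T_ξ u` is bounded at the centre of a unit ball on which `u` is a bounded
solution. The maximum principle is applied simultaneously on all the reflected balls; the penalty
`ε ∑|⟨β,·⟩|` forces the maximum away from the mirrors. -/
lemma KH.bernstein (hR : RS R k) (hu : KH R k u Ω) (hb : ∀ q ∈ Ω, |u q| ≤ 1) (P : Ed d × ℝ)
    (hP : ∀ q, nE P q ≤ 1 → q ∈ Ω) (j : Option (Fin d)) : TX R k u (bv j) P ^ 2 ≤ bernA R k := by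
  classical
  set v := TX R k u (bv j) with hv
  set A := bernA R k with hA
  have hK : 0 ≤ ∑ α ∈ R, k α := Finset.sum_nonneg hR.nonneg
  have hA0 : 0 ≤ A := by rw [hA]; unfold bernA; positivity
  have hfin := orb_finite hR (Finset.Subset.refl R) P.1
  have hKΩ : ∀ z ∈ orb R P.1, ∀ q, nE (z, P.2) q ≤ 1 → q ∈ Ω := fun z hz =>
    orb_induct (C := fun z => ∀ q, nE (z, P.2) q ≤ 1 → q ∈ Ω) hP (fun w hw α hα q hq => by
      rw [nE_reflAt (hR.norm_two α hα)] at hq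
      have := hu.inv α hα _ (hw _ hq)
      rwa [rE_rE α (hR.norm_two α hα)] at this) hz
  have hvd : ∀ q ∈ Ω, DifferentiableAt ℝ v q := fun q hq =>
    TX_differentiableAt R k (bv j) (hu.smooth q hq) fun α hα => hu.smooth _ (hu.inv α hα q hq)
  set Θ : Ed d × ℝ → ℝ := fun q => ∑ β ∈ R, |sF β q| with hΘ
  have hΘc : Continuous Θ := continuous_finsetSum _ fun β _ => (sF β).continuous.abs
  have hcomp : IsCompact (⋃ z ∈ orb R P.1, {q | nE (z, P.2) q ≤ 1}) :=
    hfin.isCompact_biUnion fun z _ => isCompact_nE _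
  obtain ⟨C, hC⟩ := hcomp.exists_bound_of_continuousOn hΘc.continuousOn
  have hC' : ∀ z ∈ orb R P.1, ∀ q, nE (z, P.2) q ≤ 1 → Θ q ≤ C := fun z hz q hq =>
    (Real.le_norm_self _).trans (hC q (Set.mem_biUnion hz hq))
  by_contra! hcon
  have hPP : nE P P ≤ 1 := by simp [nE]
  have hC0 : 0 ≤ C := (Finset.sum_nonneg fun β _ => abs_nonneg _).trans
    (hC' P.1 (orb_self _ _) P hPP)
  obtain ⟨ε, hε, hεC⟩ : ∃ ε : ℝ, 0 < ε ∧ A + ε * C < v P ^ 2 := by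
    refine ⟨(v P ^ 2 - A) / (2 * (C + 1)), by have := sub_pos.2 hcon; positivity, ?_⟩
    have h1 : (v P ^ 2 - A) / (2 * (C + 1)) * C ≤ (v P ^ 2 - A) / 2 := by
      rw [div_mul_eq_mul_div, div_le_div_iff₀ (by positivity) (by norm_num)]
      nlinarith
    linarith
  set F : Ed d → Ed d × ℝ → ℝ := fun z q =>
    (chi (z, P.2) q * v q) * (chi (z, P.2) q * v q) + A * (u q * u q) + ε * Θ q with hF
  -- the maximum of `F` over all reflected balls
  obtain ⟨z, hz, p, hp, hM⟩ : ∃ z ∈ orb R P.1, ∃ p, nE (z, P.2) p ≤ 1 ∧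
      ∀ z' ∈ orb R P.1, ∀ q, nE (z', P.2) q ≤ 1 → F z' q ≤ F z p := by
    have h1 : ∀ z : Ed d, ∃ p, z ∈ orb R P.1 → nE (z, P.2) p ≤ 1 ∧
        ∀ q, nE (z, P.2) q ≤ 1 → F z q ≤ F z p := by
      intro z
      by_cases hz : z ∈ orb R P.1
      · have hcont : ContinuousOn (F z) {q | nE (z, P.2) q ≤ 1} := by
          intro q hq
          have hqΩ := hKΩ z hz q hq
          have c1 := (hvd q hqΩ).continuousAt
          have c2 := (hu.smooth q hqΩ).continuousAt
          have c3 : ContinuousAt (chi (z, P.2)) q := (chi_contDiff _ (n := 1)).continuous.continuousAt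
          have c4 : ContinuousAt Θ q := hΘc.continuousAt
          exact (((c3.mul c1).mul (c3.mul c1)).add ((c2.mul c2).const_mul A) |>.add
            (c4.const_mul ε)).continuousWithinAt
        obtain ⟨p, hp1, hp2⟩ := (isCompact_nE (z, P.2)).exists_isMaxOn
          ⟨(z, P.2), by simp [nE]⟩ hcont
        exact ⟨p, fun _ => ⟨hp1, fun q hq => hp2 hq⟩⟩
      · exact ⟨0, fun h => absurd h hz⟩
    choose pm hpm using h1
    obtain ⟨z, hz, hmax⟩ := hfin.toFinset.exists_max_image (fun z => F z (pm z))
      ⟨P.1, by simpa using orb_self R P.1⟩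
    rw [Set.Finite.mem_toFinset] at hz
    refine ⟨z, hz, pm z, (hpm z hz).1, fun z' hz' q hq => ?_⟩
    exact ((hpm z' hz').2 q hq).trans (hmax z' (by simpa using hz'))
  have hpΩ := hKΩ z hz p hp
  have hlow : v P ^ 2 ≤ F z p := by
    refine le_trans ?_ (hM P.1 (orb_self _ _) P hPP)
    have h1 : chi (P.1, P.2) P = 1 := by simp [chi, nE]
    have h2 : 0 ≤ Θ P := Finset.sum_nonneg fun β _ => abs_nonneg _
    simp only [hF, h1]
    have := mul_nonneg hA0 (mul_self_nonneg (u P))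
    nlinarith [mul_nonneg hε.le h2]
  have huse : chi (z, P.2) p * v p ≠ 0 := by
    intro h0
    have h1 : F z p = A * (u p * u p) + ε * Θ p := by simp only [hF, h0]; ring
    have h2 := abs_le.1 (hb p hpΩ)
    have h3 : A * (u p * u p) ≤ A * 1 := mul_le_mul_of_nonneg_left (by nlinarith) hA0
    have h4 := mul_le_mul_of_nonneg_left (hC' z hz p hp) hε.le
    linarith
  have hχ : 0 < chi (z, P.2) p := by
    refine lt_of_le_of_ne ?_ (Ne.symm (left_ne_zero_of_mul huse))
    unfold chi; linarith
  have hvp : v p ≠ 0 := right_ne_zero_of_mul huse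
  -- linear minorants of the penalty
  have hlin : ∀ c : Ed d → ℝ, (∀ β ∈ R, |c β| ≤ 1) → (∀ β ∈ R, c β * sF β p = |sF β p|) →
      ∀ᶠ q in 𝓝 p, (chi (z, P.2) q * v q) * (chi (z, P.2) q * v q) + A * (u q * u q) +
        (ε • ∑ β ∈ R, c β • sF β : (Ed d × ℝ) →L[ℝ] ℝ) q ≤
      (chi (z, P.2) p * v p) * (chi (z, P.2) p * v p) + A * (u p * u p) +
        (ε • ∑ β ∈ R, c β • sF β : (Ed d × ℝ) →L[ℝ] ℝ) p := by
    intro c hc1 hc2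
    have hev : ∀ᶠ q in 𝓝 p, 0 < chi (z, P.2) q :=
      (chi_contDiff (z, P.2) (n := 1)).continuous.continuousAt.eventually (lt_mem_nhds hχ)
    filter_upwards [hev] with q hq
    have h1 := hM z hz q (by unfold chi at hq; linarith)
    have h2 : ∑ β ∈ R, c β * sF β q ≤ Θ q := Finset.sum_le_sum fun β hβ => by
      calc c β * sF β q ≤ |c β * sF β q| := le_abs_self _
        _ = |c β| * |sF β q| := abs_mul _ _
        _ ≤ 1 * |sF β q| := mul_le_mul_of_nonneg_right (hc1 β hβ) (abs_nonneg _)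
        _ = |sF β q| := one_mul _
    have h3 : ∑ β ∈ R, c β * sF β p = Θ p := Finset.sum_congr rfl hc2
    simp only [smul_apply, sum_apply, smul_eq_mul, h3]
    have := mul_le_mul_of_nonneg_left h2 hε.le
    simp only [hF] at h1
    linarith
  have hsg1 : ∀ β : Ed d, |(SignType.sign (sF β p) : ℝ)| ≤ 1 := by
    intro β
    rcases lt_trichotomy (sF β p) 0 with ha | ha | ha <;> simp [ha, sign_neg, sign_pos]
  have hsg2 : ∀ β : Ed d, (SignType.sign (sF β p) : ℝ) * sF β p = |sF β p| := fun β => sign_mul_self _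
  have hreg : ∀ α ∈ R, sF α p ≠ 0 := by
    intro α hα h0
    -- two different minorants touch at `p`, but both have to be critical there
    have hcrit : ∀ s : ℝ, |s| ≤ 1 → fderiv ℝ (fun q => (chi (z, P.2) q * v q) * (chi (z, P.2) q * v q)
        + A * (u q * u q)) p + (ε • ∑ β ∈ R,
          Function.update (fun β => (SignType.sign (sF β p) : ℝ)) α s β • sF β) = 0 := by
      intro s hs
      have h1 := hlin (Function.update (fun β => (SignType.sign (sF β p) : ℝ)) α s)
        (fun β _ => by
          by_cases h : β = α
          · subst h; simpa using hs
          · simpa [Function.update_of_ne h] using hsg1 β)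
        (fun β _ => by
          by_cases h : β = α
          · subst h; simp [h0]
          · simp [Function.update_of_ne h])
      set ℓ : (Ed d × ℝ) →L[ℝ] ℝ := ε • ∑ β ∈ R,
          Function.update (fun β => (SignType.sign (sF β p) : ℝ)) α s β • sF β
      have hloc : IsLocalMax (fun q => (chi (z, P.2) q * v q) * (chi (z, P.2) q * v q)
        + A * (u q * u q) + ℓ q) p := h1
      have h2 := hloc.fderiv_eq_zero
      have d1 : DifferentiableAt ℝ (chi (z, P.2)) p :=
        (chi_contDiff _ (n := 1)).contDiffAt.differentiableAt (by norm_num)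
      have d2 := d1.fun_mul (hvd p hpΩ)
      have d3 := (hu.smooth p hpΩ).differentiableAt (by norm_num)
      rwa [fderiv_fun_add ((d2.fun_mul d2).fun_add ((d3.fun_mul d3).const_mul A))
        ℓ.differentiableAt, ℓ.fderiv] at h2
    have h1 := (hcrit 1 (by simp)).trans (hcrit 0 (by simp)).symm
    have h2 := add_left_cancel h1
    have h3 := congrArg (fun L => L ((α, 0) : Ed d × ℝ)) h2
    simp only [smul_apply, sum_apply, smul_eq_mul] at h3
    have h4 := mul_left_cancel₀ hε.ne' h3
    rw [← Finset.add_sum_erase R _ hα, ← Finset.add_sum_erase R _ hα] at h4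
    have h5 : ∀ s : ℝ, ∑ β ∈ R.erase α, Function.update (fun β => (SignType.sign (sF β p) : ℝ)) α s β *
        sF β ((α, 0) : Ed d × ℝ) = ∑ β ∈ R.erase α, (SignType.sign (sF β p) : ℝ) *
        sF β ((α, 0) : Ed d × ℝ) := fun s => Finset.sum_congr rfl fun β hβ => by
      rw [Function.update_of_ne (Finset.ne_of_mem_erase hβ)]
    rw [h5, h5] at h4
    have h6 : α = 0 := by simpa [sF_apply] using h4
    have h7 := hR.norm_two α hα
    rw [h6, inner_zero_left] at h7
    norm_num at h7
  refine hvp (hu.bern_regular hR hpΩ hreg j (z, P.2)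
    (ε • ∑ β ∈ R, (SignType.sign (sF β p) : ℝ) • sF β) hχ
    (hlin (fun β => (SignType.sign (sF β p) : ℝ)) (fun β _ => hsg1 β) (fun β _ => hsg2 β)) ?_ ?_ ?_)
  · intro α hα
    have n2 := hR.norm_two α hα
    have e1 : nE (reflAt α z, P.2) (rE α p) = nE (z, P.2) p := by rw [nE_reflAt n2, rE_rE α n2]
    have h1 := hM _ (orb_step hz hα) (rE α p) (by rw [e1]; exact hp)
    have e2 : chi (reflAt α z, P.2) (rE α p) = chi (z, P.2) p := by unfold chi; rw [e1]
    have e3 : Θ (rE α p) = Θ p := by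
      simp only [hΘ, sF_rE']
      exact hR.sum_reflAt hα fun β => |sF β p|
    simp only [hF, e2, e3] at h1
    nlinarith
  · intro _ α hα
    have n2 := hR.norm_two α hα
    have h0 := nE_reflAt_sub n2 z P.2 p
    by_contra! hneg
    have h1 := hM _ (orb_step hz hα) p (by linarith)
    have h2 : chi (z, P.2) p < chi (reflAt α z, P.2) p := by unfold chi; linarith
    simp only [hF] at h1
    have h3 : chi (z, P.2) p ^ 2 * v p ^ 2 < chi (reflAt α z, P.2) p ^ 2 * v p ^ 2 :=
      mul_lt_mul_of_pos_right (pow_lt_pow_left₀ h2 hχ.le two_ne_zero) (by positivity)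
    nlinarith
  · intro α hα
    have h1 := hR.sign_sum p hα
    simp only [smul_apply, sum_apply, smul_eq_mul, sF_apply _ ((α, 0) : Ed d × ℝ)]
    rw [mul_div_assoc]
    refine mul_nonneg hε.le ?_
    rw [← mul_div_mul_right _ _ (hreg α hα)]
    exact div_nonneg h1 (mul_self_nonneg _)

end bernstein

/-! ### Points near intersections of mirrors, and growth along rays -/

section geometry
variable {d : ℕ} {R : Finset (Ed d)} {k : Ed d → ℝ}

/-- A point at which all functionals in `T` are at most `m` is within `C m` of their common kernel. -/
lemma exists_near_kernel (T : Finset (Ed d)) : ∃ C ≥ (1 : ℝ), ∀ (z : Ed d) (m : ℝ), 0 ≤ m →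
    (∀ γ ∈ T, |⟪γ, z⟫| ≤ m) → ∃ x, (∀ γ ∈ T, ⟪γ, x⟫ = (0 : ℝ)) ∧ ‖z - x‖ ≤ C * m := by
  set S := Submodule.span ℝ (T : Set (Ed d)) with hS
  let L : S →ₗ[ℝ] (T → ℝ) := LinearMap.pi fun γ => (innerₛₗ ℝ (γ : Ed d)).comp S.subtype
  have hL : LinearMap.ker L = ⊥ := by
    rw [LinearMap.ker_eq_bot']
    intro w hw
    have h2 : ∀ x ∈ S, ⟪x, (w : Ed d)⟫ = (0 : ℝ) := by
      intro x hx
      induction hx using Submodule.span_induction with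
      | mem x hx => exact congrFun hw ⟨x, hx⟩
      | zero => simp
      | add x y _ _ h1 h2 => rw [inner_add_left, h1, h2, add_zero]
      | smul a x _ h => rw [inner_smul_left, h, mul_zero]
    exact Subtype.ext (inner_self_eq_zero.1 (h2 _ w.2))
  obtain ⟨K, -, hK⟩ := L.exists_antilipschitzWith hL
  refine ⟨max 1 K, le_max_left _ _, fun z m hm hz => ?_⟩
  obtain ⟨w, hw, x, hx, rfl⟩ := S.exists_add_mem_mem_orthogonal z
  have hx' : ∀ γ ∈ T, ⟪γ, x⟫ = (0 : ℝ) := fun γ hγ =>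
    Submodule.inner_right_of_mem_orthogonal (Submodule.subset_span hγ) hx
  refine ⟨x, hx', ?_⟩
  have h1 := hK.le_mul_dist ⟨w, hw⟩ 0
  rw [map_zero, dist_zero_right, dist_zero_right] at h1
  have h2 : ‖L ⟨w, hw⟩‖ ≤ m := by
    rw [pi_norm_le_iff_of_nonneg hm]
    intro γ
    have := hz γ γ.2
    rw [inner_add_right, hx' γ γ.2, add_zero] at this
    exact this
  rw [add_sub_cancel_right]
  calc ‖w‖ ≤ K * ‖L ⟨w, hw⟩‖ := h1
    _ ≤ K * m := by gcongr
    _ ≤ max 1 K * m := by gcongr; exact le_max_right _ _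

/-- The same constant serves all subsets of `R`. -/
lemma exists_near_kernel_unif (R : Finset (Ed d)) : ∃ C ≥ (1 : ℝ), ∀ T ⊆ R, ∀ (z : Ed d) (m : ℝ),
    0 ≤ m → (∀ γ ∈ T, |⟪γ, z⟫| ≤ m) →
    ∃ x, (∀ γ ∈ T, ⟪γ, x⟫ = (0 : ℝ)) ∧ ‖z - x‖ ≤ C * m := by
  classical
  choose C hC1 hC using fun T : Finset (Ed d) => exists_near_kernel T
  refine ⟨∑ T ∈ R.powerset, C T, ?_, fun T hT z m hm hz => ?_⟩
  · exact (hC1 ∅).trans (Finset.single_le_sum (f := C) (fun T _ => zero_le_one.trans (hC1 T))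
      (Finset.empty_mem_powerset R))
  · obtain ⟨x, h1, h2⟩ := hC T z m hm hz
    refine ⟨x, h1, h2.trans ?_⟩
    exact mul_le_mul_of_nonneg_right (Finset.single_le_sum (f := C)
      (fun T _ => zero_le_one.trans (hC1 T)) (Finset.mem_powerset.2 hT)) hm

/-- A point `x` near `z`, on all mirrors of roots that are small at `z`, and such that the roots not
vanishing at `x` are large at `z` compared with `|z - x|`. -/
lemma exists_gap (R : Finset (Ed d)) : ∃ D ≥ (1 : ℝ), ∀ (z : Ed d) (ρ : ℝ), 0 ≤ ρ →
    ∃ x, (∀ γ ∈ R, |⟪γ, z⟫| ≤ ρ → ⟪γ, x⟫ = (0 : ℝ)) ∧ ‖z - x‖ ≤ D * ρ ∧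
      ∀ β ∈ R, ⟪β, x⟫ = (0 : ℝ) ∨ 3 * ‖z - x‖ ≤ |⟪β, z⟫| := by
  classical
  obtain ⟨C, hC1, hC⟩ := exists_near_kernel_unif R
  have key : ∀ n : ℕ, ∃ D ≥ (1 : ℝ), ∀ T ⊆ R, R.card ≤ T.card + n → ∀ (z : Ed d) (ρ : ℝ), 0 ≤ ρ →
      (∀ γ ∈ T, |⟪γ, z⟫| ≤ ρ) → ∃ x, (∀ γ ∈ T, ⟪γ, x⟫ = (0 : ℝ)) ∧ ‖z - x‖ ≤ D * ρ ∧
      ∀ β ∈ R, ⟪β, x⟫ = (0 : ℝ) ∨ 3 * ‖z - x‖ ≤ |⟪β, z⟫| := by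
    intro n
    induction n with
    | zero =>
      refine ⟨C, hC1, fun T hT hcard z ρ hρ hz => ?_⟩
      obtain ⟨x, h1, h2⟩ := hC T hT z ρ hρ hz
      rw [Finset.eq_of_subset_of_card_le hT (by simpa using hcard)] at h1
      exact ⟨x, fun γ hγ => h1 γ (hT hγ), h2, fun β hβ => Or.inl (h1 β hβ)⟩
    | succ n ih =>
      obtain ⟨D, hD1, hD⟩ := ih
      refine ⟨D * (3 * C), by nlinarith, fun T hT hcard z ρ hρ hz => ?_⟩
      obtain ⟨x, h1, h2⟩ := hC T hT z ρ hρ hz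
      by_cases hgap : ∀ β ∈ R, ⟪β, x⟫ = (0 : ℝ) ∨ 3 * ‖z - x‖ ≤ |⟪β, z⟫|
      · refine ⟨x, h1, h2.trans ?_, hgap⟩
        exact mul_le_mul_of_nonneg_right (by nlinarith) hρ
      · push Not at hgap
        obtain ⟨β, hβ, hβ0, hβ1⟩ := hgap
        have hβT : β ∉ T := fun h => hβ0 (h1 β h)
        have hbig : ρ ≤ 3 * C * ρ := by nlinarith
        obtain ⟨x', h3, h4, h5⟩ := hD (insert β T) (Finset.insert_subset hβ hT)
          (by rw [Finset.card_insert_of_notMem hβT]; omega) z (3 * C * ρ) (by positivity)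
          (fun γ hγ => by
            rcases Finset.mem_insert.1 hγ with rfl | hγ
            · linarith
            · exact (hz γ hγ).trans hbig)
        exact ⟨x', fun γ hγ => h3 γ (Finset.mem_insert_of_mem hγ), by rw [mul_assoc]; exact h4, h5⟩
  obtain ⟨D, hD1, hD⟩ := key R.card
  refine ⟨D, hD1, fun z ρ hρ => ?_⟩
  obtain ⟨x, h1, h2⟩ := hD (R.filter fun γ => |⟪γ, z⟫| ≤ ρ) (Finset.filter_subset _ _)
    (by omega) z ρ hρ (fun γ hγ => (Finset.mem_filter.1 hγ).2)
  exact ⟨x, fun γ hγ hγ' => h1 γ (Finset.mem_filter.2 ⟨hγ, hγ'⟩), h2⟩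

/-- Maximum principle along rays: a family of functions on rays permuted by reflections, whose
derivatives are bounded up to terms pulling the values together, grows at most linearly. -/
lemma ray_max {Z : Finset (Ed d)} (hk : ∀ β ∈ Z, 0 ≤ k β) {O : Set (Ed d)} (hO : O.Finite)
    (hinv : ∀ w ∈ O, ∀ β ∈ Z, reflAt β w ∈ O) {f : Ed d → ℝ} {x0 : Ed d} {B : ℝ}
    (hdiff : ∀ w ∈ O, ∀ t ∈ Set.Icc (0 : ℝ) 1, DifferentiableAt ℝ f (x0 + t • w))
    (hder : ∀ w ∈ O, ∀ t ∈ Set.Ioc (0 : ℝ) 1, fderiv ℝ f (x0 + t • w) w ≤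
      B - ∑ β ∈ Z, k β / t * (f (x0 + t • w) - f (x0 + t • reflAt β w))) :
    ∀ w ∈ O, f (x0 + w) ≤ f x0 + B := by
  classical
  intro w0 hw0
  refine le_of_forall_pos_le_add fun ε hε => ?_
  set H : Ed d → ℝ → ℝ := fun w t => f (x0 + t • w) - (B + ε) * t with hH
  have hline : ∀ (w : Ed d) (t : ℝ), HasDerivAt (fun t : ℝ => x0 + t • w) w t := fun w t => by
    simpa using ((hasDerivAt_id t).smul_const w).const_add x0
  have hHd : ∀ w ∈ O, ∀ t ∈ Set.Icc (0 : ℝ) 1,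
      HasDerivAt (H w) (fderiv ℝ f (x0 + t • w) w - (B + ε)) t := fun w hw t ht => by
    have h1 := (hdiff w hw t ht).hasFDerivAt.comp_hasDerivAt t (hline w t)
    have h2 := h1.sub ((hasDerivAt_id t).const_mul (B + ε))
    rw [mul_one] at h2
    exact h2
  obtain ⟨w, hw, t, ht, hM⟩ : ∃ w ∈ O, ∃ t ∈ Set.Icc (0 : ℝ) 1,
      ∀ w' ∈ O, ∀ t' ∈ Set.Icc (0 : ℝ) 1, H w' t' ≤ H w t := by
    have h1 : ∀ w : Ed d, ∃ t ∈ Set.Icc (0 : ℝ) 1, w ∈ O → ∀ t' ∈ Set.Icc (0 : ℝ) 1,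
        H w t' ≤ H w t := by
      intro w
      by_cases hw : w ∈ O
      · obtain ⟨t, ht, hmax⟩ := isCompact_Icc.exists_isMaxOn (Set.nonempty_Icc.2 zero_le_one)
          (fun t ht => (hHd w hw t ht).continuousAt.continuousWithinAt : ContinuousOn (H w) _)
        exact ⟨t, ht, fun _ t' ht' => hmax ht'⟩
      · exact ⟨0, by simp, fun h => absurd h hw⟩
    choose tm htm hmax using h1
    obtain ⟨w, hw, hmw⟩ := hO.toFinset.exists_max_image (fun w => H w (tm w)) ⟨w0, by simpa using hw0⟩
    rw [Set.Finite.mem_toFinset] at hw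
    exact ⟨w, hw, tm w, htm w, fun w' hw' t' ht' =>
      (hmax w' hw' t' ht').trans (hmw w' (by simpa using hw'))⟩
  have ht0 : t = 0 := by
    by_contra hne
    have htpos : 0 < t := lt_of_le_of_ne ht.1 (Ne.symm hne)
    have h1 : fderiv ℝ f (x0 + t • w) w - (B + ε) < 0 := by
      have h2 := hder w hw t ⟨htpos, ht.2⟩
      have h3 : 0 ≤ ∑ β ∈ Z, k β / t * (f (x0 + t • w) - f (x0 + t • reflAt β w)) := by
        refine Finset.sum_nonneg fun β hβ => mul_nonneg (div_nonneg (hk β hβ) htpos.le) ?_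
        have := hM _ (hinv w hw β hβ) t ht
        simp only [hH] at this
        linarith
      linarith
    have h4 := (hHd w hw t ht).tendsto_slope
    have h5 : ∀ᶠ s in 𝓝[≠] t, slope (H w) t s < 0 := h4.eventually (gt_mem_nhds h1)
    have h6 : ∀ᶠ s in 𝓝[<] t, slope (H w) t s < 0 := h5.filter_mono (nhdsWithin_mono _ fun s hs => ne_of_lt hs)
    have h7 : ∀ᶠ s in 𝓝[<] t, 0 < s ∧ s < t :=
      (eventually_nhdsWithin_of_eventually_nhds (lt_mem_nhds htpos)).and self_mem_nhdsWithin
    obtain ⟨s, hs1, hs2, hs3⟩ := (h6.and h7).exists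
    have h8 := hM w hw s ⟨hs2.le, hs3.le.trans ht.2⟩
    rw [slope_def_field] at hs1
    exact absurd hs1 (not_lt.2 (div_nonneg_of_nonpos (by linarith) (by linarith)))
  have h1 := hM w0 hw0 1 ⟨zero_le_one, le_rfl⟩
  simp only [hH, ht0, one_smul, zero_smul, add_zero, mul_zero, sub_zero, mul_one] at h1
  linarith

end geometry

/-! ### Bounds for difference quotients -/

/-- A differentiable function `f` on the unit neighbourhood of a reflection-invariant set `O`, bounded
by `1` and with Dunkl derivatives at regular points bounded by `M`. -/
structure LS {d : ℕ} (R : Finset (Ed d)) (k : Ed d → ℝ) (M : ℝ) (f : Ed d → ℝ) (O : Set (Ed d)) :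
    Prop where
  inv : ∀ z ∈ O, ∀ α ∈ R, reflAt α z ∈ O
  bdd : ∀ x, (∃ z ∈ O, ‖x - z‖ ≤ 1) → |f x| ≤ 1
  diff : ∀ x, (∃ z ∈ O, ‖x - z‖ ≤ 1) → DifferentiableAt ℝ f x
  dunkl : ∀ x, (∃ z ∈ O, ‖x - z‖ ≤ 1) → isRegular R x → ∀ ξ,
    |fderiv ℝ f x ξ + ∑ β ∈ R, k β * ⟪β, ξ⟫ * ((f x - f (reflAt β x)) / ⟪β, x⟫)| ≤ M * ‖ξ‖

/-- Reflected differences `f x - f (σ_β x)` are `O(|x - x₀|)` when `x₀` lies on the mirror of `β` and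
on at least `n` mirrors altogether, and the other roots are not small at `x`. -/
def ClusterBound {d : ℕ} (R : Finset (Ed d)) (k : Ed d → ℝ) (M : ℝ) (n : ℕ) : Prop :=
  ∃ C ≥ (0 : ℝ), ∃ δ > (0 : ℝ), δ ≤ 1 ∧ ∀ f O, LS R k M f O → ∀ x x0, isRegular R x →
    (∃ z ∈ O, ‖x - z‖ ≤ δ) → (∀ β ∈ R, ⟪β, x0⟫ = (0 : ℝ) ∨ 3 * ‖x - x0‖ ≤ |⟪β, x⟫|) →
    ‖x - x0‖ ≤ δ → n ≤ (R.filter fun γ => ⟪γ, x0⟫ = (0 : ℝ)).card →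
    ∀ β ∈ R, ⟪β, x0⟫ = (0 : ℝ) → |f x - f (reflAt β x)| ≤ C * ‖x - x0‖

/-- Difference quotients `(f x - f (σ_β x)) / ⟨β, x⟩` are bounded when at least `n` roots are at most
`2 |⟨β, x⟩|` at `x`. -/
def QuotBound {d : ℕ} (R : Finset (Ed d)) (k : Ed d → ℝ) (M : ℝ) (n : ℕ) : Prop :=
  ∃ Q ≥ (0 : ℝ), ∃ δ > (0 : ℝ), δ ≤ 1 ∧ ∀ f O, LS R k M f O → ∀ x, isRegular R x →
    (∃ z ∈ O, ‖x - z‖ ≤ δ) → ∀ β ∈ R,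
    n ≤ (R.filter fun γ => |⟪γ, x⟫| ≤ 2 * |⟪β, x⟫|).card →
    |f x - f (reflAt β x)| ≤ Q * |⟪β, x⟫|

section quotients
variable {d : ℕ} {R : Finset (Ed d)} {k : Ed d → ℝ} {M : ℝ}

lemma reflAt_sub' (α x z : Ed d) : reflAt α x - reflAt α z = reflAt α (x - z) := by
  simp only [reflAt, inner_sub_right, sub_smul]; abel

lemma near_reflAt (hR : RS R k) {O : Set (Ed d)} (hO : ∀ z ∈ O, ∀ α ∈ R, reflAt α z ∈ O) {δ : ℝ}
    {x : Ed d} (hx : ∃ z ∈ O, ‖x - z‖ ≤ δ) {α : Ed d} (hα : α ∈ R) :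
    ∃ z ∈ O, ‖reflAt α x - z‖ ≤ δ := by
  obtain ⟨z, hz, h⟩ := hx
  refine ⟨reflAt α z, hO z hz α hα, ?_⟩
  rwa [reflAt_sub', norm_reflAt (hR.norm_two α hα)]

lemma abs_inner_le (hR : RS R k) {β : Ed d} (hβ : β ∈ R) (x : Ed d) :
    |⟪β, x⟫| ≤ 3 / 2 * ‖x‖ := by
  have h1 : ‖β‖ ^ 2 = 2 := by rw [← real_inner_self_eq_norm_sq]; exact hR.norm_two β hβ
  have h2 : ‖β‖ ≤ 3 / 2 := by nlinarith [norm_nonneg β]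
  exact (abs_real_inner_le_norm β x).trans (by gcongr)

lemma LS.neg {f : Ed d → ℝ} {O : Set (Ed d)} (h : LS R k M f O) : LS R k M (fun x => - f x) O where
  inv := h.inv
  bdd x hx := by rw [abs_neg]; exact h.bdd x hx
  diff x hx := (h.diff x hx).fun_neg
  dunkl x hx hr ξ := by
    have h1 := h.dunkl x hx hr ξ
    rw [← abs_neg] at h1
    convert h1 using 2
    rw [neg_add, ← Finset.sum_neg_distrib]
    congr 1
    · rw [fderiv_fun_neg]; rfl
    · exact Finset.sum_congr rfl fun β _ => by ring

lemma ClusterBound.quotBound (hR : RS R k) {n : ℕ} (h : ClusterBound R k M n) :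
    QuotBound R k M n := by
  obtain ⟨C, hC, δ, hδ, hδ1, h⟩ := h
  obtain ⟨D, hD, hgap⟩ := exists_gap R
  refine ⟨2 * C * D + 4 * D / δ, by positivity, δ, hδ, hδ1, fun f O hf x hx hz β hβ hn => ?_⟩
  obtain ⟨x0, h1, h2, h3⟩ := hgap x (2 * |⟪β, x⟫|) (by positivity)
  have hs := abs_nonneg (⟪β, x⟫ : ℝ)
  by_cases hd : ‖x - x0‖ ≤ δ
  · have h4 := h f O hf x x0 hx hz h3 hd (hn.trans (Finset.card_le_card fun γ hγ => by
      rw [Finset.mem_filter] at hγ ⊢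
      exact ⟨hγ.1, h1 γ hγ.1 hγ.2⟩)) β hβ (h1 β hβ (by linarith))
    have h5 : 0 ≤ 4 * D / δ * |(⟪β, x⟫ : ℝ)| := by positivity
    have h6 := mul_le_mul_of_nonneg_left h2 hC
    linarith
  · push Not at hd
    have hz1 : ∃ z ∈ O, ‖x - z‖ ≤ 1 := hz.imp fun z hz => ⟨hz.1, hz.2.trans hδ1⟩
    have h4 := hf.bdd x hz1
    have h5 := hf.bdd _ (near_reflAt hR hf.inv hz1 hβ)
    have h6 : |f x - f (reflAt β x)| ≤ 2 := (abs_sub _ _).trans (by linarith)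
    have h7 : 2 ≤ 4 * D / δ * |(⟪β, x⟫ : ℝ)| := by
      rw [div_mul_eq_mul_div, le_div_iff₀ hδ]; linarith
    have h8 : 0 ≤ 2 * C * D * |(⟪β, x⟫ : ℝ)| := by positivity
    linarith

/-- The one-sided estimate along rays from `x₀` that turns bounds for quotients with more small roots
into bounds for reflected differences. -/
lemma ray_bound (hR : RS R k) {n : ℕ} {Q δ : ℝ} (hQ : 0 ≤ Q) (hδ1 : δ ≤ 1)
    (h : ∀ f O, LS R k M f O → ∀ x, isRegular R x →
      (∃ z ∈ O, ‖x - z‖ ≤ δ) → ∀ β ∈ R,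
      n + 1 ≤ (R.filter fun γ => |⟪γ, x⟫| ≤ 2 * |⟪β, x⟫|).card →
      |f x - f (reflAt β x)| ≤ Q * |⟪β, x⟫|)
    {f : Ed d → ℝ} {O : Set (Ed d)} (hf : LS R k M f O) {x x0 : Ed d} (hx : isRegular R x)
    (hz : ∃ z ∈ O, ‖x - z‖ ≤ δ / 2)
    (hgap : ∀ β ∈ R, ⟪β, x0⟫ = (0 : ℝ) ∨ 3 * ‖x - x0‖ ≤ |⟪β, x⟫|) (hxx : ‖x - x0‖ ≤ δ / 2)
    (hm : 0 < ‖x - x0‖)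
    (hn : n ≤ (R.filter fun γ => ⟪γ, x0⟫ = (0 : ℝ)).card) :
    ∀ w ∈ orb (R.filter fun γ => ⟪γ, x0⟫ = (0 : ℝ)) (x - x0),
      f (x0 + w) ≤ f x0 + (M + ∑ β ∈ R, k β * (3 / 2 * Q)) * ‖x - x0‖ := by
  classical
  set Z := R.filter fun γ => ⟪γ, x0⟫ = (0 : ℝ) with hZ
  set m := ‖x - x0‖ with hmdef
  have hZR : Z ⊆ R := Finset.filter_subset _ _
  have hZ0 : ∀ α ∈ Z, ⟪α, x0⟫ = (0 : ℝ) := fun α hα => (Finset.mem_filter.1 hα).2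
  have hrefl : ∀ α ∈ Z, ∀ (t : ℝ) (w : Ed d), reflAt α (x0 + t • w) = x0 + t • reflAt α w := by
    intro α hα t w
    simp only [reflAt, inner_add_right, hZ0 α hα, inner_smul_right, zero_add, smul_sub, smul_smul]
    abel
  have hnorm : ∀ w ∈ orb Z (x - x0), ‖w‖ = m := fun w hw =>
    orb_norm (fun α hα => hR.norm_two α (hZR hα)) hw
  have hnear : ∀ w ∈ orb Z (x - x0), ∃ z ∈ O, ‖x0 + w - z‖ ≤ δ / 2 := by
    intro w hw
    refine orb_induct (C := fun w => ∃ z ∈ O, ‖x0 + w - z‖ ≤ δ / 2) (by simpa using hz)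
      (fun w hw α hα => ?_) hw
    have h1 := near_reflAt hR hf.inv hw (hZR hα)
    have h2 := hrefl α hα 1 w
    rw [one_smul, one_smul] at h2
    rwa [h2] at h1
  have hnear' : ∀ w ∈ orb Z (x - x0), ∀ t ∈ Set.Icc (0 : ℝ) 1, ∃ z ∈ O, ‖x0 + t • w - z‖ ≤ δ := by
    intro w hw t ht
    obtain ⟨z, hz, h1⟩ := hnear w hw
    refine ⟨z, hz, ?_⟩
    have h2 : x0 + t • w - z = (x0 + w - z) - (1 - t) • w := by rw [sub_smul, one_smul]; abel
    have h3 : ‖(1 - t) • w‖ ≤ δ / 2 := by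
      rw [norm_smul, Real.norm_eq_abs, abs_of_nonneg (by linarith [ht.2]), hnorm w hw]
      nlinarith [ht.1]
    rw [h2]
    exact (norm_sub_le _ _).trans (by linarith)
  -- roots not vanishing at `x₀` stay at least `m` along the rays
  have hlarge : ∀ w ∈ orb Z (x - x0), ∀ t ∈ Set.Icc (0 : ℝ) 1, ∀ β ∈ R, ⟪β, x0⟫ ≠ (0 : ℝ) →
      m ≤ |⟪β, x0 + t • w⟫| := by
    intro w hw t ht β hβ hβ0
    obtain ⟨β', hβ', h1, h2⟩ := orb_values hR hZR hZ0 hw β hβ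
    have h3 : 3 * m ≤ |⟪β, x0⟫ + ⟪β, w⟫| := by
      have := (hgap β' hβ').resolve_left (by rw [← h2]; exact hβ0)
      rwa [h1, h2, ← inner_add_right, add_sub_cancel]
    have h4 := abs_inner_le hR hβ w
    rw [hnorm w hw] at h4
    rw [inner_add_right, inner_smul_right]
    have h5 : (⟪β, x0⟫ : ℝ) + ⟪β, w⟫ = (⟪β, x0⟫ + t * ⟪β, w⟫) + (1 - t) * ⟪β, w⟫ := by ring
    rw [h5] at h3
    have h6 := h3.trans (abs_add_le _ _)
    rw [abs_mul, abs_of_nonneg (show 0 ≤ 1 - t by linarith [ht.2])] at h6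
    nlinarith [ht.1, ht.2, abs_nonneg (⟪β, w⟫ : ℝ)]
  have hreg : ∀ w ∈ orb Z (x - x0), ∀ t ∈ Set.Ioc (0 : ℝ) 1, isRegular R (x0 + t • w) := by
    intro w hw t ht β hβ
    by_cases hβ0 : ⟪β, x0⟫ = (0 : ℝ)
    · obtain ⟨β', hβ', h1, h2⟩ := orb_values hR hZR hZ0 hw β hβ
      rw [inner_add_right, inner_smul_right, hβ0, zero_add, h1, inner_sub_right, ← h2, hβ0, sub_zero]
      exact mul_ne_zero ht.1.ne' (hx β' hβ')
    · exact abs_pos.1 (hm.trans_le (hlarge w hw t ⟨ht.1.le, ht.2⟩ β hβ hβ0))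
  have hnear1 : ∀ w ∈ orb Z (x - x0), ∀ t ∈ Set.Icc (0 : ℝ) 1, ∃ z ∈ O, ‖x0 + t • w - z‖ ≤ 1 :=
    fun w hw t ht => (hnear' w hw t ht).imp fun z hz => ⟨hz.1, hz.2.trans hδ1⟩
  refine ray_max (k := k) (Z := Z) (fun β hβ => hR.nonneg β (hZR hβ)) (orb_finite hR hZR _)
    (fun w hw β hβ => orb_step hw hβ) (fun w hw t ht => hf.diff _ (hnear1 w hw t ht)) ?_
  intro w hw t ht
  have ht' : t ∈ Set.Icc (0 : ℝ) 1 := ⟨ht.1.le, ht.2⟩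
  set p := x0 + t • w with hp
  have h1 := (le_abs_self _).trans (hf.dunkl p (hnear1 w hw t ht') (hreg w hw t ht) w)
  rw [hnorm w hw] at h1
  have h2 : ∑ β ∈ Z, k β / t * (f p - f (x0 + t • reflAt β w)) - ∑ β ∈ R, k β * (3 / 2 * Q) * m ≤
      ∑ β ∈ R, k β * ⟪β, w⟫ * ((f p - f (reflAt β p)) / ⟪β, p⟫) := by
    rw [hZ, Finset.sum_filter, ← Finset.sum_sub_distrib]
    refine Finset.sum_le_sum fun β hβ => ?_
    have hkβ := hR.nonneg β hβ
    split_ifs with hβ0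
    · have hβZ : β ∈ Z := Finset.mem_filter.2 ⟨hβ, hβ0⟩
      have hne := hreg w hw t ht β hβ
      have h3 : (⟪β, p⟫ : ℝ) = t * ⟪β, w⟫ := by
        rw [hp, inner_add_right, hβ0, inner_smul_right, zero_add]
      have hw0 : (⟪β, w⟫ : ℝ) ≠ 0 := fun h0 => hne (by rw [← hp, h3, h0, mul_zero])
      have ht0 := ht.1.ne'
      have h4 : k β * ⟪β, w⟫ * ((f p - f (reflAt β p)) / ⟪β, p⟫) =
          k β / t * (f p - f (x0 + t • reflAt β w)) := by
        rw [h3, hp, hrefl β hβZ]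
        field_simp
      rw [h4]
      have : 0 ≤ k β * (3 / 2 * Q) * m := by positivity
      linarith
    · have h3 := hlarge w hw t ht' β hβ hβ0
      have h4 := h f O hf p (hreg w hw t ht) (hnear' w hw t ht') β hβ (by
        have hβZ : β ∉ Z := fun hh => hβ0 (hZ0 β hh)
        refine (Nat.succ_le_succ hn).trans ?_
        rw [Nat.succ_eq_add_one, ← Finset.card_insert_of_notMem hβZ]
        refine Finset.card_le_card fun γ hγ => ?_
        rw [Finset.mem_filter]
        rcases Finset.mem_insert.1 hγ with rfl | hγ
        · exact ⟨hβ, by linarith [abs_nonneg (⟪γ, p⟫ : ℝ)]⟩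
        · refine ⟨hZR hγ, ?_⟩
          have h5 := abs_inner_le hR (hZR hγ) w
          rw [hnorm w hw] at h5
          rw [hp, inner_add_right, hZ0 γ hγ, zero_add, inner_smul_right, abs_mul,
            abs_of_pos ht.1, ← hp]
          nlinarith [ht.1, ht.2, abs_nonneg (⟪γ, w⟫ : ℝ)])
      have h5 := abs_inner_le hR hβ w
      rw [hnorm w hw] at h5
      have h6 : |(f p - f (reflAt β p)) / ⟪β, p⟫| ≤ Q := by
        rw [abs_div, div_le_iff₀ (hm.trans_le h3)]; exact h4
      have h7 : |k β * ⟪β, w⟫ * ((f p - f (reflAt β p)) / ⟪β, p⟫)| ≤ k β * (3 / 2 * m) * Q := by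
        rw [abs_mul, abs_mul, abs_of_nonneg hkβ]
        gcongr
      have h8 := (abs_le.1 h7).1
      linarith
  rw [← Finset.sum_mul] at h2
  linarith

lemma QuotBound.clusterBound (hR : RS R k) (hM : 0 ≤ M) {n : ℕ} (h : QuotBound R k M (n + 1)) :
    ClusterBound R k M n := by
  obtain ⟨Q, hQ, δ, hδ, hδ1, h⟩ := h
  have hS : 0 ≤ ∑ β ∈ R, k β * (3 / 2 * Q) :=
    Finset.sum_nonneg fun β hβ => mul_nonneg (hR.nonneg β hβ) (by positivity)
  refine ⟨2 * (M + ∑ β ∈ R, k β * (3 / 2 * Q)), by positivity, δ / 2, by positivity, by linarith,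
    fun f O hf x x0 hx hz hgap hxx hn β hβ hβ0 => ?_⟩
  have hm : 0 < ‖x - x0‖ := by
    rw [norm_pos_iff, sub_ne_zero]
    rintro rfl
    exact hx β hβ hβ0
  have hβZ : β ∈ R.filter fun γ => ⟪γ, x0⟫ = (0 : ℝ) := Finset.mem_filter.2 ⟨hβ, hβ0⟩
  have e1 : x0 + (x - x0) = x := add_sub_cancel _ _
  have e2 : x0 + reflAt β (x - x0) = reflAt β x := by
    simp only [reflAt, inner_sub_right, hβ0, sub_zero]; abel
  have u1 := ray_bound hR hQ hδ1 h hf hx hz hgap hxx hm hn _ (orb_self _ _)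
  have u2 := ray_bound hR hQ hδ1 h hf hx hz hgap hxx hm hn _ (orb_step (orb_self _ _) hβZ)
  have u3 := ray_bound hR hQ hδ1 h hf.neg hx hz hgap hxx hm hn _ (orb_self _ _)
  have u4 := ray_bound hR hQ hδ1 h hf.neg hx hz hgap hxx hm hn _ (orb_step (orb_self _ _) hβZ)
  rw [e1] at u1 u3
  rw [e2] at u2 u4
  rw [abs_le]
  constructor <;> linarith

/-- Bounded Dunkl derivatives give bounded difference quotients, by downward induction on the number of
small roots. -/
lemma quotBound_zero (hR : RS R k) (hM : 0 ≤ M) : QuotBound R k M 0 := by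
  have key : ∀ j : ℕ, ∀ n, R.card + 1 ≤ n + j → QuotBound R k M n := by
    intro j
    induction j with
    | zero =>
      intro n hn
      refine ⟨0, le_rfl, 1, one_pos, le_rfl, fun f O _ x _ _ β _ hc => ?_⟩
      have := hc.trans (Finset.card_filter_le _ _)
      omega
    | succ j ih => exact fun n hn => ((ih (n + 1) (by omega)).clusterBound hR hM).quotBound hR
  exact key (R.card + 1) 0 (by omega)

end quotients

/-! ### Scaling and passage to cones -/

section assembly
variable {d : ℕ} {R Rp : Finset (Ed d)} {k κ : Ed d → ℝ} {u : Ed d × ℝ → ℝ} {Ω : Set (Ed d × ℝ)}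

lemma sqrt_bernA_nonneg : 0 ≤ √(bernA R k) := Real.sqrt_nonneg _

/-- The slice `u(·, y)` of a bounded `κ`-harmonic function satisfies the hypotheses of the quotient
estimate near the orbit of `P.1`. -/
lemma KH.slice (hR : RS R k) (hu : KH R k u Ω) (hb : ∀ q ∈ Ω, |u q| ≤ 1) (P : Ed d × ℝ)
    (hP : ∀ q, nE P q ≤ 4 → q ∈ Ω) :
    LS R k (d * √(bernA R k)) (fun x => u (x, P.2)) (orb R P.1) := by
  have hball : ∀ z ∈ orb R P.1, ∀ q, nE (z, P.2) q ≤ 4 → q ∈ Ω := by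
    intro z hz
    refine orb_induct (C := fun z => ∀ q, nE (z, P.2) q ≤ 4 → q ∈ Ω) hP (fun w hw α hα q hq => ?_) hz
    rw [nE_reflAt (hR.norm_two α hα)] at hq
    have := hu.inv α hα _ (hw _ hq)
    rwa [rE_rE α (hR.norm_two α hα)] at this
  have hball1 : ∀ x, (∃ z ∈ orb R P.1, ‖x - z‖ ≤ 1) → ∀ q, nE (x, P.2) q ≤ 1 → q ∈ Ω := by
    rintro x ⟨z, hz, hxz⟩ q hq
    refine hball z hz q ?_
    unfold nE at hq ⊢
    simp only at hq ⊢
    have h1 : ‖q.1 - z‖ ≤ ‖q.1 - x‖ + ‖x - z‖ := norm_sub_le_norm_sub_add_norm_sub _ _ _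
    have h2 : ‖q.1 - x‖ ≤ 1 := by nlinarith [norm_nonneg (q.1 - x), sq_nonneg (q.2 - P.2)]
    nlinarith [norm_nonneg (q.1 - z), norm_nonneg (q.1 - x), norm_nonneg (x - z)]
  have hmem : ∀ x, (∃ z ∈ orb R P.1, ‖x - z‖ ≤ 1) → (x, P.2) ∈ Ω := fun x hx =>
    hball1 x hx _ (by simp [nE])
  have hfd : ∀ x, (∃ z ∈ orb R P.1, ‖x - z‖ ≤ 1) → HasFDerivAt (fun x => u (x, P.2))
      ((fderiv ℝ u (x, P.2)).comp (ContinuousLinearMap.inl ℝ (Ed d) ℝ)) x := fun x hx =>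
    ((hu.smooth _ (hmem x hx)).differentiableAt (by norm_num)).hasFDerivAt.comp x
      (hasFDerivAt_prodMk_left x P.2)
  refine ⟨fun z hz α hα => orb_step hz hα, fun x hx => hb _ (hmem x hx),
    fun x hx => (hfd x hx).differentiableAt, fun x hx hreg ξ => ?_⟩
  have h1 : ∀ i : Fin d, |TX R k u (bv (some i)) (x, P.2)| ≤ √(bernA R k) := fun i =>
    Real.abs_le_sqrt (hu.bernstein hR hb (x, P.2) (hball1 x hx) (some i))
  have h2 : fderiv ℝ (fun x => u (x, P.2)) x ξ +
      ∑ β ∈ R, k β * ⟪β, ξ⟫ * ((u (x, P.2) - u (reflAt β x, P.2)) / ⟪β, x⟫) =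
      ∑ i, ξ i * TX R k u (bv (some i)) (x, P.2) := by
    have hξ := sum_bv_some ξ
    rw [(hfd x hx).fderiv, ContinuousLinearMap.comp_apply, ContinuousLinearMap.inl_apply, ← hξ, map_sum]
    simp only [TX, mul_add, Finset.sum_add_distrib, map_smul, smul_eq_mul]
    congr 1
    simp only [Finset.mul_sum]
    rw [Finset.sum_comm]
    refine Finset.sum_congr rfl fun β hβ => ?_
    have h3 : (⟪β, ξ⟫ : ℝ) = ∑ i, ξ i * sF β (bv (some i)) := by
      have : sF β (ξ, 0) = ⟪β, ξ⟫ := rfl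
      rw [← this, ← hξ, map_sum]
      simp only [map_smul, smul_eq_mul]
    rw [qA_of_ne (hreg β hβ), rE_eq, sF_apply β (x, P.2), h3, Finset.mul_sum, Finset.sum_mul]
    refine Finset.sum_congr rfl fun i _ => by ring
  simp only [h2]
  calc |∑ i, ξ i * TX R k u (bv (some i)) (x, P.2)|
      ≤ ∑ i, |ξ i * TX R k u (bv (some i)) (x, P.2)| := Finset.abs_sum_le_sum_abs _ _
    _ ≤ ∑ _i : Fin d, ‖ξ‖ * √(bernA R k) := by
        refine Finset.sum_le_sum fun i _ => ?_
        rw [abs_mul]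
        have h4 : |ξ i| ≤ ‖ξ‖ := by simpa using PiLp.norm_apply_le ξ i
        exact mul_le_mul h4 (h1 i) (abs_nonneg _) (norm_nonneg _)
    _ = d * √(bernA R k) * ‖ξ‖ := by
        rw [Finset.sum_const, Finset.card_univ, Fintype.card_fin, nsmul_eq_mul]; ring

/-- The gradient estimate at unit scale, at regular points. -/
lemma grad_unit (hR : RS R k) : ∃ c ≥ (0 : ℝ), ∀ (u : Ed d × ℝ → ℝ) (Ω : Set (Ed d × ℝ)),
    KH R k u Ω → (∀ q ∈ Ω, |u q| ≤ 1) → ∀ P : Ed d × ℝ, isRegular R P.1 →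
    (∀ q, nE P q ≤ 4 → q ∈ Ω) → ∀ j, |fderiv ℝ u P (bv j)| ≤ c := by
  obtain ⟨Q, hQ, δ, hδ, -, hq⟩ := quotBound_zero (k := k) (M := d * √(bernA R k)) hR
    (mul_nonneg (Nat.cast_nonneg _) sqrt_bernA_nonneg)
  have hS : 0 ≤ ∑ α ∈ R, k α * 2 * Q :=
    Finset.sum_nonneg fun α hα => mul_nonneg (mul_nonneg (hR.nonneg α hα) zero_le_two) hQ
  refine ⟨√(bernA R k) + ∑ α ∈ R, k α * 2 * Q, add_nonneg sqrt_bernA_nonneg hS,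
    fun u Ω hu hb P hreg hP j => ?_⟩
  have h1 := Real.abs_le_sqrt (hu.bernstein hR hb P (fun q hq => hP q (hq.trans (by norm_num))) j)
  have h2 : |∑ α ∈ R, k α * sF α (bv j) * qA u α P| ≤ ∑ α ∈ R, k α * 2 * Q := by
    refine (Finset.abs_sum_le_sum_abs _ _).trans (Finset.sum_le_sum fun α hα => ?_)
    have h3 := hq _ _ (hu.slice hR hb P hP) P.1 hreg ⟨P.1, orb_self _ _, by simpa using hδ.le⟩ α hα
      (Nat.zero_le _)
    have h4 : |qA u α P| ≤ Q := by
      rw [qA_of_ne (hreg α hα), abs_div, rE_eq, sF_apply, div_le_iff₀ (abs_pos.2 (hreg α hα))]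
      exact h3
    have h5 : |sF α (bv j)| ≤ 2 :=
      abs_le_of_sq_le_sq (by nlinarith [sF_bv_sq_le (hR.norm_two α hα) j]) zero_le_two
    have := hR.nonneg α hα
    rw [abs_mul, abs_mul, abs_of_nonneg this]
    gcongr
  have h3 : fderiv ℝ u P (bv j) = TX R k u (bv j) P - ∑ α ∈ R, k α * sF α (bv j) * qA u α P := by
    unfold TX; ring
  rw [h3]
  exact (abs_sub _ _).trans (add_le_add h1 h2)

lemma fderiv_dilate {r : ℝ} {q : Ed d × ℝ} (hu : DifferentiableAt ℝ u (r • q)) (w : Ed d × ℝ) :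
    fderiv ℝ (fun q => u (r • q)) q w = r * fderiv ℝ u (r • q) w := by
  have h : HasFDerivAt (fun q => u (r • q))
      ((fderiv ℝ u (r • q)).comp (r • ContinuousLinearMap.id ℝ (Ed d × ℝ))) q :=
    hu.hasFDerivAt.comp q ((hasFDerivAt_id q).const_smul r)
  rw [h.fderiv]
  simp

/-- Dilations preserve `κ`-harmonicity. -/
lemma KH.dilate (hu : KH R k u Ω) {r : ℝ} (hr : 0 < r) :
    KH R k (fun q => u (r • q)) {q | r • q ∈ Ω} where
  isOpen := hu.isOpen.preimage (continuous_const_smul r)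
  inv α hα q hq := by
    show r • rE α q ∈ Ω
    rw [← map_smul]; exact hu.inv α hα _ hq
  smooth q hq := (hu.smooth _ hq).comp q (contDiff_const_smul r).contDiffAt
  harm q hq hreg := by
    have hr0 := hr.ne'
    have hs := hu.smooth _ hq
    have h1 := hu.harm _ hq (fun α hα => by
      rw [map_smul, smul_eq_mul]; exact mul_ne_zero hr0 (hreg α hα))
    have h2 : lapE (fun q => u (r • q)) q = r ^ 2 * lapE u (r • q) := by
      simp only [lapE_eq_sum, Finset.mul_sum]
      refine Finset.sum_congr rfl fun j _ => ?_
      have h3 := pd2_comp_clm (r • ContinuousLinearMap.id ℝ (Ed d × ℝ)) (p := q) hs (bv j)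
      simp only [smul_apply, ContinuousLinearMap.id_apply] at h3
      rw [h3, pd2_eq hs, pd2_eq hs]
      simp only [map_smul, smul_apply, smul_eq_mul]
      ring
    rw [h2, h1]
    unfold lowOrder
    rw [mul_left_comm, Finset.mul_sum]
    congr 1
    refine Finset.sum_congr rfl fun β hβ => ?_
    have := hreg β hβ
    rw [fderiv_dilate (hs.differentiableAt (by norm_num)), map_smul, map_smul, smul_eq_mul]
    field_simp

lemma IsRootSystem.toRS (h : IsRootSystem R Rp κ) : RS R (fun α => κ α / 2) where
  norm_two := h.norm_two
  refl_mem := h.refl_mem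
  nonneg α hα := div_nonneg (h.kappa_nonneg α hα) zero_le_two
  inv α hα β hβ := by
    have := h.kappa_inv (reflAt α) (Submonoid.subset_closure ⟨α, hα, rfl⟩) β hβ
    rw [this]

lemma IsRootSystem.sum_eq (h : IsRootSystem R Rp κ) (F : Ed d → ℝ) (hF : ∀ α ∈ R, F (-α) = F α) :
    ∑ α ∈ R, F α = 2 * ∑ α ∈ Rp, F α := by
  classical
  rw [← Finset.sum_sdiff h.pos_sub, two_mul]
  congr 1
  refine Finset.sum_nbij' (fun α => -α) (fun α => -α) ?_ ?_ ?_ ?_ ?_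
  · intro α hα
    rw [Finset.mem_sdiff] at hα
    exact ((h.pos_split α hα.1).resolve_left fun h' => hα.2 h'.1).2
  · intro α hα
    rw [Finset.mem_sdiff]
    refine ⟨h.toRS.neg_mem (h.pos_sub hα), ?_⟩
    exact ((h.pos_split α (h.pos_sub hα)).resolve_right fun h' => h'.1 hα).2
  · exact fun α _ => neg_neg α
  · exact fun α _ => neg_neg α
  · exact fun α hα => (hF α (Finset.mem_sdiff.1 hα).1).symm

lemma isOpen_coneT (a h : ℝ) (x : Ed d) : IsOpen (coneT a h x) := by
  have h1 : IsOpen {p : Ed d × ℝ | 0 < p.2} := isOpen_lt continuous_const continuous_snd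
  have h2 : IsOpen {p : Ed d × ℝ | p.2 < h} := isOpen_lt continuous_snd continuous_const
  have h3 : IsOpen {p : Ed d × ℝ | dist p.1 x < a * p.2} :=
    isOpen_lt (continuous_fst.dist continuous_const) (continuous_const.mul continuous_snd)
  exact h1.inter (h2.inter h3)

lemma KHarmonicOn.toKH (hRS : IsRootSystem R Rp κ) {b η : ℝ} {x0 : Ed d}
    (hu : KHarmonicOn R Rp κ u (⋃ σ ∈ dunklGroup R, coneT b η (σ x0))) :
    KH R (fun α => κ α / 2) u (⋃ σ ∈ dunklGroup R, coneT b η (σ x0)) := by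
  have hopen : IsOpen (⋃ σ ∈ dunklGroup R, coneT b η (σ x0)) :=
    isOpen_biUnion fun σ _ => isOpen_coneT _ _ _
  refine ⟨hopen, fun α hα q hq => ?_, fun q hq => hu.1.contDiffAt (hopen.mem_nhds hq),
    fun q hq hreg => ?_⟩
  · simp only [Set.mem_iUnion] at hq ⊢
    obtain ⟨σ, hσ, h1, h2, h3⟩ := hq
    refine ⟨(show Function.End (Ed d) from reflAt α) * σ,
      mul_mem (Submonoid.subset_closure ⟨α, hα, rfl⟩) hσ, ?_⟩
    rw [rE_eq]
    refine ⟨h1, h2, ?_⟩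
    show dist (reflAt α q.1) (reflAt α (σ x0)) < b * q.2
    rwa [dist_eq_norm, reflAt_sub', norm_reflAt (hRS.norm_two α hα), ← dist_eq_norm]
  · have h1 := hu.2 q hq hreg
    unfold dunklLap at h1
    unfold lowOrder
    rw [hRS.sum_eq]
    · simp only [rE_eq, sF_apply]
      have h2 : ∀ α, κ α / 2 * (fderiv ℝ u q (α, 0) / ⟪α, q.1⟫ -
          (u q - u (reflAt α q.1, q.2)) / ⟪α, q.1⟫ ^ 2) = (κ α * (fderiv ℝ u q (α, 0) / ⟪α, q.1⟫ -
          (u q - u (reflAt α q.1, q.2)) / ⟪α, q.1⟫ ^ 2)) / 2 := fun α => by ring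
      simp only [h2, ← Finset.sum_div]
      linarith
    · intro α hα
      have h3 : κ (-α) / 2 = κ α / 2 := hRS.toRS.k_neg hα
      have h4 : ((-α, 0) : Ed d × ℝ) = -(α, 0) := by simp
      simp only [h3]
      rw [sF_neg, rE_neg, h4, map_neg, neg_div_neg_eq, neg_sq]

/-- Regular points are dense. -/
lemma dense_regular (hR : RS R k) : Dense {p : Ed d × ℝ | isRegular R p.1} := by
  have h1 : {p : Ed d × ℝ | isRegular R p.1} = ⋂ α ∈ R, {p | sF α p ≠ 0} := by
    ext p; simp only [isRegular, Set.mem_iInter]; rfl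
  rw [h1]
  refine dense_biInter_of_isOpen (fun α _ => isOpen_ne_fun (sF α).continuous continuous_const)
    R.countable_toSet (fun α hα p => ?_)
  by_cases hp : sF α p = 0
  · have h2 : Tendsto (fun t : ℝ => p + t • ((α, 0) : Ed d × ℝ)) (𝓝[≠] 0) (𝓝 p) := by
      have : Continuous fun t : ℝ => p + t • ((α, 0) : Ed d × ℝ) := by fun_prop
      have := (this.tendsto 0).mono_left (nhdsWithin_le_nhds (s := {0}ᶜ))
      simpa using this
    refine mem_closure_of_tendsto h2 ?_
    filter_upwards [self_mem_nhdsWithin] with t ht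
    show sF α _ ≠ 0
    have h3 : sF α ((α, 0) : Ed d × ℝ) = 2 := hR.norm_two α hα
    rw [map_add, map_smul, hp, h3, zero_add, smul_eq_mul]
    exact mul_ne_zero ht two_ne_zero
  · exact subset_closure hp

lemma nE_smul {r : ℝ} (hr : r ≠ 0) (p q : Ed d × ℝ) : nE p (r • q) = r ^ 2 * nE (r⁻¹ • p) q := by
  have h1 : (r • q).1 - p.1 = r • (q.1 - (r⁻¹ • p).1) := by
    simp only [Prod.smul_fst]
    rw [smul_sub, smul_smul, mul_inv_cancel₀ hr, one_smul]
  have h2 : (r • q).2 - p.2 = r * (q.2 - (r⁻¹ • p).2) := by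
    simp only [Prod.smul_snd, smul_eq_mul]; field_simp
  unfold nE
  rw [h1, h2, norm_smul, mul_pow, Real.norm_eq_abs, sq_abs]
  ring

/-- A Euclidean ball of radius comparable to the height fits into the wider cone. -/
lemma ball_subset_coneT {a b h η ε : ℝ} (hε : 0 < ε) (hε1 : ε < 1)
    (hε2 : ε * (1 + b) ≤ b - a) (hε3 : ε * h ≤ η - h) (hb : 0 < b) {x0 : Ed d} {p q : Ed d × ℝ}
    (hp : p ∈ coneT a h x0) (hq : nE p q ≤ (ε * p.2) ^ 2) : q ∈ coneT b η x0 := by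
  obtain ⟨h1, h2, h3⟩ := hp
  have hy : 0 ≤ ε * p.2 := by positivity
  unfold nE at hq
  have h4 : ‖q.1 - p.1‖ ≤ ε * p.2 :=
    abs_le_of_sq_le_sq' (by nlinarith [sq_nonneg (q.2 - p.2)]) hy |>.2
  have h5 := abs_le_of_sq_le_sq' (a := q.2 - p.2) (b := ε * p.2)
    (by nlinarith [sq_nonneg ‖q.1 - p.1‖]) hy
  have h6 : dist q.1 x0 ≤ ‖q.1 - p.1‖ + dist p.1 x0 := by
    rw [← dist_eq_norm]; exact dist_triangle _ _ _
  refine ⟨by nlinarith [h5.1], by nlinarith [h5.2], ?_⟩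
  nlinarith [h5.1]

end assembly

/-- **Lemma 5.5 (interior gradient estimate).** Let `0 < a < b` and `0 < h < η`. There is
a constant `c > 0`, depending only on `a,b,h,η` (and `d,R,κ`), such that for every
`x⁰ ∈ ℝ^d` and every `u` which is `κ`-harmonic on `⋃_{σ∈G} Γ_b^η(σ(x⁰))` with `|u| ≤ 1`
there, one has `y|∇u(x,y)| ≤ c` on `Γ_a^h(x⁰)`. -/
theorem dunkl_interior_gradient_estimate
    {d : ℕ} (hd : 1 ≤ d) (R Rp : Finset (Ed d)) (κ : Ed d → ℝ)
    (hRS : IsRootSystem R Rp κ)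
    (a b h η : ℝ) (ha : 0 < a) (hab : a < b) (hh : 0 < h) (hhη : h < η) :
    ∃ c > (0 : ℝ), ∀ (x0 : Ed d) (u : Ed d × ℝ → ℝ),
      KHarmonicOn R Rp κ u (⋃ σ ∈ dunklGroup R, coneT b η (σ x0)) →
      (∀ p ∈ ⋃ σ ∈ dunklGroup R, coneT b η (σ x0), |u p| ≤ 1) →
      ∀ p ∈ coneT a h x0,
        p.2 * Real.sqrt ((∑ i : Fin d, (fderiv ℝ u p (EuclideanSpace.single i 1, 0)) ^ 2) +
            (fderiv ℝ u p ((0 : Ed d), 1)) ^ 2) ≤ c := by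
  have hb : 0 < b := ha.trans hab
  have hR := hRS.toRS
  obtain ⟨c, hc, hgrad⟩ := grad_unit hR
  -- `ε` is small enough for the ball of radius `ε y` about `(x, y) ∈ Γ_a^h` to lie in `Γ_b^η`
  obtain ⟨ε, hε, hε1, hε2, hε3⟩ : ∃ ε : ℝ, 0 < ε ∧ ε < 1 ∧ ε * (1 + b) ≤ b - a ∧ ε * h ≤ η - h := by
    refine ⟨min (1 / 2) (min ((b - a) / (1 + b)) ((η - h) / h)), ?_, ?_, ?_, ?_⟩
    · refine lt_min (by norm_num) (lt_min (div_pos ?_ ?_) (div_pos ?_ hh)) <;> linarith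
    · exact (min_le_left _ _).trans_lt (by norm_num)
    · rw [← le_div_iff₀ (by linarith)]
      exact (min_le_right _ _).trans (min_le_left _ _)
    · rw [← le_div_iff₀ hh]
      exact (min_le_right _ _).trans (min_le_right _ _)
  set C := 2 * c / ε with hC
  have hC0 : 0 ≤ C := by positivity
  refine ⟨√(d + 1) * C + 1, by positivity, fun x0 u hu hbd => ?_⟩
  have hK := hu.toKH hRS
  set Ω := ⋃ σ ∈ dunklGroup R, coneT b η (σ x0) with hΩ
  have hsub : coneT b η x0 ⊆ Ω := fun q hq => by
    simp only [hΩ, Set.mem_iUnion]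
    exact ⟨1, one_mem _, hq⟩
  have hball : ∀ p ∈ coneT a h x0, ∀ q, nE p q ≤ (ε * p.2) ^ 2 → q ∈ Ω := fun p hp q hq =>
    hsub (ball_subset_coneT hε hε1 hε2 hε3 hb hp hq)
  have hmem : coneT a h x0 ⊆ Ω := fun p hp => hball p hp p (by
    rw [nE, sub_self, sub_self, norm_zero]; nlinarith [sq_nonneg (ε * p.2)])
  have hregular : ∀ p ∈ coneT a h x0, isRegular R p.1 → ∀ j, p.2 * |fderiv ℝ u p (bv j)| ≤ C := by
    intro p hp hreg j
    have hy : 0 < p.2 := hp.1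
    have hr : 0 < ε * p.2 / 2 := by positivity
    set r := ε * p.2 / 2 with hrdef
    have hrp : r • r⁻¹ • p = p := by rw [smul_smul, mul_inv_cancel₀ hr.ne', one_smul]
    have h1 := hgrad _ _ (hK.dilate hr) (fun q hq => hbd _ hq) (r⁻¹ • p)
      (fun α hα => by
        rw [Prod.smul_fst, inner_smul_right]
        exact mul_ne_zero (inv_ne_zero hr.ne') (hreg α hα))
      (fun q hq => hball p hp _ (by
        rw [nE_smul hr.ne', hrdef]
        nlinarith [sq_nonneg (ε * p.2)])) j
    rw [fderiv_dilate (by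
      rw [hrp]; exact (hK.smooth p (hmem hp)).differentiableAt (by norm_num)), hrp, abs_mul,
      abs_of_pos hr] at h1
    rw [hC, le_div_iff₀ hε]
    rw [hrdef] at h1
    linarith
  have hall : ∀ p ∈ coneT a h x0, ∀ j, p.2 * |fderiv ℝ u p (bv j)| ≤ C := by
    intro p hp j
    have hcl := (dense_regular hR).open_subset_closure_inter (isOpen_coneT a h x0) hp
    have hcont : ContinuousAt (fun q : Ed d × ℝ => q.2 * |fderiv ℝ u q (bv j)|) p :=
      continuous_snd.continuousAt.mul
        ((hK.smooth p (hmem hp)).diff_fderiv_apply (bv j)).continuousAt.abs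
    exact hcont.continuousWithinAt.closure_le hcl continuousWithinAt_const
      (fun q hq => hregular q hq.1 hq.2 j)
  intro p hp
  have hy : 0 < p.2 := hp.1
  have hsum : (∑ i : Fin d, (fderiv ℝ u p (EuclideanSpace.single i 1, 0)) ^ 2) +
      (fderiv ℝ u p ((0 : Ed d), 1)) ^ 2 = ∑ j, (fderiv ℝ u p (bv j)) ^ 2 := by
    rw [Fintype.sum_option, add_comm]; rfl
  rw [hsum]
  have h1 : p.2 ^ 2 * ∑ j, (fderiv ℝ u p (bv j)) ^ 2 ≤ (d + 1) * C ^ 2 := by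
    rw [Finset.mul_sum]
    refine (Finset.sum_le_card_nsmul _ _ (C ^ 2) fun j _ => ?_).trans_eq ?_
    · rw [← sq_abs (fderiv ℝ u p (bv j)), ← mul_pow]
      exact pow_le_pow_left₀ (by positivity) (hall p hp j) 2
    · simp
  have h2 : p.2 * √(∑ j, (fderiv ℝ u p (bv j)) ^ 2) ≤ √(d + 1) * C := by
    rw [← Real.sqrt_sq hy.le, ← Real.sqrt_sq hC0, ← Real.sqrt_mul (sq_nonneg _),
      ← Real.sqrt_mul (by positivity)]
    exact Real.sqrt_le_sqrt h1
  linarith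

end
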